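/- RSW property of the DaC model: for every p < 1/2 and r ∈ [0,1], (a) if limsup_{n→∞} ℙ_{p,r}(V^b_{n,⌈ρn⌉}) > 0 for some ρ > 0, then limsup_{n→∞} ℙ_{p,r}(V^b_{n,⌈ρn⌉}) > 0 for all ρ > 0; and (b) if limsup_{n→∞} ℙ_{p,r}(V^{w*}_{n,⌈ρn⌉}) > 0 for some ρ > 0, then limsup_{n→∞} ℙ_{p,r}(V^{w*}_{n,⌈ρn⌉}) > 0 for all ρ > 0. -/

import Mathlib

/-!
Common definitions for the Divide-and-Colour (DaC) model of
Bálint, Camia and Meester, "Sharp phase transition and critical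
behaviour in 2D divide and colour models".

The model is built concretely: a single uniform random variable on `(0,1]`
is decomposed into countably many i.i.d. uniform random variables (via its
binary digits); one family of uniforms drives the Bernoulli(p) bond
percolation (the edge configuration), and an independent family of uniforms
attaches an independent Bernoulli(r) colour to each bond cluster (the colour
of a cluster is determined by the uniform label of its canonical
representative, the vertex of minimal encoding).  The DaC measure
`ℙ_{p,r}` is the pushforward of Lebesgue measure on `(0,1]` under the map
producing the pair (edge configuration, colour configuration).
-/

open MeasureTheory ENNReal

namespace DaC

/-- Vertices of the lattice. -/
abbrev V : Type := ℤ × ℤ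

/-- Square lattice adjacency: Euclidean distance `1`. -/
def SqAdj (u v : V) : Prop := (u.1 - v.1) ^ 2 + (u.2 - v.2) ^ 2 = 1

/-- `*`-adjacency (matching graph of the square lattice):
Euclidean distance `1` or `√2`. -/
def StarAdj (u v : V) : Prop :=
  (u.1 - v.1) ^ 2 + (u.2 - v.2) ^ 2 = 1 ∨ (u.1 - v.1) ^ 2 + (u.2 - v.2) ^ 2 = 2

/-- Triangular lattice adjacency. -/
def TriAdj (u v : V) : Prop :=
  (u.1 - v.1, u.2 - v.2) ∈
    ({(1, 0), (-1, 0), (0, 1), (0, -1), (1, 1), (-1, -1)} : Set (ℤ × ℤ))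

/-- Classical indicator of a proposition, as a boolean. -/
noncomputable def boolOf (P : Prop) : Bool := @decide P (Classical.propDecidable P)

/-- The `n`-th binary digit of a real number `x ∈ (0,1]`. -/
noncomputable def bit (n : ℕ) (x : ℝ) : Bool := boolOf (⌊x * 2 ^ (n + 1)⌋ % 2 = 1)

/-- A countable family of i.i.d. uniform random variables on `[0,1]`, extracted
from a single uniform sample `x` by splitting its binary digits. -/
noncomputable def unif (i : ℕ) (x : ℝ) : ℝ :=
  ∑' k : ℕ, if bit (Nat.pair i k) x then ((2 : ℝ)⁻¹) ^ (k + 1) else 0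

/-- A symmetric encoding of (unordered) pairs of vertices. -/
noncomputable def eIdx (u v : V) : ℕ :=
  min (Encodable.encode (u, v)) (Encodable.encode (v, u))

/-- The uniform label attached to the edge `{u,v}`. -/
noncomputable def edgeU (u v : V) (x : ℝ) : ℝ := unif (2 * eIdx u v) x

/-- The uniform label attached to the vertex `v` (independent of the edge labels). -/
noncomputable def vtxU (v : V) (x : ℝ) : ℝ := unif (2 * Encodable.encode v + 1) x

/-- Edge configurations: a boolean (open/closed) for each (ordered) pair of
vertices; configurations arising from the model are symmetric and are
supported on pairs of adjacent vertices. -/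
abbrev EdgeCfg : Type := V → V → Bool

/-- Colour configurations: a colour (black = `true`, white = `false`) for each vertex. -/
abbrev ColourCfg : Type := V → Bool

/-- Full configurations of the DaC model: an edge configuration together with
a colour configuration. -/
abbrev Config : Type := EdgeCfg × ColourCfg

/-- The Bernoulli(p) edge configuration determined by the uniform sample `x`,
on the lattice with adjacency `adj`: an edge `{u,v}` of the lattice is open
iff its uniform label is `< p`. -/
noncomputable def edgeCfg (adj : V → V → Prop) (p : ℝ) (x : ℝ) : EdgeCfg :=
  fun u v => boolOf (adj u v) && boolOf (edgeU u v x < p)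

/-- Connectivity through open edges of the edge configuration `η`. -/
def Conn (η : EdgeCfg) (u v : V) : Prop :=
  Relation.ReflTransGen (fun a b => η a b = true) u v

/-- The `p`-cluster of the vertex `v`: its connected component in the graph
retaining only open edges. -/
def pCluster (η : EdgeCfg) (v : V) : Set V := {w | Conn η v w}

/-- Canonical representative of the `p`-cluster of `v`: the vertex of the
cluster with minimal encoding. -/
noncomputable def clusterRep (η : EdgeCfg) (v : V) : V :=
  (Encodable.decode (α := V) (sInf (Encodable.encode '' pCluster η v))).getD v

/-- The colour configuration with parameters `p, r` determined by the uniform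
sample `x`: every `p`-cluster is coloured black (with probability `r`)
or white, independently of all other `p`-clusters, according to the uniform
label of its canonical representative. -/
noncomputable def colourCfg (adj : V → V → Prop) (p r : ℝ) (x : ℝ) : ColourCfg :=
  fun v => boolOf (vtxU (clusterRep (edgeCfg adj p x) v) x < r)

/-- The uniform sample: Lebesgue measure on `(0,1]`. -/
noncomputable def base : Measure ℝ := volume.restrict (Set.Ioc 0 1)

/-- `ν_p`: the product Bernoulli(p) measure on edge configurations of the
lattice with adjacency `adj`. -/
noncomputable def edgeMeasure (adj : V → V → Prop) (p : ℝ) : Measure EdgeCfg :=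
  base.map (edgeCfg adj p)

/-- `ℙ_{p,r}`: the DaC measure on pairs (edge configuration, colour
configuration) for the lattice with adjacency `adj`. -/
noncomputable def DaCMeasure (adj : V → V → Prop) (p r : ℝ) : Measure Config :=
  base.map (fun x => (edgeCfg adj p x, colourCfg adj p r x))

/-- Monochromatic connectivity: `u` and `v` are joined by a path (for the
adjacency `adj`) all of whose vertices have colour `c`. -/
def MonoConn (adj : V → V → Prop) (ξ : ColourCfg) (c : Bool) (u v : V) : Prop :=
  Relation.ReflTransGen (fun a b => adj a b ∧ ξ a = c ∧ ξ b = c) u v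

/-- The colour-`c` cluster of `v` (for the adjacency `adj`): empty if `v` does
not have colour `c`, and otherwise the maximal `adj`-connected set of
`c`-coloured vertices containing `v`. -/
def monoCluster (adj : V → V → Prop) (ξ : ColourCfg) (c : Bool) (v : V) : Set V :=
  {w | ξ v = c ∧ MonoConn adj ξ c v w}

/-- The origin. -/
def origin : V := (0, 0)

/-- The size (cardinality) of a set of vertices, with values in `ℝ≥0∞`. -/
noncomputable def sizeE (S : Set V) : ℝ≥0∞ := S.encard

/-- The probability, under the DaC measure with edge adjacency `eadj` and
parameters `p, r`, that the origin lies in an infinite colour-`c` cluster for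
the adjacency `cadj`. -/
noncomputable def percProb (eadj cadj : V → V → Prop) (c : Bool) (p r : ℝ) : ℝ≥0∞ :=
  DaCMeasure eadj p r {ω | (monoCluster cadj ω.2 c origin).Infinite}

/-- `Θ(p,r)` for the square lattice: probability that the origin lies in an
infinite black `r`-cluster. -/
noncomputable def thetaSq (p r : ℝ) : ℝ≥0∞ := percProb SqAdj SqAdj true p r

/-- `Θ*(p,s)` for the square lattice: the `ℙ_{p,1-s}`-probability that the
origin lies in an infinite white `*`-cluster. -/
noncomputable def thetaStarSq (p s : ℝ) : ℝ≥0∞ := percProb SqAdj StarAdj false p (1 - s)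

/-- `Θ(p,r)` for the triangular lattice. -/
noncomputable def thetaTri (p r : ℝ) : ℝ≥0∞ := percProb TriAdj TriAdj true p r

/-- The critical colouring density `r_c(p)` of the square lattice DaC model. -/
noncomputable def rcSq (p : ℝ) : ℝ :=
  sSup {r : ℝ | r ∈ Set.Icc (0 : ℝ) 1 ∧ thetaSq p r = 0}

/-- The critical colouring density `r_c*(p)` for white `*`-percolation. -/
noncomputable def rcStarSq (p : ℝ) : ℝ :=
  sSup {s : ℝ | s ∈ Set.Icc (0 : ℝ) 1 ∧ thetaStarSq p s = 0}

/-- The critical colouring density `r_c(p)` of the triangular lattice DaC model. -/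
noncomputable def rcTri (p : ℝ) : ℝ :=
  sSup {r : ℝ | r ∈ Set.Icc (0 : ℝ) 1 ∧ thetaTri p r = 0}

/-! ### Rectangles and crossings -/

/-- The rectangle `S_{n,m} = ([0,n] × [0,m]) ∩ ℤ²`. -/
def Rect (n m : ℕ) : Set V :=
  {v | 0 ≤ v.1 ∧ v.1 ≤ (n : ℤ) ∧ 0 ≤ v.2 ∧ v.2 ≤ (m : ℤ)}

/-- The top side of `S_{n,m}`. -/
def TopSide (n m : ℕ) : Set V := {v | v ∈ Rect n m ∧ v.2 = (m : ℤ)}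

/-- The bottom side of `S_{n,m}`. -/
def BotSide (n m : ℕ) : Set V := {v | v ∈ Rect n m ∧ v.2 = 0}

/-- The left side of `S_{n,m}`. -/
def LeftSide (n m : ℕ) : Set V := {v | v ∈ Rect n m ∧ v.1 = 0}

/-- The right side of `S_{n,m}`. -/
def RightSide (n m : ℕ) : Set V := {v | v ∈ Rect n m ∧ v.1 = (n : ℤ)}

/-- There is a path (for the adjacency `adj`), all of whose vertices lie in the
region `R` and satisfy the predicate `good`, from the set `A` to the set `B`. -/
def HasCrossing (adj : V → V → Prop) (good : V → Prop) (R A B : Set V) : Prop :=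
  ∃ (k : ℕ) (f : Fin (k + 1) → V),
    (∀ i, f i ∈ R ∧ good (f i)) ∧
    (∀ i : Fin k, adj (f i.castSucc) (f i.succ)) ∧
    f 0 ∈ A ∧ f (Fin.last k) ∈ B

/-- `V^b_{n,m}` as a set of colour configurations: there is a black vertical
crossing of `S_{n,m}` (for the adjacency `adj`). -/
def VertBC (adj : V → V → Prop) (n m : ℕ) : Set ColourCfg :=
  {ξ | HasCrossing adj (fun v => ξ v = true) (Rect n m) (TopSide n m) (BotSide n m)}

/-- `V^{w*}_{n,m}` as a set of colour configurations: there is a white vertical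
`*`-crossing of `S_{n,m}`. -/
def VertWStarC (n m : ℕ) : Set ColourCfg :=
  {ξ | HasCrossing StarAdj (fun v => ξ v = false) (Rect n m) (TopSide n m) (BotSide n m)}

/-- `H^{w*}_{n,m}` as a set of colour configurations: there is a white
horizontal `*`-crossing of `S_{n,m}`. -/
def HorizWStarC (n m : ℕ) : Set ColourCfg :=
  {ξ | HasCrossing StarAdj (fun v => ξ v = false) (Rect n m) (LeftSide n m) (RightSide n m)}

/-- The event (set of full configurations) determined by a set of colour
configurations. -/
def colourEvent (C : Set ColourCfg) : Set Config := {ω | ω.2 ∈ C}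

/-! ### Events depending on colours, increasing events, pivotal clusters -/

/-- The event `A` is defined in terms of the colours of the vertices in `W`. -/
def DependsOnColoursIn (A : Set Config) (W : Set V) : Prop :=
  ∀ ω ω' : Config, (∀ v ∈ W, ω.2 v = ω'.2 v) → (ω ∈ A ↔ ω' ∈ A)

/-- The event `A` is increasing (for the partial order comparing colour
configurations pointwise, black = `true` above white = `false`). -/
def IncreasingColourEvent (A : Set Config) : Prop :=
  ∀ ω ω' : Config, (∀ v : V, ω.2 v = true → ω'.2 v = true) → ω ∈ A → ω' ∈ A

/-- Flip the colours of the vertices of `C`. -/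
noncomputable def flipOn (C : Set V) (ξ : ColourCfg) : ColourCfg :=
  fun v => @ite _ (v ∈ C) (Classical.propDecidable _) (!ξ v) (ξ v)

/-- The set `C` is a pivotal `p`-cluster for the event `A` in the
configuration `ω`: `C` is a `p`-cluster of the edge configuration of `ω`, and
flipping the colour of (all the vertices of) `C` changes whether the
configuration belongs to `A`. -/
def IsPivotal (A : Set Config) (ω : Config) (C : Set V) : Prop :=
  (∃ v : V, C = pCluster ω.1 v) ∧ ¬ (ω ∈ A ↔ (ω.1, flipOn C ω.2) ∈ A)

/-- `n(A)`: the number of pivotal `p`-clusters for the event `A`, with values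
in `ℝ≥0∞`. -/
noncomputable def numPivotal (A : Set Config) (ω : Config) : ℝ≥0∞ :=
  {C : Set V | IsPivotal A ω C}.encard

/-! ### Barriers -/

/-- Connectivity in the square lattice avoiding the edges of `E`. -/
def AvoidConn (E : Set (V × V)) (u v : V) : Prop :=
  Relation.ReflTransGen (fun a b => SqAdj a b ∧ (a, b) ∉ E ∧ (b, a) ∉ E) u v

/-- `E` is a barrier: a set of edges of the square lattice whose removal
(keeping the end-vertices) separates `ℤ²` into two or more connected
components, exactly one of which is infinite. -/
def IsBarrier (E : Set (V × V)) : Prop :=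
  (∀ e ∈ E, SqAdj e.1 e.2) ∧
  (∃ v, {w | AvoidConn E v w}.Infinite) ∧
  (∀ v w, {x | AvoidConn E v x}.Infinite → {x | AvoidConn E w x}.Infinite → AvoidConn E v w) ∧
  (∃ v, {w | AvoidConn E v w}.Finite)

/-- The exterior of a barrier: its unique infinite complementary component. -/
def barrierExt (E : Set (V × V)) : Set V := {v | {w | AvoidConn E v w}.Infinite}

/-- The interior of a barrier: the union of the finite complementary components. -/
def barrierInt (E : Set (V × V)) : Set V := {v | {w | AvoidConn E v w}.Finite}

/-- The event `A ⊆ EdgeCfg` is increasing (opening edges preserves it). -/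
def IncreasingEdgeEvent (A : Set EdgeCfg) : Prop :=
  ∀ η η' : EdgeCfg, (∀ a b : V, η a b = true → η' a b = true) → η ∈ A → η' ∈ A

/-- The event `A ⊆ EdgeCfg` depends only on the states of the edges both of
whose endpoints lie in `W`. -/
def DependsOnEdgesIn (A : Set EdgeCfg) (W : Set V) : Prop :=
  ∀ η η' : EdgeCfg, (∀ a b : V, a ∈ W → b ∈ W → η a b = η' a b) → (η ∈ A ↔ η' ∈ A)

/-! ### Translations -/

/-- Translation of configurations by the vector `u`. -/
def shift (u : V) (ω : Config) : Config :=
  (fun a b => ω.1 (a + u) (b + u), fun a => ω.2 (a + u))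

end DaC
namespace DaC

/-!
Suppose that the crossing probabilities of one aspect ratio tend to `0`. By positive association
and symmetry, rectangles are then hardly ever crossed in their long direction, nor in the short
direction by paths that start near a corner: such paths could be glued together into a crossing in
the long direction. Consequently a typical path crossing a strip of width `s` has to traverse it
back and forth many times, so it is at least 200 times as long as its shortest crossings of two
distant slabs of width `s / 10`. If what happens in the two slabs is asymptotically independent,
the probability of a crossing with `200 * ℓ` steps at scale `s` is therefore at most a constant
times the square of the probability of a crossing with `ℓ` steps at scale `s / 10`. By induction
on the scale, crossings of length at most `200 ^ k` are unlikely at scale `10 ^ k`; since a shortest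
path visits no vertex twice, there are hardly any crossings at all, whatever the aspect ratio.

The argument applies to the bond configuration, whose restrictions to distant slabs are
independent, and it yields the asymptotic independence needed to apply it to the colours: as an
open crossing has the given colour with fixed positive probability, long open crossings are rare
too, so that the bond clusters are small compared with the scale.
-/

/-- Sup-norm distance at most `1`; both adjacencies of the model are contained in this relation. -/
def Near (u v : V) : Prop := |u.1 - v.1| ≤ 1 ∧ |u.2 - v.2| ≤ 1

/-- The points `f i, …, f j` form a path for the relation `E`. Paths are segments of sequences, so
that sub-paths need no re-indexing. -/
def Steps (E : V → V → Prop) (f : ℕ → V) (i j : ℕ) : Prop :=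
  ∀ m, i ≤ m → m < j → E (f m) (f (m + 1))

lemma Steps.mono {E : V → V → Prop} {f : ℕ → V} {i j i' j' : ℕ} (hs : Steps E f i j)
    (hi : i ≤ i') (hj : j' ≤ j) : Steps E f i' j' :=
  fun m h1 h2 ↦ hs m (hi.trans h1) (h2.trans_le hj)

lemma Steps.imp {E E' : V → V → Prop} {f : ℕ → V} {i j : ℕ} (hs : Steps E f i j)
    (h : ∀ u v, E u v → E' u v) : Steps E' f i j :=
  fun m h1 h2 ↦ h _ _ (hs m h1 h2)

lemma exists_steps_of_reflTransGen {E : V → V → Prop} {u v : V}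
    (h : Relation.ReflTransGen E u v) :
    ∃ (f : ℕ → V) (k : ℕ), Steps E f 0 k ∧ f 0 = u ∧ f k = v := by
  induction h with
  | refl => exact ⟨fun _ ↦ u, 0, fun m _ hm ↦ by omega, rfl, rfl⟩
  | @tail b c _ hbc ih =>
    obtain ⟨f, k, hf, h0, hk⟩ := ih
    refine ⟨fun m ↦ if m ≤ k then f m else c, k + 1, fun m _ hm ↦ ?_, by simpa using h0, by simp⟩
    obtain hmk | rfl := (Nat.lt_succ_iff.1 hm).lt_or_eq
    · simpa [hmk.le, Nat.succ_le_iff.2 hmk] using hf m (Nat.zero_le m) hmk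
    · simpa [hk] using hbc

lemma Near.bounds {u v : V} (h : Near u v) :
    (u.1 - v.1 ≤ 1 ∧ v.1 - u.1 ≤ 1) ∧ u.2 - v.2 ≤ 1 ∧ v.2 - u.2 ≤ 1 := by
  obtain ⟨h1, h2⟩ := h
  rw [abs_le] at h1 h2
  omega

/-! ### Planarity -/

/-- `1` if the `i`-th step of `f` joins the columns `v.1` and `v.1 + s`, with its endpoint in the
column of `v` strictly below `v`. -/
def stepBelow (s : ℤ) (f : ℕ → V) (v : V) (i : ℕ) : ZMod 2 :=
  if ((f i).1 = v.1 ∧ (f (i + 1)).1 = v.1 + s ∧ (f i).2 < v.2) ∨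
      ((f (i + 1)).1 = v.1 ∧ (f i).1 = v.1 + s ∧ (f (i + 1)).2 < v.2) then 1 else 0

/-- The parity of the number of times the path `f 0, …, f k`, prolonged by a horizontal half-line
from its endpoint `e` in direction `s = ±1`, passes below `v` between the columns `v.1` and
`v.1 + s`. -/
def parityBelow (s : ℤ) (f : ℕ → V) (k : ℕ) (e v : V) : ZMod 2 :=
  (∑ i ∈ Finset.range k, stepBelow s f v i) + if e.1 = v.1 ∧ e.2 < v.2 then 1 else 0

section Planarity

variable {f : ℕ → V} {k : ℕ} {e v w : V} {s : ℤ}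

lemma sum_range_add_succ_eq (A : ℕ → ZMod 2) (k : ℕ) :
    ∑ i ∈ Finset.range k, (A i + A (i + 1)) = A 0 + A k := by
  induction k with
  | zero => simp [CharTwo.add_self_eq_zero]
  | succ n ih =>
    rw [Finset.sum_range_succ, ih]
    linear_combination CharTwo.add_self_eq_zero (A n)

lemma parityBelow_eq_zero_of_sum (hsum : ∀ i < k, stepBelow s f v i = 0)
    (he : ¬(e.1 = v.1 ∧ e.2 < v.2)) : parityBelow s f k e v = 0 := by
  rw [parityBelow, Finset.sum_eq_zero fun i hi ↦ hsum i (Finset.mem_range.1 hi), if_neg he,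
    add_zero]

-- Each visit of the path to the half-line below `v` is left either to the left or to the right.
lemma parityBelow_right_eq_left (hs : Steps Near f 0 k) (hv : ∀ i ≤ k, f i ≠ v) :
    parityBelow 1 f k (f k) v = parityBelow (-1) f k (f 0) v := by
  let below (i : ℕ) : ZMod 2 := if (f i).1 = v.1 ∧ (f i).2 < v.2 then 1 else 0
  have hstep : ∀ i < k, below i + below (i + 1) = stepBelow 1 f v i + stepBelow (-1) f v i := by
    intro i hi
    have hnear := (hs i (Nat.zero_le i) hi).bounds
    have hne : ¬((f i).1 = v.1 ∧ (f i).2 = v.2) := fun h ↦ hv i hi.le (Prod.ext h.1 h.2)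
    have hne' : ¬((f (i + 1)).1 = v.1 ∧ (f (i + 1)).2 = v.2) :=
      fun h ↦ hv (i + 1) hi (Prod.ext h.1 h.2)
    simp only [below, stepBelow]
    split_ifs <;> first | rfl | (exfalso; omega)
  have htotal := sum_range_add_succ_eq below k
  rw [Finset.sum_congr rfl fun i hi ↦ hstep i (Finset.mem_range.1 hi),
    Finset.sum_add_distrib] at htotal
  change _ + below k = _ + below 0
  linear_combination htotal - CharTwo.add_self_eq_zero (∑ i ∈ Finset.range k, stepBelow (-1) f v i)
    + CharTwo.add_self_eq_zero (below k)

lemma parityBelow_up (hv : ∀ i ≤ k, f i ≠ v) (he : e ≠ v) :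
    parityBelow s f k e (v.1, v.2 + 1) = parityBelow s f k e v := by
  have hne : ∀ i ≤ k, ¬((f i).1 = v.1 ∧ (f i).2 = v.2) :=
    fun i hi h ↦ hv i hi (Prod.ext h.1 h.2)
  have hne_end : ¬(e.1 = v.1 ∧ e.2 = v.2) := fun h ↦ he (Prod.ext h.1 h.2)
  unfold parityBelow
  congr 1
  · refine Finset.sum_congr rfl fun i hi ↦ if_congr ?_ rfl rfl
    have hi := Finset.mem_range.1 hi
    have := hne i hi.le
    have := hne (i + 1) hi
    simp only
    omega
  · exact if_congr (by simp only; omega) rfl rfl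

lemma parityBelow_right (hs : Steps Near f 0 k) (hv_left : (f 0).1 ≤ v.1)
    (hv_right : v.1 < (f k).1) (hv : ∀ i ≤ k, f i ≠ v) (hv' : ∀ i ≤ k, f i ≠ (v.1 + 1, v.2)) :
    parityBelow 1 f k (f k) (v.1 + 1, v.2) = parityBelow 1 f k (f k) v := by
  rw [parityBelow_right_eq_left hs hv']
  have hne : ∀ i ≤ k, ¬((f i).1 = v.1 ∧ (f i).2 = v.2) :=
    fun i hi h ↦ hv i hi (Prod.ext h.1 h.2)
  have hne' : ∀ i ≤ k, ¬((f i).1 = v.1 + 1 ∧ (f i).2 = v.2) :=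
    fun i hi h ↦ hv' i hi (Prod.ext h.1 h.2)
  unfold parityBelow
  congr 1
  · refine Finset.sum_congr rfl fun i hi ↦ if_congr ?_ rfl rfl
    have hi := Finset.mem_range.1 hi
    have := hne i hi.le
    have := hne (i + 1) hi
    have := hne' i hi.le
    have := hne' (i + 1) hi
    have := (hs i (Nat.zero_le i) hi).bounds
    simp only
    omega
  · rw [if_neg (by simp only; omega), if_neg (by omega)]

lemma parityBelow_of_forall_ge (hv : ∀ i ≤ k, v.2 ≤ (f i).2) (he : v.2 ≤ e.2) :
    parityBelow s f k e v = 0 := by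
  refine parityBelow_eq_zero_of_sum (fun i hi ↦ if_neg ?_) (by omega)
  have := hv i hi.le
  have := hv (i + 1) hi
  omega

lemma parityBelow_of_left_of_lt (hs : Steps Near f 0 k) (hf : ∀ i ≤ k, (f 0).1 ≤ (f i).1)
    (hv : ∀ i ≤ k, f i ≠ v) (hv_left : v.1 = (f 0).1) (hv_low : v.2 < (f 0).2) :
    parityBelow 1 f k (f k) v = 0 := by
  rw [parityBelow_right_eq_left hs hv]
  refine parityBelow_eq_zero_of_sum (fun i hi ↦ if_neg ?_) (by omega)
  have := hf i hi.le
  have := hf (i + 1) hi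
  omega

lemma parityBelow_of_forall_le (hs : Steps Near f 0 k) (hv_left : (f 0).1 ≤ v.1)
    (hv_right : v.1 ≤ (f k).1) (hv : ∀ i ≤ k, f i ≠ v) (hv_high : ∀ i ≤ k, (f i).2 ≤ v.2) :
    parityBelow 1 f k (f k) v = 1 := by
  have hne : ∀ i ≤ k, ¬((f i).1 = v.1 ∧ (f i).2 = v.2) :=
    fun i hi h ↦ hv i hi (Prod.ext h.1 h.2)
  let onLeft (i : ℕ) : ZMod 2 := if (f i).1 ≤ v.1 then 1 else 0
  have hstep : ∀ i < k, stepBelow 1 f v i = onLeft i + onLeft (i + 1) := by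
    intro i hi
    have := (hs i (Nat.zero_le i) hi).bounds
    have := hne i hi.le
    have := hne (i + 1) hi
    have := hv_high i hi.le
    have := hv_high (i + 1) hi
    simp only [onLeft, stepBelow]
    split_ifs <;> first | rfl | (exfalso; omega)
  have hlast : (if (f k).1 = v.1 ∧ (f k).2 < v.2 then 1 else 0) = onLeft k := by
    have := hne k le_rfl
    have := hv_high k le_rfl
    exact if_congr (by omega) rfl rfl
  rw [parityBelow, Finset.sum_congr rfl fun i hi ↦ hstep i (Finset.mem_range.1 hi),
    sum_range_add_succ_eq, hlast, add_assoc, CharTwo.add_self_eq_zero, add_zero]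
  exact if_pos hv_left

lemma parityBelow_eq_of_vertical (h : v.1 = w.1) (hnear : Near v w) (hv : ∀ i ≤ k, f i ≠ v)
    (hw : ∀ i ≤ k, f i ≠ w) : parityBelow s f k (f k) v = parityBelow s f k (f k) w := by
  have := hnear.bounds
  obtain h' | h' | h' : v.2 = w.2 ∨ v.2 = w.2 + 1 ∨ w.2 = v.2 + 1 := by omega
  · rw [show v = w from Prod.ext h h']
  · rw [show v = (w.1, w.2 + 1) from Prod.ext h h', parityBelow_up hw (hw k le_rfl)]
  · rw [show w = (v.1, v.2 + 1) from Prod.ext h.symm h', parityBelow_up hv (hv k le_rfl)]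

lemma parityBelow_eq_of_horizontal (hs : Steps Near f 0 k) (h : v.2 = w.2) (hnear : Near v w)
    (hv_mem : (f 0).1 ≤ v.1 ∧ v.1 ≤ (f k).1) (hw_mem : (f 0).1 ≤ w.1 ∧ w.1 ≤ (f k).1)
    (hv : ∀ i ≤ k, f i ≠ v) (hw : ∀ i ≤ k, f i ≠ w) :
    parityBelow 1 f k (f k) v = parityBelow 1 f k (f k) w := by
  have := hnear.bounds
  obtain h' | h' | h' : v.1 = w.1 ∨ v.1 = w.1 + 1 ∨ w.1 = v.1 + 1 := by omega
  · rw [show v = w from Prod.ext h' h]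
  · have hvw : v = (w.1 + 1, w.2) := Prod.ext h' h
    rw [hvw] at hv ⊢
    exact parityBelow_right hs hw_mem.1 (by omega) hw hv
  · have hwv : w = (v.1 + 1, v.2) := Prod.ext h' h.symm
    rw [hwv] at hw ⊢
    exact (parityBelow_right hs hv_mem.1 (by omega) hv hw).symm

lemma parityBelow_eq_of_near (hs : Steps Near f 0 k) (hnear : Near v w)
    (hv_mem : (f 0).1 ≤ v.1 ∧ v.1 ≤ (f k).1) (hw_mem : (f 0).1 ≤ w.1 ∧ w.1 ≤ (f k).1)
    (hv : ∀ i ≤ k, f i ≠ v) (hw : ∀ i ≤ k, f i ≠ w)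
    (hcorner : v.1 ≠ w.1 → v.2 ≠ w.2 → ∀ i ≤ k, f i ≠ (v.1, w.2)) :
    parityBelow 1 f k (f k) v = parityBelow 1 f k (f k) w := by
  by_cases h1 : v.1 = w.1
  · exact parityBelow_eq_of_vertical h1 hnear hv hw
  by_cases h2 : v.2 = w.2
  · exact parityBelow_eq_of_horizontal hs h2 hnear hv_mem hw_mem hv hw
  have hc := hcorner h1 h2
  calc parityBelow 1 f k (f k) v = parityBelow 1 f k (f k) (v.1, w.2) :=
        parityBelow_eq_of_vertical rfl ⟨by simp, hnear.2⟩ hv hc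
    _ = parityBelow 1 f k (f k) w :=
        parityBelow_eq_of_horizontal hs rfl ⟨hnear.1, by simp⟩ hv_mem hw_mem hc hw

-- The parity is constant along `g` as long as `g` avoids `f`, but it is `0` at the start of `g`
-- and `1` at its end.
lemma exists_meeting {g : ℕ → V} {l : ℕ} (hf : Steps Near f 0 k)
    (hf_left : ∀ i ≤ k, (f 0).1 ≤ (f i).1) (hg : Steps Near g 0 l)
    (hg_mem : ∀ j ≤ l, (f 0).1 ≤ (g j).1 ∧ (g j).1 ≤ (f k).1)
    (hg_start : (∀ i ≤ k, (g 0).2 ≤ (f i).2) ∨ (g 0).1 = (f 0).1 ∧ (g 0).2 < (f 0).2)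
    (hg_end : ∀ i ≤ k, (f i).2 ≤ (g l).2) :
    ∃ i ≤ k, ∃ j ≤ l, f i = g j ∨
      (j < l ∧ (g j).1 ≠ (g (j + 1)).1 ∧ (g j).2 ≠ (g (j + 1)).2 ∧
        f i = ((g j).1, (g (j + 1)).2)) := by
  by_contra! hcon
  have hne : ∀ j ≤ l, ∀ i ≤ k, f i ≠ g j := fun j hj i hi ↦ (hcon i hi j hj).1
  have hzero : ∀ j ≤ l, parityBelow 1 f k (f k) (g j) = 0 := by
    intro j
    induction j with
    | zero =>
      intro _
      rcases hg_start with hlow | ⟨hleft, hlow⟩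
      · exact parityBelow_of_forall_ge hlow (hlow k le_rfl)
      · exact parityBelow_of_left_of_lt hf hf_left (hne 0 (Nat.zero_le _)) hleft hlow
    | succ j ih =>
      intro (hj : j < l)
      rw [← ih hj.le]
      exact (parityBelow_eq_of_near hf (hg j (Nat.zero_le j) hj) (hg_mem j hj.le)
        (hg_mem (j + 1) hj) (hne j hj.le) (hne (j + 1) hj)
        fun h1 h2 i hi ↦ (hcon i hi j hj.le).2 hj h1 h2).symm
  have hone := parityBelow_of_forall_le hf (hg_mem l le_rfl).1 (hg_mem l le_rfl).2 (hne l le_rfl)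
    hg_end
  exact one_ne_zero (hone.symm.trans (hzero l le_rfl))

end Planarity

section Extraction

variable {u : ℕ → ℤ} {i j : ℕ} {α β : ℤ}

lemma exists_first_hit (hij : i ≤ j) (hu : ∀ m, i ≤ m → m < j → |u m - u (m + 1)| ≤ 1)
    (hi : u i ≤ β) (hj : β ≤ u j) :
    ∃ j', i ≤ j' ∧ j' ≤ j ∧ u j' = β ∧ ∀ m, i ≤ m → m ≤ j' → u m ≤ β := by
  classical
  have hex : ∃ m, i ≤ m ∧ β ≤ u m := ⟨j, hij, hj⟩
  obtain ⟨hge, hβ⟩ := Nat.find_spec hex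
  have hle : Nat.find hex ≤ j := Nat.find_min' hex ⟨hij, hj⟩
  have hbefore : ∀ m, i ≤ m → m < Nat.find hex → u m < β := fun m h1 h2 ↦
    not_le.1 fun h ↦ Nat.find_min hex h2 ⟨h1, h⟩
  have heq : u (Nat.find hex) = β := by
    rcases hge.eq_or_lt with h | h
    · rw [← h] at hβ ⊢
      omega
    · obtain ⟨m, hm⟩ : ∃ m, Nat.find hex = m + 1 := ⟨Nat.find hex - 1, by omega⟩
      have := hbefore m (by omega) (by omega)
      have := abs_le.1 (hu m (by omega) (by omega))
      rw [hm] at hβ ⊢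
      omega
  refine ⟨Nat.find hex, hge, hle, heq, fun m h1 h2 ↦ ?_⟩
  rcases h2.eq_or_lt with rfl | h
  · exact heq.le
  · exact (hbefore m h1 h).le

lemma exists_last_hit (hij : i ≤ j) (hu : ∀ m, i ≤ m → m < j → |u m - u (m + 1)| ≤ 1)
    (hi : u i ≤ α) (hj : α ≤ u j) :
    ∃ i', i ≤ i' ∧ i' ≤ j ∧ u i' = α ∧ ∀ m, i' ≤ m → m ≤ j → α ≤ u m := by
  obtain ⟨n, -, hn, hn_eq, hn_le⟩ := exists_first_hit (u := fun m ↦ -u (j - m)) (i := 0)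
    (j := j - i) (β := -α) (Nat.zero_le _)
    (by
      intro m _ hm
      have := abs_le.1 (hu (j - (m + 1)) (by omega) (by omega))
      rw [show j - (m + 1) + 1 = j - m by omega] at this
      rw [abs_le]
      omega)
    (by simpa using hj) (by rw [Nat.sub_sub_self hij]; omega)
  refine ⟨j - n, by omega, by omega, by omega, fun m h1 h2 ↦ ?_⟩
  have := hn_le (j - m) (Nat.zero_le _) (by omega)
  rw [Nat.sub_sub_self h2] at this
  omega

lemma exists_upcrossing (hij : i ≤ j) (hαβ : α ≤ β)
    (hu : ∀ m, i ≤ m → m < j → |u m - u (m + 1)| ≤ 1) (hi : u i ≤ α) (hj : β ≤ u j) :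
    ∃ i' j', i ≤ i' ∧ i' ≤ j' ∧ j' ≤ j ∧ u i' = α ∧ u j' = β ∧
      ∀ m, i' ≤ m → m ≤ j' → α ≤ u m ∧ u m ≤ β := by
  obtain ⟨j', hij', hj', hβ, hle⟩ := exists_first_hit hij hu (hi.trans hαβ) hj
  obtain ⟨i', hi', hij'', hα, hge⟩ := exists_last_hit hij'
    (fun m h1 h2 ↦ hu m h1 (h2.trans_le hj')) hi (hαβ.trans hβ.ge)
  exact ⟨i', j', hi', hij'', hj', hα, hβ, fun m h1 h2 ↦ ⟨hge m h1 h2, hle m (hi'.trans h1) h2⟩⟩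

lemma exists_downcrossing (hij : i ≤ j) (hαβ : α ≤ β)
    (hu : ∀ m, i ≤ m → m < j → |u m - u (m + 1)| ≤ 1) (hi : β ≤ u i) (hj : u j ≤ α) :
    ∃ i' j', i ≤ i' ∧ i' ≤ j' ∧ j' ≤ j ∧ u i' = β ∧ u j' = α ∧
      ∀ m, i' ≤ m → m ≤ j' → α ≤ u m ∧ u m ≤ β := by
  obtain ⟨i', j', hi', hij', hj', hβ, hα, hmem⟩ := exists_upcrossing (u := fun m ↦ -u m) hij
    (neg_le_neg hαβ)
    (fun m h1 h2 ↦ by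
      have := abs_le.1 (hu m h1 h2)
      rw [abs_le]
      omega)
    (neg_le_neg hi) (neg_le_neg hj)
  refine ⟨i', j', hi', hij', hj', neg_inj.1 hβ, neg_inj.1 hα, fun m h1 h2 ↦ ?_⟩
  have := hmem m h1 h2
  omega

end Extraction

/-! ### Crossing models -/

/-- A path from `A` to `B` inside `R` with fewer than `ℓ` steps; `ℓ = ⊤` puts no bound on the
length. -/
def HasPath (E : V → V → Prop) (R A B : Set V) (ℓ : ℕ∞) : Prop :=
  ∃ (f : ℕ → V) (k : ℕ), (∀ i ≤ k, f i ∈ R) ∧ Steps E f 0 k ∧ f 0 ∈ A ∧ f k ∈ B ∧ (k : ℕ∞) < ℓ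

/-- The event that the random relation `E ω` has a path from `A` to `B` inside `R` with fewer than
`ℓ` steps. -/
def pathEvent {Ω : Type*} (E : Ω → V → V → Prop) (R A B : Set V) (ℓ : ℕ∞) : Set Ω :=
  {ω | HasPath (E ω) R A B ℓ}

/-- The lattice rectangle `[x₁, x₂] × [y₁, y₂]`. -/
def box (x₁ x₂ y₁ y₂ : ℤ) : Set V := {v | (x₁ ≤ v.1 ∧ v.1 ≤ x₂) ∧ y₁ ≤ v.2 ∧ v.2 ≤ y₂}

lemma finite_box (x₁ x₂ y₁ y₂ : ℤ) : (box x₁ x₂ y₁ y₂).Finite :=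
  ((Set.finite_Icc x₁ x₂).prod (Set.finite_Icc y₁ y₂)).subset fun _ h ↦ ⟨h.1, h.2⟩

/-- A bijection of `ℤ²` preserving Euclidean distances. -/
def IsLatticeIsometry (σ : V ≃ V) : Prop :=
  ∀ u v : V, ((σ u).1 - (σ v).1) ^ 2 + ((σ u).2 - (σ v).2) ^ 2 =
    (u.1 - v.1) ^ 2 + (u.2 - v.2) ^ 2

/-- What the Russo–Seymour–Welsh argument needs of a random symmetric relation on `ℤ²`: planarity
of its paths, invariance under isometries, and positive association of increasing events. The
colour and the bond configuration of the DaC model are both instances. -/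
structure CrossingModel {Ω : Type*} [MeasurableSpace Ω] (μ : Measure Ω) where
  /-- The random relation. -/
  rel : Ω → V → V → Prop
  rel_symm : ∀ {ω u v}, rel ω u v → rel ω v u
  rel_near : ∀ {ω u v}, rel ω u v → Near u v
  /-- A vertex `(u.1, v.2)` that lies on some path is related to the endpoints of a diagonal step
  from `u` to `v`; hence paths that cross are joined. -/
  rel_corner : ∀ {ω u v z}, rel ω u v → u.1 ≠ v.1 → u.2 ≠ v.2 → rel ω (u.1, v.2) z →
    rel ω u (u.1, v.2)
  /-- The class of increasing events. -/
  Incr : Set Ω → Prop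
  incr_univ : Incr Set.univ
  incr_inter : ∀ {A B}, Incr A → Incr B → Incr (A ∩ B)
  incr_pathEvent : ∀ {R} A B, R.Finite → Incr (pathEvent rel R A B ⊤)
  fkg : ∀ {A B}, Incr A → Incr B → μ.real A * μ.real B ≤ μ.real (A ∩ B)
  isometry_invariant : ∀ {σ : V ≃ V}, IsLatticeIsometry σ → ∀ {R} A B ℓ, R.Finite →
    μ.real (pathEvent rel (σ ⁻¹' R) (σ ⁻¹' A) (σ ⁻¹' B) ℓ) = μ.real (pathEvent rel R A B ℓ)

/-- The isometry `v ↦ (e v.1 + a, d v.2 + b)` with signs `e`, `d`. -/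
def signedShift (e d : ℤˣ) (a b : ℤ) : V ≃ V :=
  (e.mulLeft.prodCongr d.mulLeft).trans (Equiv.addRight (a, b))

@[simp] lemma signedShift_apply (e d : ℤˣ) (a b : ℤ) (v : V) :
    signedShift e d a b v = (e * v.1 + a, d * v.2 + b) := rfl

lemma isLatticeIsometry_signedShift (e d : ℤˣ) (a b : ℤ) :
    IsLatticeIsometry (signedShift e d a b) := by
  intro u v
  simp only [signedShift_apply]
  linear_combination (u.1 - v.1) ^ 2 * Int.units_coe_mul_self e +
    (u.2 - v.2) ^ 2 * Int.units_coe_mul_self d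

lemma isLatticeIsometry_swap_signedShift (e d : ℤˣ) (a b : ℤ) :
    IsLatticeIsometry ((Equiv.prodComm ℤ ℤ).trans (signedShift e d a b)) := by
  intro u v
  have h := isLatticeIsometry_signedShift e d a b u.swap v.swap
  simp only [Prod.fst_swap, Prod.snd_swap] at h
  rw [add_comm ((u.1 - v.1) ^ 2)]
  exact h

lemma pathEvent_mono {Ω : Type*} {E : Ω → V → V → Prop} {R R' A A' B B' : Set V} {ℓ ℓ' : ℕ∞}
    (hR : R ⊆ R') (hA : A ⊆ A') (hB : B ⊆ B') (hℓ : ℓ ≤ ℓ') :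
    pathEvent E R A B ℓ ⊆ pathEvent E R' A' B' ℓ' := by
  rintro ω ⟨f, k, hfR, hf, hfA, hfB, hk⟩
  exact ⟨f, k, fun i hi ↦ hR (hfR i hi), hf, hA hfA, hB hfB, hk.trans_le hℓ⟩

lemma pathEvent_union_left {Ω : Type*} (E : Ω → V → V → Prop) (R A A' B : Set V) (ℓ : ℕ∞) :
    pathEvent E R (A ∪ A') B ℓ = pathEvent E R A B ℓ ∪ pathEvent E R A' B ℓ := by
  ext ω
  simp only [pathEvent, HasPath, Set.mem_union, Set.mem_ofPred_eq]
  grind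

lemma HasPath.of_steps {E : V → V → Prop} {R A B : Set V} {ℓ : ℕ∞} {f : ℕ → V} {i j : ℕ}
    (hij : i ≤ j) (hf : Steps E f i j) (hR : ∀ m, i ≤ m → m ≤ j → f m ∈ R) (hA : f i ∈ A)
    (hB : f j ∈ B) (hℓ : ((j - i : ℕ) : ℕ∞) < ℓ) : HasPath E R A B ℓ :=
  ⟨fun m ↦ f (i + m), j - i, fun m hm ↦ hR _ (by omega) (by omega),
    fun m _ hm ↦ hf (i + m) (by omega) (by omega), hA, by simpa [hij] using hB, hℓ⟩

lemma HasPath.symm {E : V → V → Prop} (hE : ∀ {u v}, E u v → E v u) {R A B : Set V} {ℓ : ℕ∞}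
    (h : HasPath E R A B ℓ) : HasPath E R B A ℓ := by
  obtain ⟨f, k, hR, hf, hA, hB, hk⟩ := h
  refine ⟨fun m ↦ f (k - m), k, fun m _ ↦ hR _ (by omega), fun m _ hm ↦ ?_, hB, by simpa, hk⟩
  have := hE (hf (k - (m + 1)) (by omega) (by omega))
  rwa [show k - (m + 1) + 1 = k - m by omega] at this

lemma HasPath.of_coord {E : V → V → Prop} (hE : ∀ {u v}, E u v → E v u) {c : V → ℤ}
    (hc : ∀ {u v}, E u v → |c u - c v| ≤ 1) {R : Set V} {ℓ : ℕ∞} {f : ℕ → V} {i j : ℕ} {α β : ℤ}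
    (hij : i ≤ j) (hαβ : α ≤ β) (hf : Steps E f i j)
    (hends : (c (f i) ≤ α ∧ β ≤ c (f j)) ∨ (β ≤ c (f i) ∧ c (f j) ≤ α))
    (hR : ∀ m, i ≤ m → m ≤ j → α ≤ c (f m) ∧ c (f m) ≤ β → f m ∈ R)
    (hℓ : ((j - i : ℕ) : ℕ∞) < ℓ) : HasPath E R {v | c v = α} {v | c v = β} ℓ := by
  have hstep : ∀ m, i ≤ m → m < j → |c (f m) - c (f (m + 1))| ≤ 1 :=
    fun m h1 h2 ↦ hc (hf m h1 h2)
  have hlen : ∀ {i' j'}, i ≤ i' → j' ≤ j → ((j' - i' : ℕ) : ℕ∞) < ℓ := fun h1 h2 ↦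
    lt_of_le_of_lt (by exact_mod_cast (by omega)) hℓ
  rcases hends with ⟨hi, hj⟩ | ⟨hi, hj⟩
  · obtain ⟨i', j', hi', hij', hj', hα, hβ, hmem⟩ :=
      exists_upcrossing (u := fun m ↦ c (f m)) hij hαβ hstep hi hj
    exact .of_steps hij' (hf.mono hi' hj')
      (fun m h1 h2 ↦ hR m (by omega) (by omega) (hmem m h1 h2)) hα hβ (hlen hi' hj')
  · obtain ⟨i', j', hi', hij', hj', hβ, hα, hmem⟩ :=
      exists_downcrossing (u := fun m ↦ c (f m)) hij hαβ hstep hi hj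
    exact .symm hE (.of_steps hij' (hf.mono hi' hj')
      (fun m h1 h2 ↦ hR m (by omega) (by omega) (hmem m h1 h2)) hβ hα (hlen hi' hj'))

namespace CrossingModel

variable {Ω : Type*} [MeasurableSpace Ω] {μ : Measure Ω} (X : CrossingModel μ) {ω : Ω}

/-- Left-right crossings of `[x₁, x₂] × [y₁, y₂]` with fewer than `ℓ` steps. -/
def horizCrossing (x₁ x₂ y₁ y₂ : ℤ) (ℓ : ℕ∞) : Set Ω :=
  pathEvent X.rel (box x₁ x₂ y₁ y₂) {v | v.1 = x₁} {v | v.1 = x₂} ℓ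

/-- Bottom-top crossings of `[x₁, x₂] × [y₁, y₂]` with fewer than `ℓ` steps. -/
def vertCrossing (x₁ x₂ y₁ y₂ : ℤ) (ℓ : ℕ∞) : Set Ω :=
  pathEvent X.rel (box x₁ x₂ y₁ y₂) {v | v.2 = y₁} {v | v.2 = y₂} ℓ

/-- The probability of a left-right crossing of `[0, a] × [0, b]`. -/
noncomputable def crossProb (a b : ℤ) : ℝ := μ.real (X.horizCrossing 0 a 0 b ⊤)

variable {X}

lemma crossProb_nonneg (a b : ℤ) : 0 ≤ X.crossProb a b := measureReal_nonneg

lemma incr_biInter {ι : Type*} (s : Finset ι) {A : ι → Set Ω} (hA : ∀ i, X.Incr (A i)) :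
    X.Incr (⋂ i ∈ s, A i) := by
  classical
  induction s using Finset.induction_on with
  | empty => simpa using X.incr_univ
  | insert a s _ ih =>
    rw [Finset.set_biInter_insert]
    exact X.incr_inter (hA a) ih

lemma prod_measureReal_le_biInter [IsProbabilityMeasure μ] {ι : Type*} (s : Finset ι)
    {A : ι → Set Ω} (hA : ∀ i, X.Incr (A i)) :
    ∏ i ∈ s, μ.real (A i) ≤ μ.real (⋂ i ∈ s, A i) := by
  classical
  induction s using Finset.induction_on with
  | empty => simp
  | insert a s ha ih =>
    rw [Finset.set_biInter_insert, Finset.prod_insert ha]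
    exact (mul_le_mul_of_nonneg_left ih measureReal_nonneg).trans
      (X.fkg (hA a) (incr_biInter s hA))

lemma measureReal_pathEvent_congr {σ : V ≃ V} (hσ : IsLatticeIsometry σ)
    {R R' A A' B B' : Set V} {ℓ : ℕ∞} (hfin : R.Finite) (hR : ∀ v, σ v ∈ R ↔ v ∈ R')
    (hA : ∀ v, σ v ∈ A ↔ v ∈ A') (hB : ∀ v, σ v ∈ B ↔ v ∈ B') :
    μ.real (pathEvent X.rel R A B ℓ) = μ.real (pathEvent X.rel R' A' B' ℓ) := by
  rw [← X.isometry_invariant hσ A B ℓ hfin, show σ ⁻¹' R = R' from Set.ext hR,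
    show σ ⁻¹' A = A' from Set.ext hA, show σ ⁻¹' B = B' from Set.ext hB]

lemma measureReal_horizCrossing (x₁ x₂ y₁ y₂ : ℤ) (ℓ : ℕ∞) :
    μ.real (X.horizCrossing x₁ x₂ y₁ y₂ ℓ) =
      μ.real (X.horizCrossing 0 (x₂ - x₁) 0 (y₂ - y₁) ℓ) := by
  refine measureReal_pathEvent_congr (isLatticeIsometry_signedShift 1 1 x₁ y₁)
    (finite_box _ _ _ _) ?_ ?_ ?_ <;> intro v <;> simp [box] <;> omega

lemma measureReal_vertCrossing (x₁ x₂ y₁ y₂ : ℤ) :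
    μ.real (X.vertCrossing x₁ x₂ y₁ y₂ ⊤) = X.crossProb (y₂ - y₁) (x₂ - x₁) := by
  refine measureReal_pathEvent_congr (isLatticeIsometry_swap_signedShift 1 1 x₁ y₁)
    (finite_box _ _ _ _) ?_ ?_ ?_ <;> intro v <;> simp [box] <;> omega

lemma mem_horizCrossing {f : ℕ → V} {i j : ℕ} {x₁ x₂ y₁ y₂ : ℤ} {ℓ : ℕ∞} (hij : i ≤ j)
    (hf : Steps (X.rel ω) f i j) (hx : x₁ ≤ x₂)
    (hy : ∀ m, i ≤ m → m ≤ j → y₁ ≤ (f m).2 ∧ (f m).2 ≤ y₂)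
    (hends : ((f i).1 ≤ x₁ ∧ x₂ ≤ (f j).1) ∨ (x₂ ≤ (f i).1 ∧ (f j).1 ≤ x₁))
    (hℓ : ((j - i : ℕ) : ℕ∞) < ℓ) : ω ∈ X.horizCrossing x₁ x₂ y₁ y₂ ℓ :=
  HasPath.of_coord X.rel_symm (c := Prod.fst) (fun h ↦ (X.rel_near h).1) hij hx hf hends
    (fun m h1 h2 h ↦ ⟨h, hy m h1 h2⟩) hℓ

lemma mem_vertCrossing {f : ℕ → V} {i j : ℕ} {x₁ x₂ y₁ y₂ : ℤ} {ℓ : ℕ∞} (hij : i ≤ j)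
    (hf : Steps (X.rel ω) f i j) (hy : y₁ ≤ y₂)
    (hx : ∀ m, i ≤ m → m ≤ j → x₁ ≤ (f m).1 ∧ (f m).1 ≤ x₂)
    (hends : ((f i).2 ≤ y₁ ∧ y₂ ≤ (f j).2) ∨ (y₂ ≤ (f i).2 ∧ (f j).2 ≤ y₁))
    (hℓ : ((j - i : ℕ) : ℕ∞) < ℓ) : ω ∈ X.vertCrossing x₁ x₂ y₁ y₂ ℓ :=
  HasPath.of_coord X.rel_symm (c := Prod.snd) (fun h ↦ (X.rel_near h).2) hij hy hf hends
    (fun m h1 h2 h ↦ ⟨hx m h1 h2, h⟩) hℓ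

lemma exists_gt_of_notMem_horizCrossing {f : ℕ → V} {i j : ℕ} {x₁ x₂ y₁ y₂ : ℤ} (hij : i ≤ j)
    (hf : Steps (X.rel ω) f i j) (hx : x₁ ≤ x₂) (hlow : ∀ m, i ≤ m → m ≤ j → y₁ ≤ (f m).2)
    (hends : ((f i).1 ≤ x₁ ∧ x₂ ≤ (f j).1) ∨ (x₂ ≤ (f i).1 ∧ (f j).1 ≤ x₁))
    (hω : ω ∉ X.horizCrossing x₁ x₂ y₁ y₂ ⊤) : ∃ m, i ≤ m ∧ m ≤ j ∧ y₂ < (f m).2 := by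
  by_contra! hcon
  exact hω (mem_horizCrossing hij hf hx (fun m h1 h2 ↦ ⟨hlow m h1 h2, hcon m h1 h2⟩) hends
    (ENat.natCast_lt_top _))

lemma crossProb_mono [IsFiniteMeasure μ] {a a' b b' : ℤ} (h0 : 0 ≤ a) (ha : a ≤ a')
    (hb : b' ≤ b) : X.crossProb a' b' ≤ X.crossProb a b := by
  refine measureReal_mono ?_
  rintro ω ⟨f, k, hbox, hf, hstart, hend, -⟩
  simp only [Set.mem_ofPred_eq] at hstart hend
  exact mem_horizCrossing (Nat.zero_le k) hf h0
    (fun m _ hm ↦ ⟨(hbox m hm).2.1, (hbox m hm).2.2.trans hb⟩) (by omega) (by simp)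

variable (X) in
/-- `u` and `v` are joined by a path inside `R`. -/
def Joined (ω : Ω) (R : Set V) (u v : V) : Prop :=
  Relation.ReflTransGen (fun a b ↦ X.rel ω a b ∧ a ∈ R ∧ b ∈ R) u v

lemma Joined.symm {R : Set V} {u v : V} (h : X.Joined ω R u v) : X.Joined ω R v u := by
  have : Std.Symm fun a b ↦ X.rel ω a b ∧ a ∈ R ∧ b ∈ R :=
    ⟨fun _ _ h ↦ ⟨X.rel_symm h.1, h.2.2, h.2.1⟩⟩
  exact Relation.ReflTransGen.stdSymm.symm _ _ h

lemma Joined.trans {R : Set V} {u v w : V} (h : X.Joined ω R u v) (h' : X.Joined ω R v w) :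
    X.Joined ω R u w :=
  Relation.ReflTransGen.trans h h'

lemma Joined.of_steps {R : Set V} {f : ℕ → V} {i j : ℕ} (hij : i ≤ j)
    (hf : Steps (X.rel ω) f i j) (hR : ∀ m, i ≤ m → m ≤ j → f m ∈ R) :
    X.Joined ω R (f i) (f j) := by
  induction j, hij using Nat.le_induction with
  | base => exact .refl
  | succ j hj ih =>
    exact .tail (ih (hf.mono le_rfl j.le_succ) fun m h1 h2 ↦ hR m h1 (by omega))
      ⟨hf j hj (by omega), hR _ hj (by omega), hR _ (by omega) le_rfl⟩

lemma Joined.exists_steps {R : Set V} {u v : V} (h : X.Joined ω R u v) (hu : u ∈ R) :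
    ∃ (f : ℕ → V) (k : ℕ), f 0 = u ∧ f k = v ∧ (∀ i ≤ k, f i ∈ R) ∧ Steps (X.rel ω) f 0 k := by
  obtain ⟨f, k, hf, rfl, rfl⟩ := exists_steps_of_reflTransGen h
  refine ⟨f, k, rfl, rfl, fun i hi ↦ ?_, hf.imp fun _ _ h ↦ h.1⟩
  obtain - | i := i
  · exact hu
  · exact (hf i i.zero_le hi).2.2

lemma exists_rel_of_steps {f : ℕ → V} {i j m : ℕ} (hf : Steps (X.rel ω) f i j) (hij : i < j)
    (him : i ≤ m) (hmj : m ≤ j) : ∃ z, X.rel ω (f m) z := by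
  rcases hmj.lt_or_eq with h | rfl
  · exact ⟨_, hf m him h⟩
  · have := hf (m - 1) (by omega) (by omega)
    rw [show m - 1 + 1 = m by omega] at this
    exact ⟨_, X.rel_symm this⟩

lemma joined_of_meeting {R : Set V} {f g : ℕ → V} {i j l : ℕ} (hij : i ≤ j)
    (hx : (f i).1 < (f j).1) (hf : Steps (X.rel ω) f i j) (hg : Steps (X.rel ω) g 0 l)
    (hfR : ∀ m, i ≤ m → m ≤ j → f m ∈ R) (hgR : ∀ m ≤ l, g m ∈ R)
    (hf_left : ∀ m, i ≤ m → m ≤ j → (f i).1 ≤ (f m).1)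
    (hg_mem : ∀ m ≤ l, (f i).1 ≤ (g m).1 ∧ (g m).1 ≤ (f j).1)
    (hg_start : (∀ m, i ≤ m → m ≤ j → (g 0).2 ≤ (f m).2) ∨
      (g 0).1 = (f i).1 ∧ (g 0).2 < (f i).2)
    (hg_end : ∀ m, i ≤ m → m ≤ j → (f m).2 ≤ (g l).2) : X.Joined ω R (f i) (g 0) := by
  obtain ⟨a, ha, b, hb, hab⟩ := exists_meeting (f := fun m ↦ f (i + m)) (k := j - i)
    (fun m _ hm ↦ X.rel_near (hf (i + m) (by omega) (by omega)))
    (fun m hm ↦ hf_left _ (by omega) (by omega))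
    (fun m h1 h2 ↦ X.rel_near (hg m h1 h2))
    (by simpa [hij] using hg_mem)
    (hg_start.imp_left fun h m hm ↦ h _ (by omega) (by omega))
    (fun m hm ↦ hg_end _ (by omega) (by omega))
  have hfa : X.Joined ω R (f i) (f (i + a)) :=
    .of_steps (by omega) (hf.mono le_rfl (by omega)) fun m h1 h2 ↦ hfR m h1 (by omega)
  have hgb : X.Joined ω R (g 0) (g b) :=
    .of_steps (by omega) (hg.mono le_rfl hb) fun m _ h2 ↦ hgR m (by omega)
  refine hfa.trans (.trans ?_ hgb.symm)
  rcases hab with h | ⟨hbl, h1, h2, h⟩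
  · rw [h]
    exact .refl
  · have hlt : i < j := hij.lt_of_ne fun h ↦ by simp [h] at hx
    obtain ⟨z, hz⟩ := exists_rel_of_steps hf hlt (m := i + a) (by omega) (by omega)
    rw [h] at hz ⊢
    have hrel := X.rel_corner (hg b (by omega) hbl) h1 h2 hz
    refine .single ⟨X.rel_symm hrel, ?_, hgR b hb⟩
    rw [← h]
    exact hfR _ (by omega) (by omega)

lemma joined_of_horiz_of_vert {R : Set V} {x₁ x₂ y₁ y₂ : ℤ} (hx : x₁ < x₂) {f g : ℕ → V}
    {k l : ℕ} (hf : Steps (X.rel ω) f 0 k) (hg : Steps (X.rel ω) g 0 l)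
    (hfR : ∀ m ≤ k, f m ∈ R) (hgR : ∀ m ≤ l, g m ∈ R)
    (hf_mem : ∀ m ≤ k, y₁ ≤ (f m).2 ∧ (f m).2 ≤ y₂) (hf_start : (f 0).1 ≤ x₁)
    (hf_end : x₂ ≤ (f k).1) (hg_mem : ∀ m ≤ l, x₁ ≤ (g m).1 ∧ (g m).1 ≤ x₂)
    (hg_start : (g 0).2 = y₁) (hg_end : (g l).2 = y₂) : X.Joined ω R (f 0) (g 0) := by
  obtain ⟨i, j, -, hij, hj, hi_eq, hj_eq, hmem⟩ :=
    exists_upcrossing (u := fun m ↦ (f m).1) (Nat.zero_le k) hx.le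
      (fun m h1 h2 ↦ (X.rel_near (hf m h1 h2)).1) hf_start hf_end
  refine (Joined.of_steps (Nat.zero_le i) (hf.mono le_rfl (hij.trans hj))
    fun m _ h ↦ hfR m (by omega)).trans
    (joined_of_meeting hij (by omega) (hf.mono (Nat.zero_le i) hj) hg
      (fun m _ h ↦ hfR m (h.trans hj)) hgR (fun m h1 h2 ↦ hi_eq.trans_le (hmem m h1 h2).1)
      (fun m h ↦ by simpa only [hi_eq, hj_eq] using hg_mem m h)
      (.inl fun m _ h ↦ ?_) fun m _ h ↦ ?_)
  · rw [hg_start]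
    exact (hf_mem m (h.trans hj)).1
  · rw [hg_end]
    exact (hf_mem m (h.trans hj)).2

lemma horizCrossing_glue {m n : ℤ} (hn : 0 < n) (hmn : n ≤ m) :
    X.horizCrossing 0 m 0 n ⊤ ∩ X.horizCrossing (m - n) (2 * m - n) 0 n ⊤ ∩
        X.vertCrossing (m - n) m 0 n ⊤ ⊆ X.horizCrossing 0 (2 * m - n) 0 n ⊤ := by
  rintro ω ⟨⟨⟨f, k, hf_box, hf, hf0, hfk, -⟩, f', k', hf'_box, hf', hf'0, hf'k, -⟩,
    g, l, hg_box, hg, hg0, hgl, -⟩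
  simp only [Set.mem_ofPred_eq] at hf0 hfk hf'0 hf'k hg0 hgl
  have hbox : ∀ {x₁ x₂ : ℤ}, 0 ≤ x₁ → x₂ ≤ 2 * m - n → box x₁ x₂ 0 n ⊆ box 0 (2 * m - n) 0 n :=
    fun h1 h2 v hv ↦ ⟨⟨h1.trans hv.1.1, hv.1.2.trans h2⟩, hv.2⟩
  have hfR : ∀ i ≤ k, f i ∈ box 0 (2 * m - n) 0 n :=
    fun i hi ↦ hbox le_rfl (by omega) (hf_box i hi)
  have hf'R : ∀ i ≤ k', f' i ∈ box 0 (2 * m - n) 0 n :=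
    fun i hi ↦ hbox (by omega) le_rfl (hf'_box i hi)
  have hgR : ∀ i ≤ l, g i ∈ box 0 (2 * m - n) 0 n :=
    fun i hi ↦ hbox (by omega) (by omega) (hg_box i hi)
  have hfg : X.Joined ω (box 0 (2 * m - n) 0 n) (f 0) (g 0) :=
    joined_of_horiz_of_vert (by omega) hf hg hfR hgR (fun i hi ↦ (hf_box i hi).2) (by omega)
      hfk.ge (fun i hi ↦ (hg_box i hi).1) hg0 hgl
  have hf'g : X.Joined ω (box 0 (2 * m - n) 0 n) (f' 0) (g 0) :=
    joined_of_horiz_of_vert (by omega) hf' hg hf'R hgR (fun i hi ↦ (hf'_box i hi).2) hf'0.le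
      (by omega) (fun i hi ↦ (hg_box i hi).1) hg0 hgl
  obtain ⟨F, K, hF0, hFK, hF_box, hF⟩ :=
    (hfg.trans (hf'g.symm.trans (.of_steps (Nat.zero_le k') hf' fun i _ hi ↦ hf'R i hi))
      ).exists_steps (hfR 0 (Nat.zero_le k))
  exact ⟨F, K, hF_box, hF, by simp [hF0, hf0], by simp [hFK, hf'k], by simp⟩

lemma crossProb_pow_three_le [IsFiniteMeasure μ] {m n : ℤ} (hn : 0 < n) (hmn : n ≤ m) :
    X.crossProb m n ^ 3 ≤ X.crossProb (2 * m - n) n := by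
  have hleft := X.incr_pathEvent {v | v.1 = 0} {v | v.1 = m} (finite_box 0 m 0 n)
  have hright := X.incr_pathEvent {v | v.1 = m - n} {v | v.1 = 2 * m - n}
    (finite_box (m - n) (2 * m - n) 0 n)
  have hvert := X.incr_pathEvent {v | v.2 = 0} {v | v.2 = n} (finite_box (m - n) m 0 n)
  have hright_eq : μ.real (X.horizCrossing (m - n) (2 * m - n) 0 n ⊤) = X.crossProb m n := by
    rw [measureReal_horizCrossing, crossProb]
    ring_nf
  have hvert_le : X.crossProb m n ≤ μ.real (X.vertCrossing (m - n) m 0 n ⊤) := by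
    rw [measureReal_vertCrossing]
    exact crossProb_mono (by omega) (by omega) (by omega)
  have h0 := crossProb_nonneg (X := X) m n
  calc X.crossProb m n ^ 3 = X.crossProb m n * X.crossProb m n * X.crossProb m n := by ring
    _ ≤ μ.real (X.horizCrossing 0 m 0 n ⊤) *
          μ.real (X.horizCrossing (m - n) (2 * m - n) 0 n ⊤) *
          μ.real (X.vertCrossing (m - n) m 0 n ⊤) := by
        rw [hright_eq]
        exact mul_le_mul_of_nonneg_left hvert_le (mul_nonneg h0 h0)
    _ ≤ μ.real (X.horizCrossing 0 m 0 n ⊤ ∩ X.horizCrossing (m - n) (2 * m - n) 0 n ⊤) *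
          μ.real (X.vertCrossing (m - n) m 0 n ⊤) :=
        mul_le_mul_of_nonneg_right (X.fkg hleft hright) measureReal_nonneg
    _ ≤ μ.real (X.horizCrossing 0 m 0 n ⊤ ∩ X.horizCrossing (m - n) (2 * m - n) 0 n ⊤ ∩
          X.vertCrossing (m - n) m 0 n ⊤) := X.fkg (X.incr_inter hleft hright) hvert
    _ ≤ X.crossProb (2 * m - n) n := measureReal_mono (horizCrossing_glue hn hmn)

end CrossingModel

/-! ### Rare long crossings -/

namespace CrossingModel

variable {Ω : Type*} [MeasurableSpace Ω] {μ : Measure Ω} {X : CrossingModel μ} {ω : Ω}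

variable (X) in
/-- Rectangles of aspect ratio at least `1 + θ` are hardly ever crossed in the long direction. -/
def LongCrossingsVanish (θ : ℝ) : Prop :=
  ∀ ε : ℝ, 0 < ε → ∃ n₀ : ℤ, ∀ n, n₀ ≤ n → ∀ m : ℤ, (1 + θ) * n ≤ m → X.crossProb m n ≤ ε

lemma LongCrossingsVanish.half [IsFiniteMeasure μ] {θ : ℝ} (hθ : 0 < θ)
    (h : X.LongCrossingsVanish θ) : X.LongCrossingsVanish (θ / 2) := by
  intro ε hε
  obtain ⟨n₀, hn₀⟩ := h (ε ^ 3) (by positivity)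
  refine ⟨max n₀ 1, fun n hn m hm ↦ ?_⟩
  have hn_pos : (0 : ℝ) < n := by exact_mod_cast (by omega : 0 < n)
  have hnm : n ≤ m := by
    have : (n : ℝ) ≤ m := by nlinarith
    exact_mod_cast this
  have hlong := hn₀ n (by omega) (2 * m - n) (by push_cast; nlinarith)
  exact le_of_pow_le_pow_left₀ three_ne_zero hε.le
    ((crossProb_pow_three_le (by omega) hnm).trans hlong)

lemma LongCrossingsVanish.mono {θ θ' : ℝ} (hθ : θ ≤ θ') (h : X.LongCrossingsVanish θ) :
    X.LongCrossingsVanish θ' := by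
  intro ε hε
  obtain ⟨n₀, hn₀⟩ := h ε hε
  refine ⟨max n₀ 0, fun n hn m hm ↦ hn₀ n (by omega) m (le_trans ?_ hm)⟩
  have : (0 : ℝ) ≤ n := by exact_mod_cast (by omega : 0 ≤ n)
  gcongr

lemma LongCrossingsVanish.of_pos [IsFiniteMeasure μ] {θ θ' : ℝ} (hθ : 0 < θ) (hθ' : 0 < θ')
    (h : X.LongCrossingsVanish θ) : X.LongCrossingsVanish θ' := by
  have hpow : ∀ k : ℕ, X.LongCrossingsVanish (θ / 2 ^ k) := by
    intro k
    induction k with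
    | zero => simpa using h
    | succ k ih =>
      rw [pow_succ, ← div_div]
      exact ih.half (by positivity)
  obtain ⟨k, hk⟩ := pow_unbounded_of_one_lt (θ / θ') one_lt_two
  refine (hpow k).mono ?_
  rw [div_lt_iff₀ hθ'] at hk
  rw [div_le_iff₀ (by positivity)]
  linarith

lemma LongCrossingsVanish.exists_crossProb_le [IsFiniteMeasure μ] {θ : ℝ} (hθ : 0 < θ)
    (h : X.LongCrossingsVanish θ) {N : ℕ} (hN : 0 < N) {ε : ℝ} (hε : 0 < ε) :
    ∃ n₀ : ℤ, ∀ n, n₀ ≤ n → ∀ m : ℤ, (N + 1) * n ≤ N * m → X.crossProb m n ≤ ε := by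
  have hN' : (0 : ℝ) < N := by exact_mod_cast hN
  obtain ⟨n₀, hn₀⟩ := h.of_pos hθ (one_div_pos.2 hN') ε hε
  refine ⟨n₀, fun n hn m hm ↦ hn₀ n hn m ?_⟩
  have hmn : ((N : ℝ) + 1) * n ≤ N * m := by exact_mod_cast hm
  rw [show (1 + 1 / (N : ℝ)) * n = (N + 1) * n / N by field_simp, div_le_iff₀ hN']
  linarith

/-! ### Crossings that start near a corner -/

variable (X) in
/-- Left-right crossings of `[0, T] × [y, y + b]` that start at height at most `y + q`. -/
def lowCrossing (T b q y : ℤ) : Set Ω :=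
  pathEvent X.rel (box 0 T y (y + b)) {v | v.1 = 0 ∧ v.2 ≤ y + q} {v | v.1 = T} ⊤

variable (X) in
/-- Left-right crossings of `[0, T] × [y, y + b]` that start at height at least `y + b - q`. -/
def highCrossing (T b q y : ℤ) : Set Ω :=
  pathEvent X.rel (box 0 T y (y + b)) {v | v.1 = 0 ∧ y + b - q ≤ v.2} {v | v.1 = T} ⊤

lemma measureReal_lowCrossing (T b q y : ℤ) :
    μ.real (X.lowCrossing T b q y) = μ.real (X.lowCrossing T b q 0) := by
  refine measureReal_pathEvent_congr (isLatticeIsometry_signedShift 1 1 0 y)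
    (finite_box _ _ _ _) ?_ ?_ ?_ <;> intro v <;> simp [box] <;> omega

lemma measureReal_highCrossing (T b q y : ℤ) :
    μ.real (X.highCrossing T b q y) = μ.real (X.lowCrossing T b q 0) := by
  refine measureReal_pathEvent_congr (isLatticeIsometry_signedShift 1 (-1) 0 (y + b))
    (finite_box _ _ _ _) ?_ ?_ ?_ <;> intro v <;> simp [box] <;> omega

/-- A path that starts low on the left side and climbs above a high crossing meets it. -/
lemma joined_of_highCrossing {T b q y z : ℤ} (hT : 0 < T) {f g : ℕ → V} {j l : ℕ}
    (hg_box : ∀ i ≤ l, g i ∈ box 0 T y (y + b)) (hg : Steps (X.rel ω) g 0 l)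
    (hg_start : (g 0).1 = 0 ∧ y + b - q ≤ (g 0).2) (hg_end : (g l).1 = T)
    (hf_box : ∀ i ≤ j, f i ∈ box 0 T z (z + b)) (hf : Steps (X.rel ω) f 0 j)
    (hf_start : (f 0).1 = 0 ∧ (f 0).2 ≤ z + q) (hz : z + 2 * q < y + b)
    (hf_end : y + b ≤ (f j).2) :
    X.Joined ω {v | 0 ≤ v.1 ∧ v.1 ≤ T} (g 0) (f 0) := by
  refine joined_of_meeting (Nat.zero_le l) (by omega) hg hf (fun i _ hi ↦ (hg_box i hi).1)
    (fun i hi ↦ (hf_box i hi).1) (fun i _ hi ↦ hg_start.1.trans_le (hg_box i hi).1.1)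
    (fun i hi ↦ ?_) (.inr ⟨by omega, by omega⟩) fun i _ hi ↦ (hg_box i hi).2.2.trans hf_end
  rw [hg_start.1, hg_end]
  exact (hf_box i hi).1

lemma mem_vertCrossing_of_joined {x₁ x₂ y₁ y₂ : ℤ} {u v : V}
    (h : X.Joined ω {w | x₁ ≤ w.1 ∧ w.1 ≤ x₂} u v) (hu : x₁ ≤ u.1 ∧ u.1 ≤ x₂) (hy : y₁ ≤ y₂)
    (hu₂ : u.2 ≤ y₁) (hv₂ : y₂ ≤ v.2) : ω ∈ X.vertCrossing x₁ x₂ y₁ y₂ ⊤ := by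
  obtain ⟨f, k, rfl, rfl, hmem, hf⟩ := h.exists_steps hu
  exact mem_vertCrossing (Nat.zero_le k) hf hy (fun i _ hi ↦ hmem i hi) (.inl ⟨hu₂, hv₂⟩) (by simp)

/-- As the flatter boxes are not crossed, the `m`-th low crossing climbs so high that it meets the
`m`-th high crossing, which the next low crossing meets as well; so all of them are joined. -/
lemma mem_vertCrossing_of_low_of_high {T b q u : ℤ} {K : ℕ} (hT : 0 < T) (hu : 0 < u)
    (hq : 2 * u + 2 * q < b) (hq0 : 0 ≤ q) (hK : 0 < K)
    (hlow : ∀ m : ℕ, m < K → ω ∈ X.lowCrossing T b q ((m + 1) * u))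
    (hhigh : ∀ m : ℕ, m < K → ω ∈ X.highCrossing T b q (m * u))
    (hshort : ∀ m : ℕ, m < K → ω ∉ X.horizCrossing 0 T ((m + 1) * u) ((m + 1) * u + (b - u)) ⊤) :
    ω ∈ X.vertCrossing 0 T b (b + (K - 1) * u) ⊤ := by
  choose f k hf_box hf hf_start hf_end _ using hlow
  have hclimb : ∀ (m : ℕ) (hm : m < K), ∃ j ≤ k m hm, m * u + b < (f m hm j).2 := by
    intro m hm
    obtain ⟨j, -, hj, hlt⟩ := exists_gt_of_notMem_horizCrossing (Nat.zero_le (k m hm)) (hf m hm)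
      hT.le (fun i _ hi ↦ (hf_box m hm i hi).2.1)
      (.inl ⟨(hf_start m hm).1.le, (hf_end m hm).ge⟩) (hshort m hm)
    exact ⟨j, hj, by linarith⟩
  have hjoin : ∀ (m : ℕ) (hm : m < K),
      X.Joined ω {v | 0 ≤ v.1 ∧ v.1 ≤ T} (f 0 hK 0) (f m hm 0) := by
    intro m
    induction m with
    | zero => exact fun _ ↦ .refl
    | succ m ih =>
      intro hm
      obtain ⟨g, l, hg_box, hg, hg_start, hg_end, -⟩ := hhigh m (by omega)
      obtain ⟨i, hi, hi_gt⟩ := hclimb m (by omega)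
      obtain ⟨j, hj, hj_gt⟩ := hclimb (m + 1) hm
      push_cast at hj_gt hf_start hf_box
      have hprev := joined_of_highCrossing hT hg_box hg hg_start hg_end
        (fun i' hi' ↦ hf_box m _ i' (hi'.trans hi)) ((hf m _).mono le_rfl hi) (hf_start m _)
        (by linarith) hi_gt.le
      have hnext := joined_of_highCrossing hT hg_box hg hg_start hg_end
        (fun j' hj' ↦ hf_box (m + 1) hm j' (hj'.trans hj)) ((hf (m + 1) hm).mono le_rfl hj)
        (hf_start (m + 1) hm) (by push_cast; linarith) (by linarith)
      exact (ih _).trans (hprev.symm.trans hnext)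
  obtain ⟨j, hj, hj_gt⟩ := hclimb (K - 1) (by omega)
  have hfj := Joined.of_steps (X := X) (R := {v | 0 ≤ v.1 ∧ v.1 ≤ T}) (Nat.zero_le j)
    ((hf (K - 1) (by omega)).mono le_rfl hj)
    fun i _ hi ↦ (hf_box (K - 1) (by omega) i (hi.trans hj)).1
  have hstart := (hf_start 0 hK).2
  push_cast [Nat.cast_pred hK] at hj_gt hstart
  have hK' : (0 : ℤ) ≤ (K : ℤ) - 1 := by omega
  exact mem_vertCrossing_of_joined ((hjoin _ _).trans hfj) (hf_box 0 hK 0 (Nat.zero_le _)).1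
    (le_add_of_nonneg_right (mul_nonneg hK' hu.le)) (by linarith) (by linarith)

lemma incr_lowCrossing {T b q y : ℤ} : X.Incr (X.lowCrossing T b q y) :=
  X.incr_pathEvent _ _ (finite_box _ _ _ _)

lemma incr_highCrossing {T b q y : ℤ} : X.Incr (X.highCrossing T b q y) :=
  X.incr_pathEvent _ _ (finite_box _ _ _ _)

lemma measureReal_lowCrossing_pow_le [IsProbabilityMeasure μ] {T b q u : ℤ} {K : ℕ} (hT : 0 < T)
    (hu : 0 < u) (hq : 2 * u + 2 * q < b) (hq0 : 0 ≤ q) (hK : 0 < K) :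
    μ.real (X.lowCrossing T b q 0) ^ (2 * K) ≤
      X.crossProb ((K - 1) * u) T + K * X.crossProb T (b - u) := by
  set A : ℕ → Set Ω := fun m ↦
    X.lowCrossing T b q ((m + 1) * u) ∩ X.highCrossing T b q (m * u)
  have hA : ∀ m, X.Incr (A m) := fun m ↦ X.incr_inter incr_lowCrossing incr_highCrossing
  have hA_ge : ∀ m, μ.real (X.lowCrossing T b q 0) ^ 2 ≤ μ.real (A m) := by
    intro m
    have h := X.fkg (incr_lowCrossing (X := X) (T := T) (b := b) (q := q) (y := (m + 1) * u))
      (incr_highCrossing (T := T) (b := b) (q := q) (y := m * u))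
    rwa [measureReal_lowCrossing, measureReal_highCrossing, ← sq] at h
  have hsub : (⋂ m ∈ Finset.range K, A m) ⊆ X.vertCrossing 0 T b (b + (K - 1) * u) ⊤ ∪
      ⋃ m ∈ Finset.range K, X.horizCrossing 0 T ((m + 1) * u) ((m + 1) * u + (b - u)) ⊤ := by
    intro ω hω
    simp only [Set.mem_iInter, Finset.mem_range] at hω
    by_cases hshort : ∀ m : ℕ, m < K →
        ω ∉ X.horizCrossing 0 T ((m + 1) * u) ((m + 1) * u + (b - u)) ⊤
    · exact .inl (mem_vertCrossing_of_low_of_high hT hu hq hq0 hK (fun m hm ↦ (hω m hm).1)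
        (fun m hm ↦ (hω m hm).2) hshort)
    · push Not at hshort
      simpa using Or.inr hshort
  calc μ.real (X.lowCrossing T b q 0) ^ (2 * K)
      = ∏ _m ∈ Finset.range K, μ.real (X.lowCrossing T b q 0) ^ 2 := by simp [pow_mul]
    _ ≤ ∏ m ∈ Finset.range K, μ.real (A m) :=
        Finset.prod_le_prod (fun _ _ ↦ by positivity) fun m _ ↦ hA_ge m
    _ ≤ μ.real (⋂ m ∈ Finset.range K, A m) := prod_measureReal_le_biInter _ hA
    _ ≤ _ := (measureReal_mono hsub).trans (measureReal_union_le _ _)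
    _ ≤ X.crossProb ((K - 1) * u) T + K * X.crossProb T (b - u) := by
        refine add_le_add (le_of_eq ?_) ((measureReal_biUnion_finset_le _ _).trans (le_of_eq ?_))
        · rw [measureReal_vertCrossing]
          congr 1 <;> ring
        · simp only [measureReal_horizCrossing 0 T, sub_zero, add_sub_cancel_left]
          simp [crossProb]

variable (X) in
/-- Paths in `[0, s] × [y, z]` from the line at height `y` to the line at height `z` (where `y ≤ z`
or `z ≤ y`) that start within distance `q` of a vertical side. -/
def sideCrossing (s q y z : ℤ) : Set Ω :=
  pathEvent X.rel (box 0 s (min y z) (max y z)) {v | v.2 = y ∧ (v.1 ≤ q ∨ s - q ≤ v.1)}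
    {v | v.2 = z} ⊤

lemma measureReal_sideCrossing_le [IsFiniteMeasure μ] {T : ℤ} (hT : 0 ≤ T) (s q y : ℤ) (d : ℤˣ) :
    μ.real (X.sideCrossing s q y (y + d * T)) ≤ 2 * μ.real (X.lowCrossing T s q 0) := by
  have hd : (d : ℤ) = 1 ∨ (d : ℤ) = -1 := by
    rcases Int.units_eq_one_or d with rfl | rfl <;> simp
  have hleft : μ.real (pathEvent X.rel (box 0 s (min y (y + d * T)) (max y (y + d * T)))
      {v | v.2 = y ∧ v.1 ≤ q} {v | v.2 = y + d * T} ⊤) = μ.real (X.lowCrossing T s q 0) := by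
    refine measureReal_pathEvent_congr (isLatticeIsometry_swap_signedShift 1 d 0 y)
      (finite_box _ _ _ _) ?_ ?_ ?_ <;> intro v <;> rcases hd with hd | hd <;>
      simp [box, hd] <;> omega
  have hright : μ.real (pathEvent X.rel (box 0 s (min y (y + d * T)) (max y (y + d * T)))
      {v | v.2 = y ∧ s - q ≤ v.1} {v | v.2 = y + d * T} ⊤) = μ.real (X.lowCrossing T s q 0) := by
    refine measureReal_pathEvent_congr (isLatticeIsometry_swap_signedShift (-1) d s y)
      (finite_box _ _ _ _) ?_ ?_ ?_ <;> intro v <;> rcases hd with hd | hd <;>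
      simp [box, hd] <;> omega
  have hunion : X.sideCrossing s q y (y + d * T) =
      pathEvent X.rel (box 0 s (min y (y + d * T)) (max y (y + d * T)))
        {v | v.2 = y ∧ v.1 ≤ q} {v | v.2 = y + d * T} ⊤ ∪
      pathEvent X.rel (box 0 s (min y (y + d * T)) (max y (y + d * T)))
        {v | v.2 = y ∧ s - q ≤ v.1} {v | v.2 = y + d * T} ⊤ := by
    rw [sideCrossing, ← pathEvent_union_left]
    congr 1
    exact Set.ext fun v ↦ and_or_left
  rw [hunion, two_mul]
  refine (measureReal_union_le _ _).trans ?_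
  rw [hleft, hright]

end CrossingModel

/-! ### Short crossings of long slabs -/

lemma exists_lowest_window {c : ℕ → ℤ} {i j : ℕ} {u : ℤ} (hu : 0 < u) (hij : i ≤ j)
    (hc : ∀ m, i ≤ m → m ≤ j → 0 ≤ c m) :
    ∃ w : ℕ, (∀ m, i ≤ m → m ≤ j → w * u ≤ c m) ∧ ∃ m, i ≤ m ∧ m ≤ j ∧ c m < (w + 1) * u := by
  obtain ⟨m₀, hm₀, hmin⟩ := Finset.exists_min_image (Finset.Icc i j) c ⟨i, by simp [hij]⟩
  rw [Finset.mem_Icc] at hm₀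
  refine ⟨(c m₀ / u).toNat, fun m him hmj ↦ ?_, m₀, hm₀.1, hm₀.2, ?_⟩ <;>
    rw [Int.toNat_of_nonneg (Int.ediv_nonneg (hc m₀ hm₀.1 hm₀.2) hu.le)]
  · exact (Int.ediv_mul_le _ hu.ne').trans (hmin m (Finset.mem_Icc.2 ⟨him, hmj⟩))
  · exact Int.lt_ediv_add_one_mul_self _ hu

lemma exists_crossing_of_le_of_ge {c : ℕ → ℤ} {i j m₀ m₁ : ℕ} {α β : ℤ} (hαβ : α ≤ β)
    (hc : ∀ m, i ≤ m → m < j → |c m - c (m + 1)| ≤ 1) (hm₀ : i ≤ m₀ ∧ m₀ ≤ j)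
    (hm₁ : i ≤ m₁ ∧ m₁ ≤ j) (h₀ : c m₀ ≤ α) (h₁ : β ≤ c m₁) :
    ∃ i' j', i ≤ i' ∧ i' ≤ j' ∧ j' ≤ j ∧ ((c i' = α ∧ c j' = β) ∨ (c i' = β ∧ c j' = α)) ∧
      ∀ m, i' ≤ m → m ≤ j' → α ≤ c m ∧ c m ≤ β := by
  rcases le_total m₀ m₁ with h | h
  · obtain ⟨i', j', hi', hij', hj', hα, hβ, hmem⟩ := exists_upcrossing h hαβ
      (fun m h1 h2 ↦ hc m (by omega) (by omega)) h₀ h₁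
    exact ⟨i', j', by omega, hij', by omega, .inl ⟨hα, hβ⟩, hmem⟩
  · obtain ⟨i', j', hi', hij', hj', hβ, hα, hmem⟩ := exists_downcrossing h hαβ
      (fun m h1 h2 ↦ hc m (by omega) (by omega)) h₁ h₀
    exact ⟨i', j', by omega, hij', by omega, .inr ⟨hβ, hα⟩, hmem⟩

/-- The piece of `f` between times `i` and `j` leads from within distance `a` of one vertical side
of the strip `[0, s] × ℤ` to within distance `a` of the other. -/
def Traverses (s a : ℤ) (f : ℕ → V) (i j : ℕ) : Prop :=
  ((f i).1 ≤ a ∧ s - a ≤ (f j).1) ∨ (s - a ≤ (f i).1 ∧ (f j).1 ≤ a)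

/-- The distance from the sides, in units of `u`, of the `n`-th generation of traversals. -/
def level (n : ℕ) : ℤ := 4 * (2 ^ n - 1)

lemma level_succ_mul (n : ℕ) (u : ℤ) : level (n + 1) * u = 2 * (level n * u) + 4 * u := by
  rw [level, level, pow_succ]
  ring

lemma level_nonneg (n : ℕ) : 0 ≤ level n := by
  have := one_le_pow₀ (n := n) (one_le_two (α := ℤ))
  rw [level]
  omega

lemma level_mono : Monotone level := fun m n h ↦ by
  have := pow_le_pow_right₀ (one_le_two (α := ℤ)) h
  simp only [level]
  omega

lemma HasPath.shorten {E : V → V → Prop} {R A B : Set V} {f : ℕ → V} {i j k : ℕ}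
    (hR : ∀ m ≤ k, f m ∈ R) (hf : Steps E f 0 k) (hA : f 0 ∈ A) (hB : f k ∈ B) (hij : i < j)
    (hjk : j ≤ k) (heq : f i = f j) : HasPath E R A B k := by
  refine ⟨fun m ↦ if m ≤ i then f m else f (m + (j - i)), k - (j - i), fun m hm ↦ ?_,
    fun m _ hm ↦ ?_, by simpa using hA, ?_, by exact_mod_cast (by omega)⟩
  · by_cases h : m ≤ i
    · simpa only [if_pos h] using hR m (by omega)
    · simpa only [if_neg h] using hR _ (by omega)
  · rcases lt_trichotomy m i with h | rfl | h
    · simpa only [if_pos h.le, if_pos (show m + 1 ≤ i from h)] using hf m (by omega) (by omega)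
    · simpa only [le_refl, if_true, if_neg (show ¬ m + 1 ≤ m by omega), heq,
        show m + 1 + (j - m) = j + 1 by omega] using hf j (by omega) (by omega)
    · simpa only [if_neg (show ¬ m ≤ i by omega), if_neg (show ¬ m + 1 ≤ i by omega),
        show m + 1 + (j - i) = m + (j - i) + 1 by omega] using hf _ (by omega) (by omega)
  · by_cases h : k - (j - i) ≤ i
    · obtain rfl : j = k := by omega
      simpa only [show j - (j - i) = i by omega, le_refl, if_true, heq] using hB
    · simpa only [if_neg h, show k - (j - i) + (j - i) = k by omega] using hB

lemma HasPath.of_ncard_le {E : V → V → Prop} {R A B : Set V} {ℓ : ℕ} (hR : R.Finite)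
    (hℓ : R.ncard ≤ ℓ) (h : HasPath E R A B ⊤) : HasPath E R A B ℓ := by
  have hbound : ∀ n : ℕ, HasPath E R A B n → HasPath E R A B ℓ := by
    intro n
    induction n using Nat.strong_induction_on with
    | _ n ih =>
      rintro ⟨f, k, hfR, hf, hA, hB, hk⟩
      rcases lt_or_ge k ℓ with hkℓ | hkℓ
      · exact ⟨f, k, hfR, hf, hA, hB, by exact_mod_cast hkℓ⟩
      obtain ⟨i, hi, j, hj, hij, heq⟩ := Set.exists_ne_map_eq_of_ncard_lt_of_maps_to
        (s := Set.Iic k) (by simpa [Set.ncard_eq_toFinset_card'] using by omega) hfR hR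
      have hkn : k < n := by exact_mod_cast hk
      rcases hij.lt_or_gt with hij | hij
      · exact ih k hkn (.shorten hfR hf hA hB hij hj heq)
      · exact ih k hkn (.shorten hfR hf hA hB hij hi heq.symm)
  obtain ⟨f, k, hfR, hf, hA, hB, -⟩ := h
  exact hbound (k + 1) ⟨f, k, hfR, hf, hA, hB, by exact_mod_cast k.lt_succ_self⟩

namespace CrossingModel

variable {Ω : Type*} [MeasurableSpace Ω] {μ : Measure Ω} {X : CrossingModel μ} {ω : Ω}

lemma start_mem_Ioo_of_notMem_sideCrossing {s q y z : ℤ} {f : ℕ → V} {i j : ℕ} (hij : i ≤ j)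
    (hf : Steps (X.rel ω) f i j)
    (hbox : ∀ m, i ≤ m → m ≤ j → f m ∈ box 0 s (min y z) (max y z)) (hi : (f i).2 = y)
    (hj : (f j).2 = z) (hω : ω ∉ X.sideCrossing s q y z) : (f i).1 ∈ Set.Ioo q (s - q) := by
  by_contra h
  rw [Set.mem_Ioo] at h
  exact hω (.of_steps hij hf hbox ⟨hi, by omega⟩ hj (ENat.natCast_lt_top _))

lemma end_mem_Ioo_of_notMem_sideCrossing {s q y z : ℤ} {f : ℕ → V} {i j : ℕ} (hij : i ≤ j)
    (hf : Steps (X.rel ω) f i j)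
    (hbox : ∀ m, i ≤ m → m ≤ j → f m ∈ box 0 s (min y z) (max y z)) (hi : (f i).2 = y)
    (hj : (f j).2 = z) (hω : ω ∉ X.sideCrossing s q z y) : (f j).1 ∈ Set.Ioo q (s - q) := by
  by_contra h
  rw [Set.mem_Ioo] at h
  refine hω (.symm X.rel_symm (.of_steps hij hf ?_ hi ⟨hj, by omega⟩ (ENat.natCast_lt_top _)))
  simpa only [min_comm, max_comm] using hbox

variable (X) in
/-- The events, each unlikely if long crossings are, whose absence forces a traversal of
`[0, s] × ℤ` with lowest point in the `j`-th window of height `u` to contain further traversals;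
see `exists_traverses`. -/
def badEvent (s t u a j : ℤ) : Set Ω :=
  X.horizCrossing a (s - a) (j * u) (j * u + (s - 2 * a - u)) ⊤ ∪
  (X.sideCrossing s (3 * t) ((j + 1) * u) ((j + 1) * u + (s - 2 * a - 2 * u)) ∪
    X.sideCrossing s (3 * t) ((j + 1) * u + (s - 2 * a - 2 * u)) ((j + 1) * u)) ∪
  (X.vertCrossing (2 * a + 4 * u) s ((j + 1) * u) ((j + 1) * u + (s - 2 * a - 2 * u)) ⊤ ∪
    X.vertCrossing 0 (s - (2 * a + 4 * u)) ((j + 1) * u) ((j + 1) * u + (s - 2 * a - 2 * u)) ⊤)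

/-- A vertical crossing of an almost square part of a strip comes close to both sides. -/
lemma exists_traverses_of_vertical {s b y T : ℤ} {f : ℕ → V} {i j : ℕ} (hij : i ≤ j)
    (hT : 0 ≤ T) (hf : Steps (X.rel ω) f i j) (hx : ∀ m, i ≤ m → m ≤ j → 0 ≤ (f m).1 ∧ (f m).1 ≤ s)
    (hends : ((f i).2 ≤ y ∧ y + T ≤ (f j).2) ∨ (y + T ≤ (f i).2 ∧ (f j).2 ≤ y))
    (hright : ω ∉ X.vertCrossing b s y (y + T) ⊤)
    (hleft : ω ∉ X.vertCrossing 0 (s - b) y (y + T) ⊤) :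
    ∃ i' j', i ≤ i' ∧ i' ≤ j' ∧ j' ≤ j ∧ Traverses s b f i' j' := by
  obtain ⟨m, him, hmj, hm⟩ : ∃ m, i ≤ m ∧ m ≤ j ∧ (f m).1 ≤ b := by
    by_contra! hcon
    exact hright (mem_vertCrossing hij hf (by omega)
      (fun m h1 h2 ↦ ⟨(hcon m h1 h2).le, (hx m h1 h2).2⟩) hends (ENat.natCast_lt_top _))
  obtain ⟨m', him', hmj', hm'⟩ : ∃ m, i ≤ m ∧ m ≤ j ∧ s - b ≤ (f m).1 := by
    by_contra! hcon
    exact hleft (mem_vertCrossing hij hf (by omega)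
      (fun m h1 h2 ↦ ⟨(hx m h1 h2).1, (hcon m h1 h2).le⟩) hends (ENat.natCast_lt_top _))
  rcases le_total m m' with h | h
  · exact ⟨m, m', him, h, hmj', .inl ⟨hm, hm'⟩⟩
  · exact ⟨m', m, him', h, hmj, .inr ⟨hm', hm⟩⟩

lemma exists_traverses {s t u a : ℤ} {J : ℕ} (hu : 0 < u) (ha : 0 ≤ a) (hat : 2 * a + 4 * u ≤ t)
    (hts : 10 * t ≤ s) (hJ : 4 * s < J * u) (hω : ∀ j : ℕ, j < J → ω ∉ X.badEvent s t u a j)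
    {f : ℕ → V} {i j : ℕ} (hij : i ≤ j) (hf : Steps (X.rel ω) f i j)
    (hbox : ∀ m, i ≤ m → m ≤ j → f m ∈ box 0 s 0 (4 * s)) (htrav : Traverses s a f i j) :
    ∃ i₁ i₂ i₃ i₄, i ≤ i₁ ∧ i₁ ≤ i₂ ∧ i₂ ≤ i₃ ∧ i₃ ≤ i₄ ∧ i₄ ≤ j ∧
      (f i₁).1 ∈ Set.Ioo (3 * t) (s - 3 * t) ∧ (f i₄).1 ∈ Set.Ioo (3 * t) (s - 3 * t) ∧
      Traverses s (2 * a + 4 * u) f i₂ i₃ := by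
  obtain ⟨w, hw_min, m₀, him₀, hm₀j, hm₀⟩ := exists_lowest_window (c := fun m ↦ (f m).2) hu hij
    fun m h1 h2 ↦ (hbox m h1 h2).2.1
  have hwJ : w < J := by
    have hwu := (hw_min m₀ him₀ hm₀j).trans (hbox m₀ him₀ hm₀j).2.2
    exact_mod_cast lt_of_mul_lt_mul_right (hwu.trans_lt hJ) hu.le
  have hgood := hω w hwJ
  set T := s - 2 * a - 2 * u
  simp only [badEvent, Set.mem_union, not_or] at hgood
  obtain ⟨⟨hflat, hside_up, hside_down⟩, hright, hleft⟩ := hgood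
  obtain ⟨m₁, him₁, hm₁j, hm₁⟩ := exists_gt_of_notMem_horizCrossing hij hf (by omega) hw_min htrav
    hflat
  obtain ⟨i₁, i₄, hi₁, hi₁₄, hi₄, hends, hmem⟩ := exists_crossing_of_le_of_ge
    (c := fun m ↦ (f m).2) (α := (w + 1) * u) (β := (w + 1) * u + T) (by omega)
    (fun m h1 h2 ↦ (X.rel_near (hf m h1 h2)).2) ⟨him₀, hm₀j⟩ ⟨him₁, hm₁j⟩ hm₀.le (by linarith)
  have hf' := hf.mono hi₁ hi₄
  have hx : ∀ m, i₁ ≤ m → m ≤ i₄ → 0 ≤ (f m).1 ∧ (f m).1 ≤ s :=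
    fun m h1 h2 ↦ (hbox m (by omega) (by omega)).1
  obtain ⟨i₂, i₃, hi₂, hi₂₃, hi₃, htrav'⟩ := exists_traverses_of_vertical hi₁₄ (by omega) hf' hx
    (hends.imp (And.imp Eq.le Eq.ge) (And.imp Eq.ge Eq.le)) hright hleft
  refine ⟨i₁, i₂, i₃, i₄, hi₁, hi₂, hi₂₃, hi₃, hi₄, ?_, ?_, htrav'⟩ <;>
    rcases hends with ⟨h1, h4⟩ | ⟨h1, h4⟩
  · exact start_mem_Ioo_of_notMem_sideCrossing hi₁₄ hf'
      (fun m h h' ↦ ⟨hx m h h', by have := hmem m h h'; omega⟩) h1 h4 hside_up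
  · exact start_mem_Ioo_of_notMem_sideCrossing hi₁₄ hf'
      (fun m h h' ↦ ⟨hx m h h', by have := hmem m h h'; omega⟩) h1 h4 hside_down
  · exact end_mem_Ioo_of_notMem_sideCrossing hi₁₄ hf'
      (fun m h h' ↦ ⟨hx m h h', by have := hmem m h h'; omega⟩) h1 h4 hside_down
  · exact end_mem_Ioo_of_notMem_sideCrossing hi₁₄ hf'
      (fun m h h' ↦ ⟨hx m h h', by have := hmem m h h'; omega⟩) h1 h4 hside_up

/-- If the slab `[z₁, z₂]` has no crossing with fewer than `ℓ` steps, then each generation of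
traversals costs `ℓ` additional steps: before or after the inner traversal, the path walks from
the middle of the strip to the far side of the slab. -/
lemma mul_le_of_traverses {s t u z₁ z₂ : ℤ} {J L : ℕ} (hu : 0 < u) (hLt : level L * u ≤ t)
    (hts : 10 * t ≤ s) (ht : 10 ≤ t) (hst : s < 10 * t + 10) (hJ : 4 * s < J * u)
    (hω : ∀ n < L, ∀ j : ℕ, j < J → ω ∉ X.badEvent s t u (level n * u) j)
    (hz : (z₁ = t ∧ z₂ = 2 * t) ∨ (z₁ = 8 * t ∧ z₂ = 9 * t)) {ℓ : ℕ}
    (hslab : ω ∉ X.horizCrossing z₁ z₂ 0 (4 * s) ℓ) {f : ℕ → V} {k n i j : ℕ} (hkn : k + n = L)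
    (hij : i ≤ j) (hf : Steps (X.rel ω) f i j)
    (hbox : ∀ m, i ≤ m → m ≤ j → f m ∈ box 0 s 0 (4 * s))
    (htrav : Traverses s (level n * u) f i j) : k * ℓ ≤ j - i := by
  induction k generalizing n i j with
  | zero => simp
  | succ k ih =>
    have hlevel : level (n + 1) * u ≤ t :=
      (mul_le_mul_of_nonneg_right (level_mono (by omega : n + 1 ≤ L)) hu.le).trans hLt
    obtain ⟨i₁, i₂, i₃, i₄, hi₁, hi₁₂, hi₂₃, hi₃₄, hi₄, hmid₁, hmid₄, htrav'⟩ :=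
      exists_traverses hu (mul_nonneg (level_nonneg n) hu.le) (by rwa [← level_succ_mul]) hts hJ
        (hω n (by omega)) hij hf hbox htrav
    rw [← level_succ_mul] at htrav'
    have hinner := ih (n := n + 1) (by omega) hi₂₃ (hf.mono (by omega) (by omega))
      (fun m h1 h2 ↦ hbox m (by omega) (by omega)) htrav'
    have hcost : ∀ p q : ℕ, i ≤ p → p ≤ q → q ≤ j →
        (((f p).1 ≤ z₁ ∧ z₂ ≤ (f q).1) ∨ (z₂ ≤ (f p).1 ∧ (f q).1 ≤ z₁)) → ℓ ≤ q - p := by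
      intro p q hip hpq hqj hends
      by_contra! hlt
      exact hslab (mem_horizCrossing hpq (hf.mono hip hqj) (by omega)
        (fun m h1 h2 ↦ (hbox m (by omega) (by omega)).2) hends (by exact_mod_cast hlt))
    rw [Set.mem_Ioo] at hmid₁ hmid₄
    have hextra : ℓ ≤ i₂ - i₁ ∨ ℓ ≤ i₄ - i₃ := by
      rcases hz with ⟨rfl, rfl⟩ | ⟨rfl, rfl⟩ <;> rcases htrav' with ⟨h2, h3⟩ | ⟨h2, h3⟩
      · exact .inl (hcost i₁ i₂ hi₁ hi₁₂ (by omega) (by omega))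
      · exact .inr (hcost i₃ i₄ (by omega) hi₃₄ hi₄ (by omega))
      · exact .inr (hcost i₃ i₄ (by omega) hi₃₄ hi₄ (by omega))
      · exact .inl (hcost i₁ i₂ hi₁ hi₁₂ (by omega) (by omega))
    rw [Nat.succ_mul]
    omega

lemma horizCrossing_subset_inter_union {s t u : ℤ} {J L : ℕ} (hu : 0 < u)
    (hLt : level L * u ≤ t) (hts : 10 * t ≤ s) (ht : 10 ≤ t) (hst : s < 10 * t + 10)
    (hJ : 4 * s < J * u) (ℓ : ℕ) :
    X.horizCrossing 0 s 0 (4 * s) ((L * ℓ : ℕ) : ℕ∞) ⊆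
      (X.horizCrossing t (2 * t) 0 (4 * s) ℓ ∩ X.horizCrossing (8 * t) (9 * t) 0 (4 * s) ℓ) ∪
      ⋃ n ∈ Finset.range L, ⋃ j ∈ Finset.range J, X.badEvent s t u (level n * u) (j : ℕ) := by
  rintro ω ⟨f, k, hbox, hf, h0, hk, hkL⟩
  by_cases hω : ∀ n < L, ∀ j : ℕ, j < J → ω ∉ X.badEvent s t u (level n * u) j
  · have htrav : Traverses s (level 0 * u) f 0 k := by
      simp only [Set.mem_ofPred_eq] at h0 hk
      simp [Traverses, level, h0, hk]
    have hslab : ∀ {z₁ z₂ : ℤ}, (z₁ = t ∧ z₂ = 2 * t) ∨ (z₁ = 8 * t ∧ z₂ = 9 * t) →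
        ω ∈ X.horizCrossing z₁ z₂ 0 (4 * s) ℓ := by
      intro z₁ z₂ hz
      by_contra hno
      have := mul_le_of_traverses hu hLt hts ht hst hJ hω hz hno (add_zero L) (Nat.zero_le k) hf
        (fun m _ hm ↦ hbox m hm) htrav
      have : k < L * ℓ := by exact_mod_cast hkL
      omega
    exact .inl ⟨hslab (.inl ⟨rfl, rfl⟩), hslab (.inr ⟨rfl, rfl⟩)⟩
  · push Not at hω
    simpa using Or.inr hω

lemma horizCrossing_subset_biUnion {t : ℤ} (ht : 0 < t) (N : ℕ) (ℓ : ℕ∞) :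
    X.horizCrossing 0 t 0 (N * t) ℓ ⊆ ⋃ w ∈ Finset.range (N + 1),
      (X.horizCrossing 0 t (w * t) (w * t + 4 * t) ℓ ∪
        X.vertCrossing 0 t ((w + 1) * t) ((w + 3) * t) ⊤) := by
  rintro ω ⟨f, k, hbox, hf, h0, hk, hℓ⟩
  obtain ⟨w, hw_min, m₀, -, hm₀k, hm₀⟩ := exists_lowest_window (c := fun m ↦ (f m).2) ht
    (Nat.zero_le k) fun m _ hm ↦ (hbox m hm).2.1
  have hwN : w ≤ N := by
    exact_mod_cast le_of_mul_le_mul_right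
      ((hw_min m₀ (Nat.zero_le _) hm₀k).trans (hbox m₀ hm₀k).2.2) ht
  simp only [Set.mem_iUnion, Finset.mem_range, Nat.lt_succ_iff]
  refine ⟨w, hwN, ?_⟩
  by_cases hhigh : ∀ m ≤ k, (f m).2 ≤ w * t + 4 * t
  · exact .inl ⟨f, k, fun m hm ↦ ⟨(hbox m hm).1, hw_min m (Nat.zero_le m) hm, hhigh m hm⟩,
      hf, h0, hk, hℓ⟩
  · push Not at hhigh
    obtain ⟨m₁, hm₁k, hm₁⟩ := hhigh
    obtain ⟨i, j, -, hij, hjk, hends, -⟩ := exists_crossing_of_le_of_ge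
      (c := fun m ↦ (f m).2) (α := (w + 1) * t) (β := (w + 3) * t) (by linarith)
      (fun m h1 h2 ↦ (X.rel_near (hf m h1 h2)).2) ⟨Nat.zero_le _, hm₀k⟩ ⟨Nat.zero_le _, hm₁k⟩
      hm₀.le (by linarith)
    exact .inr (mem_vertCrossing hij (hf.mono (Nat.zero_le i) hjk) (by linarith)
      (fun m _ hm ↦ (hbox m (hm.trans hjk)).1)
      (hends.imp (And.imp Eq.le Eq.ge) (And.imp Eq.ge Eq.le)) (ENat.natCast_lt_top _))

lemma measureReal_horizCrossing_mul_le [IsFiniteMeasure μ] {t : ℤ} (ht : 0 < t) (N : ℕ)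
    (ℓ : ℕ∞) : μ.real (X.horizCrossing 0 t 0 (N * t) ℓ) ≤
      (N + 1) * (μ.real (X.horizCrossing 0 t 0 (4 * t) ℓ) + X.crossProb (2 * t) t) := by
  refine (measureReal_mono (horizCrossing_subset_biUnion ht N ℓ) (measure_ne_top _ _)).trans
    ((measureReal_biUnion_finset_le _ _).trans ?_)
  refine (Finset.sum_le_card_nsmul _ _ (μ.real (X.horizCrossing 0 t 0 (4 * t) ℓ) +
    X.crossProb (2 * t) t) fun w _ ↦ ?_).trans_eq (by
      rw [Finset.card_range, nsmul_eq_mul, Nat.cast_succ])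
  refine (measureReal_union_le _ _).trans_eq ?_
  rw [measureReal_horizCrossing, measureReal_vertCrossing]
  ring_nf

end CrossingModel

/-! ### Mixing forces short crossings to be rare -/

namespace CrossingModel

variable {Ω : Type*} [MeasurableSpace Ω] {μ : Measure Ω} {X : CrossingModel μ}

lemma LongCrossingsVanish.exists_lowCrossing_le [IsProbabilityMeasure μ] {θ : ℝ} (hθ : 0 < θ)
    (h : X.LongCrossingsVanish θ) {M : ℕ} (hM : 0 < M) {ε : ℝ} (hε : 0 < ε) :
    ∃ s₀ : ℤ, ∀ s, s₀ ≤ s → ∀ a u : ℤ, 0 ≤ a → 0 < u → 2 * a + 4 * u ≤ s / 10 → s < 2 * M * u →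
      μ.real (X.lowCrossing (s - 2 * a - 2 * u) s (3 * (s / 10)) 0) ≤ ε := by
  set K : ℕ := 2 * M + 1 with hK
  set η : ℝ := ε ^ (2 * K) / (K + 1) with hη
  have hη_pos : 0 < η := by positivity
  obtain ⟨n₁, hn₁⟩ := h.exists_crossProb_le hθ (by omega : 0 < 2 * M) hη_pos
  obtain ⟨n₂, hn₂⟩ := h.exists_crossProb_le hθ one_pos hη_pos
  refine ⟨max (2 * n₁) (2 * n₂), fun s hs a u ha hu hau hsu ↦ ?_⟩
  have hlow := measureReal_lowCrossing_pow_le (X := X) (T := s - 2 * a - 2 * u) (b := s)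
    (q := 3 * (s / 10)) (u := 2 * a + 3 * u) (K := K) (by omega) (by omega) (by omega) (by omega)
    (by omega)
  have hlong : X.crossProb ((K - 1) * (2 * a + 3 * u)) (s - 2 * a - 2 * u) ≤ η := by
    refine hn₂ _ (by omega) _ ?_
    have hMa : 0 ≤ M * a := by positivity
    have hs_nonneg : 0 ≤ s := by omega
    rw [hK]
    push_cast
    linarith
  have hshort : X.crossProb (s - 2 * a - 2 * u) (s - (2 * a + 3 * u)) ≤ η := by
    refine hn₁ _ (by omega) _ ?_
    push_cast
    linarith
  refine le_of_pow_le_pow_left₀ (by omega : 2 * K ≠ 0) hε.le (hlow.trans ?_)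
  calc X.crossProb ((K - 1) * (2 * a + 3 * u)) (s - 2 * a - 2 * u) +
        K * X.crossProb (s - 2 * a - 2 * u) (s - (2 * a + 3 * u))
      ≤ η + K * η := by gcongr
    _ = ε ^ (2 * K) := by rw [hη]; field_simp; ring

lemma measureReal_badEvent_le [IsFiniteMeasure μ] {s t u a : ℤ} (j : ℤ)
    (hT : 0 ≤ s - 2 * a - 2 * u) :
    μ.real (X.badEvent s t u a j) ≤ X.crossProb (s - 2 * a) (s - 2 * a - u) +
      4 * μ.real (X.lowCrossing (s - 2 * a - 2 * u) s (3 * t) 0) +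
      2 * X.crossProb (s - 2 * a - 2 * u) (s - 2 * a - 4 * u) := by
  have hflat : μ.real (X.horizCrossing a (s - a) (j * u) (j * u + (s - 2 * a - u)) ⊤) =
      X.crossProb (s - 2 * a) (s - 2 * a - u) := by
    rw [measureReal_horizCrossing, crossProb]
    ring_nf
  have hright : μ.real (X.vertCrossing (2 * a + 4 * u) s ((j + 1) * u)
      ((j + 1) * u + (s - 2 * a - 2 * u)) ⊤) =
      X.crossProb (s - 2 * a - 2 * u) (s - 2 * a - 4 * u) := by
    rw [measureReal_vertCrossing]
    ring_nf
  have hleft : μ.real (X.vertCrossing 0 (s - (2 * a + 4 * u)) ((j + 1) * u)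
      ((j + 1) * u + (s - 2 * a - 2 * u)) ⊤) =
      X.crossProb (s - 2 * a - 2 * u) (s - 2 * a - 4 * u) := by
    rw [measureReal_vertCrossing]
    ring_nf
  have hup := measureReal_sideCrossing_le (X := X) hT s (3 * t) ((j + 1) * u) 1
  have hdown := measureReal_sideCrossing_le (X := X) hT s (3 * t)
    ((j + 1) * u + (s - 2 * a - 2 * u)) (-1)
  simp only [Units.val_one, one_mul, Units.val_neg, neg_mul, add_neg_cancel_right] at hup hdown
  have hvert := hright ▸ hleft ▸ measureReal_union_le (μ := μ)
    (X.vertCrossing (2 * a + 4 * u) s ((j + 1) * u) ((j + 1) * u + (s - 2 * a - 2 * u)) ⊤)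
    (X.vertCrossing 0 (s - (2 * a + 4 * u)) ((j + 1) * u)
      ((j + 1) * u + (s - 2 * a - 2 * u)) ⊤)
  have hside := (measureReal_union_le _ _).trans (add_le_add hup hdown)
  refine (measureReal_union_le _ _).trans ?_
  refine (add_le_add ((measureReal_union_le _ _).trans (add_le_add hflat.le hside)) hvert).trans ?_
  linarith

lemma LongCrossingsVanish.exists_badEvent_le [IsProbabilityMeasure μ] {θ : ℝ} (hθ : 0 < θ)
    (h : X.LongCrossingsVanish θ) {M : ℕ} (hM : 0 < M) {ε : ℝ} (hε : 0 < ε) :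
    ∃ s₀ : ℤ, ∀ s, s₀ ≤ s → ∀ a u : ℤ, 0 ≤ a → 0 < u → 2 * a + 4 * u ≤ s / 10 → s < 2 * M * u →
      ∀ j : ℤ, μ.real (X.badEvent s (s / 10) u a j) ≤ ε := by
  obtain ⟨s₁, hs₁⟩ := h.exists_lowCrossing_le hθ hM (by positivity : 0 < ε / 7)
  obtain ⟨n₂, hn₂⟩ := h.exists_crossProb_le hθ (by omega : 0 < 2 * M) (by positivity : 0 < ε / 7)
  refine ⟨max s₁ (2 * n₂), fun s hs a u ha hu hau hsu j ↦ ?_⟩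
  have hMu : (u : ℤ) ≤ M * u := le_mul_of_one_le_left hu.le (by exact_mod_cast hM)
  have hlow := hs₁ s (by omega) a u ha hu hau hsu
  have hflat : X.crossProb (s - 2 * a) (s - 2 * a - u) ≤ ε / 7 :=
    hn₂ _ (by omega) _ (by push_cast; linarith)
  have hvert : X.crossProb (s - 2 * a - 2 * u) (s - 2 * a - 4 * u) ≤ ε / 7 :=
    hn₂ _ (by omega) _ (by push_cast; linarith)
  have := measureReal_badEvent_le (X := X) (t := s / 10) j (by omega : 0 ≤ s - 2 * a - 2 * u)
  linarith

variable (X) in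
/-- Asymptotic independence of the crossings, within a given number of steps, of two slabs of
width `s / 10` at distance at least `6 * (s / 10)`, uniformly in the number of steps. -/
def Mixing : Prop :=
  ∀ ε : ℝ, 0 < ε → ∃ s₀ : ℤ, ∀ s, s₀ ≤ s → ∀ ℓ : ℕ,
    μ.real (X.horizCrossing (s / 10) (2 * (s / 10)) 0 (4 * s) ℓ ∩
        X.horizCrossing (8 * (s / 10)) (9 * (s / 10)) 0 (4 * s) ℓ) ≤
      μ.real (X.horizCrossing (s / 10) (2 * (s / 10)) 0 (4 * s) ℓ) *
        μ.real (X.horizCrossing (8 * (s / 10)) (9 * (s / 10)) 0 (4 * s) ℓ) + ε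

lemma scale_bounds {L M : ℕ} (hM : 20 * (level L + 1) ≤ M) {s : ℤ} (hs : 20 * M ≤ s) :
    20 ≤ s / M ∧ s < 2 * M * (s / M) ∧ level L * (s / M) ≤ s / 10 := by
  have hM_pos : (0 : ℤ) < M := by have := level_nonneg L; omega
  have hu : 20 ≤ s / M := (Int.le_ediv_iff_mul_le hM_pos).2 hs
  have hlow := Int.ediv_mul_le s hM_pos.ne'
  have hhigh := Int.lt_ediv_add_one_mul_self s hM_pos
  refine ⟨hu, by nlinarith, ?_⟩
  have : 20 * (level L + 1) * (s / M) ≤ M * (s / M) := by gcongr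
  have hsplit : 20 * (level L + 1) * (s / M) = 20 * (level L * (s / M)) + 20 * (s / M) := by ring
  rw [mul_comm] at hlow
  omega

lemma LongCrossingsVanish.exists_biUnion_badEvent_le [IsProbabilityMeasure μ] {θ : ℝ} (hθ : 0 < θ)
    (h : X.LongCrossingsVanish θ) {L M : ℕ} (hM : 20 * (level L + 1) ≤ M) {ε : ℝ} (hε : 0 < ε) :
    ∃ s₀ : ℤ, ∀ s, s₀ ≤ s → μ.real (⋃ n ∈ Finset.range L, ⋃ j ∈ Finset.range (8 * M),
      X.badEvent s (s / 10) (s / M) (level n * (s / M)) (j : ℕ)) ≤ ε := by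
  have hM_pos : 0 < M := by have := level_nonneg L; omega
  obtain ⟨s₀, hs₀⟩ := h.exists_badEvent_le hθ hM_pos
    (by positivity : 0 < ε / ((L + 1) * (8 * M : ℕ)))
  refine ⟨max s₀ (20 * M), fun s hs ↦ ?_⟩
  obtain ⟨hu, hsu, hLt⟩ := scale_bounds hM (s := s) (by omega)
  have hbad : ∀ n ∈ Finset.range L, ∀ j ∈ Finset.range (8 * M),
      μ.real (X.badEvent s (s / 10) (s / M) (level n * (s / M)) (j : ℕ)) ≤
        ε / ((L + 1) * (8 * M : ℕ)) := by
    intro n hn j _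
    refine hs₀ s (by omega) _ _ (mul_nonneg (level_nonneg n) (by omega)) (by omega) ?_ hsu j
    rw [← level_succ_mul]
    have : level (n + 1) ≤ level L := level_mono (Finset.mem_range.1 hn)
    exact (mul_le_mul_of_nonneg_right this (by omega)).trans hLt
  have hrow : ∀ n ∈ Finset.range L, μ.real (⋃ j ∈ Finset.range (8 * M),
      X.badEvent s (s / 10) (s / M) (level n * (s / M)) (j : ℕ)) ≤ ε / (L + 1) := by
    intro n hn
    refine (measureReal_biUnion_finset_le _ _).trans
      ((Finset.sum_le_card_nsmul _ _ _ (hbad n hn)).trans_eq ?_)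
    rw [Finset.card_range, nsmul_eq_mul]
    field_simp
  refine (measureReal_biUnion_finset_le _ _).trans ((Finset.sum_le_card_nsmul _ _ _ hrow).trans ?_)
  rw [Finset.card_range, nsmul_eq_mul, mul_div_assoc', div_le_iff₀ (by positivity)]
  nlinarith

/-- A crossing of length at most `200 * ℓ` needs crossings of two distant slabs of length at most
`ℓ`, so mixing squares the small probability `ε`, up to a constant factor. -/
lemma LongCrossingsVanish.exists_short_crossing_step [IsProbabilityMeasure μ] {θ : ℝ} (hθ : 0 < θ)
    (h : X.LongCrossingsVanish θ) (hmix : X.Mixing) {ε : ℝ} (hε : 0 < ε) (hε' : ε ≤ 1 / 30000) :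
    ∃ s₀ : ℤ, ∀ s, s₀ ≤ s → ∀ ℓ : ℕ,
      μ.real (X.horizCrossing 0 (s / 10) 0 (4 * (s / 10)) ℓ) ≤ ε →
      μ.real (X.horizCrossing 0 s 0 (4 * s) ((200 * ℓ : ℕ) : ℕ∞)) ≤ ε := by
  obtain ⟨M, hM⟩ : ∃ M : ℕ, 20 * (level 200 + 1) ≤ M := ⟨_, Int.self_le_toNat _⟩
  obtain ⟨s₁, hs₁⟩ := h.exists_biUnion_badEvent_le hθ hM (by positivity : 0 < ε / 4)
  obtain ⟨s₂, hs₂⟩ := hmix (ε / 4) (by positivity)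
  obtain ⟨n₃, hn₃⟩ := h.exists_crossProb_le hθ one_pos hε
  refine ⟨max (max s₁ s₂) (max (20 * n₃ + 20) (max (20 * M) 200)), fun s hs ℓ hℓ ↦ ?_⟩
  obtain ⟨hu, hsu, hLt⟩ := scale_bounds hM (s := s) (by omega)
  have hbad := hs₁ s (by omega)
  have hind := hs₂ s (by omega) ℓ
  set t := s / 10
  have hslab : μ.real (X.horizCrossing 0 t 0 (4 * s) ℓ) ≤ 102 * ε := by
    have hmono : X.horizCrossing 0 t 0 (4 * s) ℓ ⊆ X.horizCrossing 0 t 0 ((50 : ℕ) * t) ℓ := by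
      refine pathEvent_mono (fun v hv ↦ ?_) le_rfl le_rfl le_rfl
      simp only [box, Set.mem_ofPred_eq] at hv ⊢
      push_cast
      omega
    have hlong : X.crossProb (2 * t) t ≤ ε := hn₃ t (by omega) (2 * t) (by push_cast; omega)
    refine (measureReal_mono hmono (measure_ne_top _ _)).trans
      ((measureReal_horizCrossing_mul_le (by omega) 50 ℓ).trans ?_)
    push_cast
    linarith
  have hslab₁ : μ.real (X.horizCrossing t (2 * t) 0 (4 * s) ℓ) ≤ 102 * ε := by
    rwa [measureReal_horizCrossing, show 2 * t - t = t by ring, sub_zero]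
  have hslab₂ : μ.real (X.horizCrossing (8 * t) (9 * t) 0 (4 * s) ℓ) ≤ 102 * ε := by
    rwa [measureReal_horizCrossing, show 9 * t - 8 * t = t by ring, sub_zero]
  have hincl :=
    horizCrossing_subset_inter_union (X := X) (s := s) (u := s / M) (J := 8 * M) (by omega) hLt
    (by omega) (by omega) (by omega) (by push_cast; linarith) ℓ
  calc μ.real (X.horizCrossing 0 s 0 (4 * s) ((200 * ℓ : ℕ) : ℕ∞))
      ≤ (102 * ε * (102 * ε) + ε / 4) + ε / 4 :=
        (measureReal_mono hincl (measure_ne_top _ _)).trans ((measureReal_union_le _ _).trans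
          (add_le_add (hind.trans (by gcongr)) hbad))
    _ ≤ ε := by nlinarith

lemma LongCrossingsVanish.exists_short_crossing_le [IsProbabilityMeasure μ] {θ : ℝ} (hθ : 0 < θ)
    (h : X.LongCrossingsVanish θ) (hmix : X.Mixing) {ε : ℝ} (hε : 0 < ε) (hε' : ε ≤ 1 / 30000) :
    ∃ s₀ : ℕ, 0 < s₀ ∧ ∀ k n : ℕ, 10 ^ k * s₀ ≤ n →
      μ.real (X.horizCrossing 0 n 0 (4 * n) ((200 ^ k : ℕ) : ℕ∞)) ≤ ε := by
  obtain ⟨s₀, hs₀⟩ := h.exists_short_crossing_step hθ hmix hε hε'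
  refine ⟨s₀.toNat + 1, by omega, fun k ↦ ?_⟩
  induction k with
  | zero =>
    intro n hn
    have hempty : X.horizCrossing 0 n 0 (4 * n) ((200 ^ 0 : ℕ) : ℕ∞) = ∅ := by
      refine Set.eq_empty_of_forall_notMem ?_
      rintro ω ⟨f, k, -, -, h0, hk, hlt⟩
      obtain rfl : k = 0 := Nat.lt_one_iff.1 (by exact_mod_cast hlt)
      simp only [Set.mem_ofPred_eq] at h0 hk
      omega
    rw [hempty, measureReal_empty]
    exact hε.le
  | succ k ih =>
    intro n hn
    have hn' : 10 ^ k * (s₀.toNat + 1) ≤ n / 10 := by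
      rw [Nat.le_div_iff_mul_le (by norm_num)]
      rwa [mul_right_comm, ← pow_succ]
    have hs : s₀ ≤ n := by
      have : s₀.toNat + 1 ≤ n := (Nat.le_mul_of_pos_left _ (by positivity)).trans hn
      omega
    rw [pow_succ']
    exact hs₀ n hs (200 ^ k) (by exact_mod_cast ih _ hn')

lemma ncard_box (n m : ℕ) : (box 0 n 0 m).ncard = (n + 1) * (m + 1) := by
  have : box 0 n 0 m =
      ((Finset.Icc (0 : ℤ) n ×ˢ Finset.Icc (0 : ℤ) m : Finset (ℤ × ℤ)) : Set V) := by
    ext v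
    simp only [box, Finset.coe_product, Finset.coe_Icc, Set.mem_prod, Set.mem_Icc,
      Set.mem_ofPred_eq]
  rw [this, Set.ncard_coe_finset, Finset.card_product]
  simp

lemma exists_pow_scale {s k₀ n : ℕ} (hs : 0 < s) (hk₀ : 1000 * s ^ 2 < 2 ^ k₀)
    (hn : 10 ^ k₀ * s ≤ n) : ∃ k, 10 ^ k * s ≤ n ∧ (n + 1) * (4 * n + 1) ≤ 200 ^ k := by
  have hns : n / s ≠ 0 :=
    ((by positivity : 0 < 10 ^ k₀).trans_le ((Nat.le_div_iff_mul_le hs).2 hn)).ne'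
  set k := Nat.log 10 (n / s)
  have hkk : k₀ ≤ k :=
    (Nat.le_log_iff_pow_le (by norm_num) hns).2 ((Nat.le_div_iff_mul_le hs).2 hn)
  have hlow : 10 ^ k * s ≤ n := (Nat.le_div_iff_mul_le hs).1 (Nat.pow_log_le_self 10 hns)
  have hhigh : n < 10 ^ (k + 1) * s :=
    (Nat.div_lt_iff_lt_mul hs).1 (Nat.lt_pow_succ_log_self (by norm_num) _)
  have hn_pos : 1 ≤ n := (by positivity : 0 < 10 ^ k * s).trans_le hlow
  refine ⟨k, hlow, ?_⟩
  calc (n + 1) * (4 * n + 1) ≤ (2 * n) * (5 * n) := Nat.mul_le_mul (by omega) (by omega)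
    _ = 10 * n ^ 2 := by ring
    _ ≤ 10 * (10 ^ (k + 1) * s) ^ 2 := by gcongr
    _ = (1000 * s ^ 2) * (10 ^ k) ^ 2 := by ring
    _ ≤ 2 ^ k * (10 ^ k) ^ 2 := by
        gcongr
        exact hk₀.le.trans (Nat.pow_le_pow_right (by norm_num) hkk)
    _ = 200 ^ k := by rw [show 200 = 2 * 10 ^ 2 by norm_num, mul_pow, pow_right_comm]

/-- The number of steps allowed grows like `200 ^ k` at scale `10 ^ k`, hence faster than the
number of vertices, so that eventually it is no restriction. -/
lemma LongCrossingsVanish.exists_crossProb_four_mul_le [IsProbabilityMeasure μ] {θ : ℝ}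
    (hθ : 0 < θ) (h : X.LongCrossingsVanish θ) (hmix : X.Mixing) {ε : ℝ} (hε : 0 < ε) :
    ∃ n₀ : ℕ, ∀ n : ℕ, n₀ ≤ n → X.crossProb n (4 * n) ≤ ε := by
  obtain ⟨s, hs, hshort⟩ :=
    h.exists_short_crossing_le hθ hmix (lt_min hε (by norm_num)) (min_le_right ε (1 / 30000))
  obtain ⟨k₀, hk₀⟩ := pow_unbounded_of_one_lt (1000 * s ^ 2) (by norm_num : 1 < 2)
  refine ⟨10 ^ k₀ * s, fun n hn ↦ ?_⟩
  obtain ⟨k, hk, hcard⟩ := exists_pow_scale hs hk₀ hn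
  have hsub : X.horizCrossing 0 n 0 (4 * n) ⊤ ⊆
      X.horizCrossing 0 n 0 (4 * n) ((200 ^ k : ℕ) : ℕ∞) := fun ω hω ↦
    hω.of_ncard_le (finite_box _ _ _ _)
      (le_trans (by exact_mod_cast (ncard_box n (4 * n)).le) hcard)
  exact (measureReal_mono hsub (measure_ne_top _ _)).trans
    ((hshort k n hk).trans (min_le_left _ _))

theorem LongCrossingsVanish.exists_crossProb_mul_le [IsProbabilityMeasure μ] {θ : ℝ} (hθ : 0 < θ)
    (h : X.LongCrossingsVanish θ) (hmix : X.Mixing) (N : ℕ) {ε : ℝ} (hε : 0 < ε) :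
    ∃ n₀ : ℕ, ∀ n : ℕ, n₀ ≤ n → X.crossProb n (N * n) ≤ ε := by
  have hη : 0 < ε / (2 * (N + 1)) := by positivity
  obtain ⟨n₁, hn₁⟩ := h.exists_crossProb_four_mul_le hθ hmix hη
  obtain ⟨n₂, hn₂⟩ := h.exists_crossProb_le hθ one_pos hη
  refine ⟨max n₁ (n₂.toNat + 1), fun n hn ↦ ?_⟩
  calc X.crossProb n (N * n)
      ≤ (N + 1) * (X.crossProb n (4 * n) + X.crossProb (2 * n) n) :=
        measureReal_horizCrossing_mul_le (by omega) N ⊤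
    _ ≤ (N + 1) * (ε / (2 * (N + 1)) + ε / (2 * (N + 1))) := by
        gcongr
        · exact hn₁ n (by omega)
        · exact hn₂ n (by omega) _ (by push_cast; omega)
    _ = ε := by field_simp; norm_num

end CrossingModel

/-! ### Independent uniform labels from binary digits -/

@[simp]
lemma boolOf_eq_true {P : Prop} : boolOf P = true ↔ P := by
  unfold boolOf; exact @decide_eq_true_iff P (Classical.propDecidable P)

lemma measurable_boolOf {α : Type*} [MeasurableSpace α] {q : α → Prop}
    (h : MeasurableSet {x | q x}) : Measurable fun x ↦ boolOf (q x) :=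
  measurable_to_bool <| by simpa [Set.preimage] using h

lemma measurable_bit (n : ℕ) : Measurable (bit n) := by
  have hfloor : Measurable fun x : ℝ ↦ ⌊x * 2 ^ (n + 1)⌋ :=
    Int.measurable_floor.comp (by fun_prop)
  exact measurable_boolOf (hfloor (.of_discrete (s := {z : ℤ | z % 2 = 1})))

lemma bit_add_one (n : ℕ) (x : ℝ) : bit n (x + 1) = bit n x := by
  rw [Bool.eq_iff_iff, bit, bit, boolOf_eq_true, boolOf_eq_true]
  have : (x + 1) * 2 ^ (n + 1) = x * 2 ^ (n + 1) + ((2 * 2 ^ n : ℤ) : ℝ) := by push_cast; ring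
  rw [this, Int.floor_add_intCast]
  omega

lemma bit_succ (n : ℕ) (x : ℝ) : bit (n + 1) x = bit n (2 * x) := by
  unfold bit
  rw [show 2 * x * 2 ^ (n + 1) = x * 2 ^ (n + 1 + 1) by ring]

lemma bit_zero_eq_true_iff {x : ℝ} (h : x ∈ Set.Ico (0 : ℝ) 1) : bit 0 x = true ↔ 1 / 2 ≤ x := by
  obtain ⟨h0, h1⟩ := h
  have hnonneg : 0 ≤ ⌊x * 2⌋ := Int.floor_nonneg.2 (by linarith)
  have hlt : ⌊x * 2⌋ < 2 := Int.floor_lt.2 (by push_cast; linarith)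
  have hone : 1 ≤ ⌊x * 2⌋ ↔ 1 ≤ x * 2 := by simpa using Int.le_floor (z := 1) (a := x * 2)
  rw [bit, boolOf_eq_true, zero_add, pow_one, show (⌊x * 2⌋ % 2 = 1) ↔ 1 ≤ ⌊x * 2⌋ by omega, hone]
  constructor <;> intro <;> linarith

lemma base_apply (A : Set ℝ) : base A = volume (A ∩ Set.Ico 0 1) := by
  rw [base, ← restrict_Ico_eq_restrict_Ioc, Measure.restrict_apply' measurableSet_Ico]

instance : IsProbabilityMeasure base := ⟨by simp [base_apply]⟩

lemma base_eq_half_add_half (A : Set ℝ) :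
    base A = 2⁻¹ * base {y | y / 2 ∈ A} + 2⁻¹ * base {y | (y + 1) / 2 ∈ A} := by
  have hscale : ∀ S : Set ℝ, volume ((2 * ·) ⁻¹' S) = 2⁻¹ * volume S := fun S ↦ by
    rw [Real.volume_preimage_mul_left two_ne_zero, abs_of_pos (by norm_num),
      ENNReal.ofReal_inv_of_pos two_pos, ENNReal.ofReal_ofNat]
  have hlow : A ∩ Set.Ico 0 1 ∩ Set.Iio (1 / 2) =
      (2 * ·) ⁻¹' ({y | y / 2 ∈ A} ∩ Set.Ico 0 1) := by
    ext x
    simp only [Set.mem_inter_iff, Set.mem_Ico, Set.mem_Iio, Set.mem_preimage, Set.mem_ofPred_eq,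
      mul_div_cancel_left₀ x (two_ne_zero' ℝ)]
    constructor
    · rintro ⟨⟨hA, h0, _⟩, h⟩; exact ⟨hA, by linarith, by linarith⟩
    · rintro ⟨hA, h0, h1⟩; exact ⟨⟨hA, by linarith, by linarith⟩, by linarith⟩
  have hhigh : (A ∩ Set.Ico 0 1) \ Set.Iio (1 / 2) =
      (2 * ·) ⁻¹' ((· + (-1)) ⁻¹' ({y | (y + 1) / 2 ∈ A} ∩ Set.Ico 0 1)) := by
    ext x
    simp only [Set.mem_sdiff, Set.mem_inter_iff, Set.mem_Ico, Set.mem_Iio, Set.mem_preimage,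
      Set.mem_ofPred_eq, neg_add_cancel_right, mul_div_cancel_left₀ x (two_ne_zero' ℝ)]
    constructor
    · rintro ⟨⟨hA, _, h1⟩, h⟩; exact ⟨hA, by linarith, by linarith⟩
    · rintro ⟨hA, h0, h1⟩; exact ⟨⟨hA, by linarith, by linarith⟩, by linarith⟩
  rw [base_apply A, ← measure_inter_add_sdiff _ measurableSet_Iio, hlow, hhigh, hscale, hscale,
    measure_preimage_add_right, ← base_apply, ← base_apply]

lemma base_congr {A B : Set ℝ} (h : ∀ x ∈ Set.Ico (0 : ℝ) 1, x ∈ A ↔ x ∈ B) :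
    base A = base B := by
  rw [base_apply, base_apply]
  congr 1
  ext x
  exact and_congr_left fun hx ↦ h x hx

lemma base_bit_zero_and_aux {S : Set ℝ} (hS : ∀ x, x + 1 ∈ S ↔ x ∈ S) (t : Set Bool) :
    base {x | bit 0 x ∈ t ∧ 2 * x ∈ S} = 2⁻¹ * base {y | false ∈ t ∧ y ∈ S} +
      2⁻¹ * base {y | true ∈ t ∧ y ∈ S} := by
  rw [base_eq_half_add_half]
  congr 2 <;> refine base_congr fun y hy ↦ ?_
  · have hy' : y / 2 ∈ Set.Ico (0 : ℝ) 1 := ⟨by linarith [hy.1], by linarith [hy.2]⟩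
    have hbit : bit 0 (y / 2) = false := by
      rw [← Bool.not_eq_true, bit_zero_eq_true_iff hy']; linarith [hy.2]
    simp only [Set.mem_ofPred_eq, hbit, mul_div_cancel₀ y (two_ne_zero' ℝ)]
  · have hy' : (y + 1) / 2 ∈ Set.Ico (0 : ℝ) 1 := ⟨by linarith [hy.1], by linarith [hy.2]⟩
    have hbit : bit 0 ((y + 1) / 2) = true := by
      rw [bit_zero_eq_true_iff hy']; linarith [hy.1]
    simp only [Set.mem_ofPred_eq, hbit, mul_div_cancel₀ (y + 1) (two_ne_zero' ℝ), hS]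

-- The map `x ↦ 2 * x` modulo `1` shifts the binary digits and preserves `base`.
lemma base_bit_zero_and {S : Set ℝ} (hS : ∀ x, x + 1 ∈ S ↔ x ∈ S) (t : Set Bool) :
    base {x | bit 0 x ∈ t ∧ 2 * x ∈ S} = base {x | bit 0 x ∈ t} * base S := by
  have huniv := base_bit_zero_and_aux (S := Set.univ) (by simp) t
  simp only [Set.mem_univ, and_true] at huniv
  rw [base_bit_zero_and_aux hS, huniv]
  by_cases hf : false ∈ t <;> by_cases ht : true ∈ t <;> simp [hf, ht, add_mul]

lemma base_forall_bit_mem (n : ℕ) (t : ℕ → Set Bool) :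
    base {x | ∀ i < n, bit i x ∈ t i} = ∏ i ∈ Finset.range n, base {x | bit 0 x ∈ t i} := by
  induction n generalizing t with
  | zero => simp
  | succ n ih =>
    have hshift : {x | ∀ i < n + 1, bit i x ∈ t i} =
        {x | bit 0 x ∈ t 0 ∧ 2 * x ∈ {y | ∀ i < n, bit i y ∈ t (i + 1)}} := by
      ext x
      simp only [Set.mem_ofPred_eq, ← bit_succ, Nat.forall_lt_succ_left]
    rw [hshift, base_bit_zero_and (by simp [bit_add_one]), ih, Finset.prod_range_succ', mul_comm]

lemma base_map_bit :
    base.map (fun x n ↦ bit n x) = Measure.infinitePi fun _ : ℕ ↦ base.map (bit 0) := by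
  classical
  have (n : ℕ) : IsProbabilityMeasure (base.map (bit n)) :=
    Measure.isProbabilityMeasure_map (measurable_bit n).aemeasurable
  refine Measure.eq_infinitePi _ fun s t ht ↦ ?_
  obtain ⟨n, hn⟩ := s.exists_nat_subset_range
  have hpre : (fun x n ↦ bit n x) ⁻¹' Set.pi s t =
      {x | ∀ i < n, bit i x ∈ (if i ∈ s then t i else Set.univ)} := by
    ext x
    simp only [Set.mem_preimage, Set.mem_pi, Set.mem_ofPred_eq]
    refine ⟨fun h i _ ↦ ?_, fun h i hi ↦ ?_⟩
    · split_ifs with hi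
      exacts [h i hi, trivial]
    · simpa [Finset.mem_coe.1 hi] using h i (Finset.mem_range.1 (hn hi))
  rw [Measure.map_apply (measurable_pi_lambda _ measurable_bit)
    (.pi s.countable_toSet fun _ _ ↦ ht _), hpre, base_forall_bit_mem,
    ← Finset.prod_subset hn fun i _ hi ↦ by simp [hi]]
  refine Finset.prod_congr rfl fun i hi ↦ ?_
  rw [if_pos hi, Measure.map_apply (measurable_bit 0) (ht i)]
  rfl

/-- The number with binary expansion `0.b₀b₁b₂…`. -/
noncomputable def binSum (b : ℕ → Bool) : ℝ := ∑' k : ℕ, if b k then ((2 : ℝ)⁻¹) ^ (k + 1) else 0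

lemma measurable_binSum : Measurable binSum := by
  refine .tsum fun k ↦ .ite ?_ measurable_const measurable_const
  exact (measurable_pi_apply k : Measurable fun b : ℕ → Bool ↦ b k) (measurableSet_singleton true)

/-- The common law of the labels `unif i`, that is, of a number whose binary digits are
independent and distributed as the leading digit of a uniform point of `(0, 1]`. -/
noncomputable def unifLaw : Measure ℝ :=
  (Measure.infinitePi fun _ : ℕ ↦ base.map (bit 0)).map binSum

lemma measurable_unif (i : ℕ) : Measurable (unif i) :=
  measurable_binSum.comp (measurable_pi_lambda _ fun k ↦ measurable_bit (Nat.pair i k))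

lemma base_map_unif :
    base.map (fun x i ↦ unif i x) = Measure.infinitePi fun _ : ℕ ↦ unifLaw := by
  have : IsProbabilityMeasure (base.map (bit 0)) :=
    Measure.isProbabilityMeasure_map (measurable_bit 0).aemeasurable
  have hbit : Measurable fun (x : ℝ) (n : ℕ) ↦ bit n x := measurable_pi_lambda _ measurable_bit
  have hpair : Measurable fun (b : ℕ → Bool) (q : ℕ × ℕ) ↦ b (Nat.pair q.1 q.2) := by fun_prop
  have hcurry : Measurable (MeasurableEquiv.curry ℕ ℕ Bool) := MeasurableEquiv.measurable _
  have hsum : Measurable fun (b : ℕ → ℕ → Bool) (i : ℕ) ↦ binSum (b i) :=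
    measurable_pi_lambda _ fun i ↦ measurable_binSum.comp (measurable_pi_apply i)
  have hfactor : (fun (x : ℝ) (i : ℕ) ↦ unif i x) =
      (fun (b : ℕ → ℕ → Bool) (i : ℕ) ↦ binSum (b i)) ∘ MeasurableEquiv.curry ℕ ℕ Bool ∘
        (fun (b : ℕ → Bool) (q : ℕ × ℕ) ↦ b (Nat.pair q.1 q.2)) ∘
          fun (x : ℝ) (n : ℕ) ↦ bit n x := rfl
  rw [hfactor, ← Measure.map_map hsum (hcurry.comp (hpair.comp hbit)),
    ← Measure.map_map hcurry (hpair.comp hbit), ← Measure.map_map hpair hbit, base_map_bit]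
  rw [Measure.map_infinitePi_infinitePi_of_inj (P := fun _ : ℕ ↦ base.map (bit 0))
    (f := fun q : ℕ × ℕ ↦ Nat.pair q.1 q.2) Nat.pairEquiv.injective,
    Measure.infinitePi_map_curry (ι := ℕ) (κ := ℕ) fun _ _ ↦ base.map (bit 0)]
  exact Measure.infinitePi_map_pi
    (μ := fun _ : ℕ ↦ Measure.infinitePi fun _ : ℕ ↦ base.map (bit 0))
    fun _ ↦ measurable_binSum

/-! ### Product measures on spaces of bits -/

section Bits

variable {ι : Type*}

lemma dependsOn_inter {F : Set ι} {S T : Set (ι → Bool)} (hS : DependsOn (· ∈ S) F)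
    (hT : DependsOn (· ∈ T) F) : DependsOn (· ∈ S ∩ T) F :=
  fun _ _ h ↦ congrArg₂ And (hS h) (hT h)

lemma dependsOn_update_mem [DecidableEq ι] {F : Set ι} {S : Set (ι → Bool)}
    (hS : DependsOn (· ∈ S) F) (i : ι) (b : Bool) :
    DependsOn (· ∈ {ω | Function.update ω i b ∈ S}) (F \ {i}) := by
  refine fun ω ω' h ↦ hS fun j hj ↦ ?_
  obtain rfl | hji := eq_or_ne j i
  · simp
  · simp [hji, h j ⟨hj, hji⟩]

lemma eq_empty_or_univ_of_dependsOn_empty {S : Set (ι → Bool)} (hS : DependsOn (· ∈ S) ∅) :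
    S = ∅ ∨ S = Set.univ := by
  refine S.eq_empty_or_nonempty.imp_right fun ⟨ω, hω⟩ ↦ Set.eq_univ_of_forall fun ω' ↦ ?_
  exact (hS.empty ω ω').mp hω

lemma exists_eq_preimage_of_dependsOn {F : Set ι} {S : Set (ι → Bool)}
    (hS : DependsOn (· ∈ S) F) : ∃ S' : Set (F → Bool), S = (fun ω (i : F) ↦ ω i) ⁻¹' S' := by
  obtain ⟨g, hg⟩ := dependsOn_iff_exists_comp.1 hS
  exact ⟨{x | g x}, Set.ext fun ω ↦ iff_of_eq (congrFun hg ω)⟩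

lemma measurableSet_of_dependsOn {F : Set ι} (hF : F.Finite) {S : Set (ι → Bool)}
    (hS : DependsOn (· ∈ S) F) : MeasurableSet S := by
  have : Finite F := hF
  obtain ⟨S', rfl⟩ := exists_eq_preimage_of_dependsOn hS
  exact (by fun_prop : Measurable fun (ω : ι → Bool) (i : F) ↦ ω i) S'.toFinite.measurableSet

variable (μ : ι → Measure Bool) [∀ i, IsProbabilityMeasure (μ i)]

lemma measureReal_inter_of_dependsOn {F G : Set ι} (hF : F.Finite) (hG : G.Finite)
    (hFG : Disjoint F G) {S T : Set (ι → Bool)} (hS : DependsOn (· ∈ S) F)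
    (hT : DependsOn (· ∈ T) G) :
    (Measure.infinitePi μ).real (S ∩ T) =
      (Measure.infinitePi μ).real S * (Measure.infinitePi μ).real T := by
  lift F to Finset ι using hF
  lift G to Finset ι using hG
  have hindep := (ProbabilityTheory.iIndepFun_infinitePi (P := μ) (X := fun _ b ↦ b)
    fun _ ↦ measurable_id).indepFun_finset F G (Finset.disjoint_coe.1 hFG) (by fun_prop)
  obtain ⟨S', rfl⟩ := exists_eq_preimage_of_dependsOn hS
  obtain ⟨T', rfl⟩ := exists_eq_preimage_of_dependsOn hT
  simp only [measureReal_def, ← ENNReal.toReal_mul]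
  exact congrArg _ (hindep.measure_inter_preimage_eq_mul _ _ S'.toFinite.measurableSet
    T'.toFinite.measurableSet)

lemma measureReal_eval_eq (i : ι) (b : Bool) :
    (Measure.infinitePi μ).real {ω | ω i = b} = (μ i).real {b} := by
  rw [← Measure.infinitePi_map_eval μ i,
    map_measureReal_apply (measurable_pi_apply i) (measurableSet_singleton b)]
  rfl

lemma real_singleton_false (ν : Measure Bool) [IsProbabilityMeasure ν] :
    ν.real {false} = 1 - ν.real {true} := by
  rw [← probReal_compl_eq_one_sub (measurableSet_singleton true)]
  congr 1
  ext b
  cases b <;> simp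

lemma measureReal_eq_update_add_update [DecidableEq ι] {F : Set ι} (hF : F.Finite)
    {S : Set (ι → Bool)} (hS : DependsOn (· ∈ S) F) (i : ι) :
    (Measure.infinitePi μ).real S =
      (μ i).real {true} * (Measure.infinitePi μ).real {ω | Function.update ω i true ∈ S} +
      (1 - (μ i).real {true}) *
        (Measure.infinitePi μ).real {ω | Function.update ω i false ∈ S} := by
  have hpiece (b : Bool) : (Measure.infinitePi μ).real (S ∩ {ω | ω i = b}) =
      (μ i).real {b} * (Measure.infinitePi μ).real {ω | Function.update ω i b ∈ S} := by
    have heq : S ∩ {ω | ω i = b} = {ω | Function.update ω i b ∈ S} ∩ {ω | ω i = b} := by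
      ext ω
      refine and_congr_left fun (hω : ω i = b) ↦ ?_
      simp [← hω]
    rw [heq, measureReal_inter_of_dependsOn μ (hF.subset Set.sdiff_subset)
      (Set.finite_singleton i) Set.disjoint_sdiff_left (dependsOn_update_mem hS i b)
      fun ω ω' h ↦ by simp [h i rfl], measureReal_eval_eq, mul_comm]
  have htrue : MeasurableSet {ω : ι → Bool | ω i = true} :=
    (measurable_pi_apply i : Measurable fun ω : ι → Bool ↦ ω i) (measurableSet_singleton true)
  have hfalse : S \ {ω | ω i = true} = S ∩ {ω | ω i = false} := by
    ext ω
    simp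
  rw [← measureReal_inter_add_sdiff htrue, hfalse, hpiece, hpiece, real_singleton_false]

lemma two_point_correlation {w x₁ x₀ y₁ y₀ z₁ z₀ : ℝ} (hw₀ : 0 ≤ w) (hw₁ : w ≤ 1)
    (h₁ : x₁ * y₁ ≤ z₁) (h₀ : x₀ * y₀ ≤ z₀)
    (h : (x₀ ≤ x₁ ∧ y₀ ≤ y₁) ∨ (x₁ ≤ x₀ ∧ y₁ ≤ y₀)) :
    (w * x₁ + (1 - w) * x₀) * (w * y₁ + (1 - w) * y₀) ≤ w * z₁ + (1 - w) * z₀ := by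
  have hprod : 0 ≤ (x₁ - x₀) * (y₁ - y₀) := by
    rcases h with ⟨hx, hy⟩ | ⟨hx, hy⟩
    · exact mul_nonneg (by linarith) (by linarith)
    · exact mul_nonneg_of_nonpos_of_nonpos (by linarith) (by linarith)
  have hw : 0 ≤ 1 - w := by linarith
  linear_combination w * h₁ + (1 - w) * h₀ + mul_nonneg (mul_nonneg hw₀ hw) hprod

/-- The random colouring `X` of `α` is positively associated on `U`: increasing events determined
by the colours in `U` are positively correlated. -/
def PosAssoc {Ω α : Type*} [MeasurableSpace Ω] (ν : Measure Ω) (X : Ω → α → Bool) (U : Set α) :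
    Prop :=
  ∀ ⦃C D : Set (α → Bool)⦄, DependsOn (· ∈ C) U → DependsOn (· ∈ D) U → IsUpperSet C →
    IsUpperSet D → ν.real {ω | X ω ∈ C} * ν.real {ω | X ω ∈ D} ≤ ν.real {ω | X ω ∈ C ∩ D}

lemma posAssoc_empty {Ω α : Type*} [MeasurableSpace Ω] (ν : Measure Ω) [IsProbabilityMeasure ν]
    (X : Ω → α → Bool) : PosAssoc ν X ∅ := fun _ _ hC _ _ _ ↦ by
  rcases eq_empty_or_univ_of_dependsOn_empty hC with rfl | rfl <;> simp

lemma PosAssoc.mono {Ω α : Type*} [MeasurableSpace Ω] {ν : Measure Ω} {X : Ω → α → Bool}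
    {U U' : Set α} (h : PosAssoc ν X U') (hU : U ⊆ U') : PosAssoc ν X U :=
  fun _ _ hC hD ↦ h (hC.mono hU) (hD.mono hU)

open Classical in
lemma PosAssoc.piecewise {Ω α : Type*} [MeasurableSpace Ω] {ν : Measure Ω} {X : Ω → α → Bool}
    {A U : Set α} (h : PosAssoc ν X (U \ A)) (ξ : α → Bool) :
    PosAssoc ν (fun ω ↦ A.piecewise ξ (X ω)) U := by
  have hdep {C : Set (α → Bool)} (hC : DependsOn (· ∈ C) U) :
      DependsOn (· ∈ {x | A.piecewise ξ x ∈ C}) (U \ A) := fun x y hxy ↦ hC fun v hv ↦ by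
    by_cases hvA : v ∈ A
    · simp [hvA]
    · simp [hvA, hxy v ⟨hv, hvA⟩]
  have hup {C : Set (α → Bool)} (hC : IsUpperSet C) : IsUpperSet {x | A.piecewise ξ x ∈ C} :=
    fun x y hxy ↦ hC (Set.piecewise_mono (fun _ _ ↦ le_rfl) fun v _ ↦ hxy v)
  exact fun C D hC hD hCup hDup ↦ h (hdep hC) (hdep hD) (hup hCup) (hup hDup)

lemma measureReal_le_of_isUpperSet {Ω α : Type*} [MeasurableSpace Ω] (ν : Measure Ω)
    [IsFiniteMeasure ν] {X Y : Ω → α → Bool} (hXY : X ≤ Y) {C : Set (α → Bool)}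
    (hC : IsUpperSet C) : ν.real {ω | X ω ∈ C} ≤ ν.real {ω | Y ω ∈ C} :=
  measureReal_mono fun ω ↦ hC (hXY ω)

-- Conditionally on one bit the colouring is positively associated; the two conditional laws are
-- ordered, so averaging over that bit preserves this.
lemma PosAssoc.of_update [DecidableEq ι] {α : Type*} {X : (ι → Bool) → α → Bool} {F : Set ι}
    (hF : F.Finite) {U : Set α} (hX : ∀ v ∈ U, DependsOn (X · v) F) (i : ι)
    (htrue : PosAssoc (Measure.infinitePi μ) (fun ω ↦ X (Function.update ω i true)) U)
    (hfalse : PosAssoc (Measure.infinitePi μ) (fun ω ↦ X (Function.update ω i false)) U)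
    (hmono : (fun ω ↦ X (Function.update ω i false)) ≤ (fun ω ↦ X (Function.update ω i true)) ∨
      (fun ω ↦ X (Function.update ω i true)) ≤ fun ω ↦ X (Function.update ω i false)) :
    PosAssoc (Measure.infinitePi μ) X U := by
  have hdep {C : Set (α → Bool)} (hC : DependsOn (· ∈ C) U) : DependsOn (· ∈ {ω | X ω ∈ C}) F :=
    fun ω ω' h ↦ hC fun v hv ↦ hX v hv h
  intro C D hC hD hCup hDup
  rw [measureReal_eq_update_add_update μ hF (hdep hC) i,
    measureReal_eq_update_add_update μ hF (hdep hD) i,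
    measureReal_eq_update_add_update μ hF (hdep (dependsOn_inter hC hD)) i]
  refine two_point_correlation measureReal_nonneg measureReal_le_one (htrue hC hD hCup hDup)
    (hfalse hC hD hCup hDup) ?_
  rcases hmono with h | h
  · exact .inl ⟨measureReal_le_of_isUpperSet (C := C) _ h hCup,
      measureReal_le_of_isUpperSet (C := D) _ h hDup⟩
  · exact .inr ⟨measureReal_le_of_isUpperSet (C := C) _ h hCup,
      measureReal_le_of_isUpperSet (C := D) _ h hDup⟩

/-- Harris' inequality. -/
theorem posAssoc_infinitePi {F : Set ι} (hF : F.Finite) :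
    PosAssoc (Measure.infinitePi μ) (fun ω ↦ ω) F := by
  classical
  induction F, hF using Set.Finite.induction_on with
  | empty => exact posAssoc_empty _ _
  | @insert i F _ hF ih =>
    have hcond (b : Bool) : PosAssoc (Measure.infinitePi μ)
        (fun ω ↦ Function.update ω i b) (insert i F) := by
      simpa only [Set.piecewise_singleton] using
        (ih.mono (by simp) : PosAssoc _ _ (insert i F \ {i})).piecewise fun _ ↦ b
    exact .of_update μ (hF.insert i) (fun v hv _ _ h ↦ h v hv) i (hcond true) (hcond false)
      (.inl fun ω ↦ update_le_update_iff.2 ⟨Bool.false_le _, fun _ _ ↦ le_rfl⟩)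

end Bits

/-! ### Cluster colourings -/

section ClusterColouring

open Relation

variable {α : Type*}

/-- A configuration of random bits: the bit of a pair of vertices says whether the edge joining
them is open, and the bit of a vertex is the colour it imposes on its cluster if it represents
it. -/
abbrev Bits (α : Type*) : Type _ := Sym2 α ⊕ α → Bool

/-- The vertices `u` and `v` are joined by an edge of `E` which is open in `ω`. -/
def OpenEdge (E : Set (Sym2 α)) (ω : Bits α) (u v : α) : Prop :=
  s(u, v) ∈ E ∧ ω (.inl s(u, v)) = true

/-- No edge of `E` leaves the set `U`. -/
def EdgeClosed (E : Set (Sym2 α)) (U : Set α) : Prop := ∀ ⦃a b⦄, s(a, b) ∈ E → a ∈ U → b ∈ U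

lemma OpenEdge.symm {E : Set (Sym2 α)} {ω : Bits α} {u v : α} (h : OpenEdge E ω u v) :
    OpenEdge E ω v u := by
  rwa [OpenEdge, Sym2.eq_swap]

lemma reflTransGen_openEdge_symm {E : Set (Sym2 α)} {ω : Bits α} {u v : α}
    (h : ReflTransGen (OpenEdge E ω) u v) : ReflTransGen (OpenEdge E ω) v u := by
  induction h with
  | refl => exact .refl
  | tail _ hstep ih => exact .head hstep.symm ih

lemma EdgeClosed.mem_of_reflTransGen {E : Set (Sym2 α)} {U : Set α} (hU : EdgeClosed E U)
    {ω : Bits α} {u v : α} (h : ReflTransGen (OpenEdge E ω) u v) (hu : u ∈ U) : v ∈ U := by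
  induction h with
  | refl => exact hu
  | tail _ hstep ih => exact hU hstep.1 ih

lemma openEdge_congr {E : Set (Sym2 α)} {ω ω' : Bits α}
    (h : ∀ e ∈ E, ω (.inl e) = ω' (.inl e)) : OpenEdge E ω = OpenEdge E ω' := by
  ext u v
  exact and_congr_right fun he ↦ by rw [h _ he]

section Update

variable [DecidableEq α]

lemma openEdge_update_true {E : Set (Sym2 α)} {e : Sym2 α} (he : e ∈ E) (ω : Bits α) (u v : α) :
    OpenEdge E (Function.update ω (.inl e) true) u v ↔
      OpenEdge (E \ {e}) ω u v ∨ s(u, v) = e := by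
  by_cases h : s(u, v) = e <;> simp [OpenEdge, h, he]

lemma openEdge_update_false (E : Set (Sym2 α)) (e : Sym2 α) (ω : Bits α) :
    OpenEdge E (Function.update ω (.inl e) false) = OpenEdge (E \ {e}) ω := by
  ext u v
  by_cases h : s(u, v) = e <;> simp [OpenEdge, h]

lemma openEdge_update_inr (E : Set (Sym2 α)) (ω : Bits α) (v : α) (b : Bool) :
    OpenEdge E (Function.update ω (.inr v) b) = OpenEdge E ω :=
  openEdge_congr fun e _ ↦ by simp

lemma reflTransGen_openEdge_update_true {E : Set (Sym2 α)} {e : Sym2 α} (he : e ∈ E) {ω : Bits α}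
    {u v : α} (h : ReflTransGen (OpenEdge (E \ {e}) ω) u v) :
    ReflTransGen (OpenEdge E (Function.update ω (.inl e) true)) u v :=
  ReflTransGen.mono (fun _ _ huv ↦ (openEdge_update_true he ω _ _).2 (.inl huv)) _ _ h

lemma exists_reflTransGen_update_true_iff {E : Set (Sym2 α)} {A : Set α} {a b : α}
    (he : s(a, b) ∈ E) (ha : a ∈ A) (ω : Bits α) (v : α) :
    (∃ x ∈ A, ReflTransGen (OpenEdge E (Function.update ω (.inl s(a, b)) true)) x v) ↔
      ∃ x ∈ insert b A, ReflTransGen (OpenEdge (E \ {s(a, b)}) ω) x v := by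
  constructor
  · rintro ⟨x, hx, h⟩
    induction h with
    | refl => exact ⟨x, .inr hx, .refl⟩
    | @tail y z _ hyz ih =>
      obtain hyz | hyz := (openEdge_update_true he ω y z).1 hyz
      · obtain ⟨x', hx', h'⟩ := ih
        exact ⟨x', hx', h'.tail hyz⟩
      · obtain ⟨-, rfl⟩ | ⟨-, rfl⟩ := Sym2.eq_iff.1 hyz
        · exact ⟨z, .inl rfl, .refl⟩
        · exact ⟨z, .inr ha, .refl⟩
  · rintro ⟨x, rfl | hx, h⟩
    · exact ⟨a, ha, .head ((openEdge_update_true he ω _ _).2 (.inr rfl))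
        (reflTransGen_openEdge_update_true he h)⟩
    · exact ⟨x, hx, reflTransGen_openEdge_update_true he h⟩

lemma reflTransGen_update_true_iff {E : Set (Sym2 α)} {a b v : α} (he : s(a, b) ∈ E) {ω : Bits α}
    (hav : ¬ ReflTransGen (OpenEdge (E \ {s(a, b)}) ω) v a)
    (hbv : ¬ ReflTransGen (OpenEdge (E \ {s(a, b)}) ω) v b) (w : α) :
    ReflTransGen (OpenEdge E (Function.update ω (.inl s(a, b)) true)) v w ↔
      ReflTransGen (OpenEdge (E \ {s(a, b)}) ω) v w := by
  refine ⟨fun h ↦ ?_, reflTransGen_openEdge_update_true he⟩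
  induction h with
  | refl => exact .refl
  | @tail y z _ hyz ih =>
    obtain hyz | hyz := (openEdge_update_true he ω y z).1 hyz
    · exact ih.tail hyz
    · obtain ⟨rfl, -⟩ | ⟨rfl, -⟩ := Sym2.eq_iff.1 hyz
      · exact absurd ih hav
      · exact absurd ih hbv

end Update

variable [Encodable α]

/-- The vertex of smallest code in the component of `v` for the relation `r`. -/
noncomputable def minRep (r : α → α → Prop) (v : α) : α :=
  (Encodable.decode (sInf (Encodable.encode '' {w | ReflTransGen r v w}))).getD v

lemma reflTransGen_minRep_and_encode_le (r : α → α → Prop) (v : α) :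
    ReflTransGen r v (minRep r v) ∧
      ∀ w, ReflTransGen r v w → Encodable.encode (minRep r v) ≤ Encodable.encode w := by
  obtain ⟨w, hw, hmin⟩ :=
    Nat.sInf_mem (s := Encodable.encode '' {w | ReflTransGen r v w}) ⟨_, v, .refl, rfl⟩
  have heq : minRep r v = w := by simp [minRep, ← hmin]
  exact heq ▸ ⟨hw, fun z hz ↦ hmin ▸ Nat.sInf_le ⟨z, hz, rfl⟩⟩

lemma reflTransGen_minRep (r : α → α → Prop) (v : α) : ReflTransGen r v (minRep r v) :=
  (reflTransGen_minRep_and_encode_le r v).1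

lemma minRep_eq_of_encode_le {r : α → α → Prop} {v x : α} (hx : ReflTransGen r v x)
    (hmin : ∀ w, ReflTransGen r v w → Encodable.encode x ≤ Encodable.encode w) :
    minRep r v = x :=
  Encodable.encode_injective <| ((reflTransGen_minRep_and_encode_le r v).2 _ hx).antisymm
    (hmin _ (reflTransGen_minRep r v))

lemma minRep_congr {r r' : α → α → Prop} {v v' : α}
    (h : ∀ w, ReflTransGen r v w ↔ ReflTransGen r' v' w) : minRep r v = minRep r' v' :=
  minRep_eq_of_encode_le ((h _).2 (reflTransGen_minRep r' v')) fun w hw ↦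
    (reflTransGen_minRep_and_encode_le r' v').2 w ((h w).1 hw)

lemma minRep_openEdge_eq_iff {E : Set (Sym2 α)} {ω : Bits α} {u v : α} :
    minRep (OpenEdge E ω) u = minRep (OpenEdge E ω) v ↔ ReflTransGen (OpenEdge E ω) u v := by
  refine ⟨fun h ↦ ?_, fun h ↦ minRep_congr fun w ↦
    ⟨(reflTransGen_openEdge_symm h).trans, h.trans⟩⟩
  exact (reflTransGen_minRep _ u).trans (h ▸ reflTransGen_openEdge_symm (reflTransGen_minRep _ v))

/-- The colouring of the vertices in which every cluster of open edges of `E` gets the colour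
proposed by its representative. -/
noncomputable def clusterColour (E : Set (Sym2 α)) (ω : Bits α) (v : α) : Bool :=
  ω (.inr (minRep (OpenEdge E ω) v))

open Classical in
/-- The colouring `clusterColour E`, except that the clusters meeting the set `A` of seeds get the
colour `c`. These are the conditional colourings met when the cluster of a vertex is explored edge
by edge after its colour has been revealed. -/
noncomputable def seededColour (E : Set (Sym2 α)) (A : Set α) (c : Bool) (ω : Bits α) (v : α) :
    Bool :=
  if ∃ a ∈ A, ReflTransGen (OpenEdge E ω) a v then c else clusterColour E ω v

lemma seededColour_empty (E : Set (Sym2 α)) (c : Bool) : seededColour E ∅ c = clusterColour E := by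
  ext ω v
  simp [seededColour]

lemma seededColour_false_le_true (E : Set (Sym2 α)) (A : Set α) (ω : Bits α) :
    seededColour E A false ω ≤ seededColour E A true ω := by
  intro v
  by_cases h : ∃ a ∈ A, ReflTransGen (OpenEdge E ω) a v <;> simp [seededColour, h]

lemma seededColour_true_mono (E : Set (Sym2 α)) {A B : Set α} (hAB : A ⊆ B) (ω : Bits α) :
    seededColour E A true ω ≤ seededColour E B true ω := by
  intro v
  by_cases hB : ∃ a ∈ B, ReflTransGen (OpenEdge E ω) a v
  · simp [seededColour, hB]
  · have hA : ¬ ∃ a ∈ A, ReflTransGen (OpenEdge E ω) a v := fun ⟨a, ha, h⟩ ↦ hB ⟨a, hAB ha, h⟩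
    simp [seededColour, hA, hB]

lemma seededColour_false_anti (E : Set (Sym2 α)) {A B : Set α} (hAB : A ⊆ B) (ω : Bits α) :
    seededColour E B false ω ≤ seededColour E A false ω := by
  intro v
  by_cases hB : ∃ a ∈ B, ReflTransGen (OpenEdge E ω) a v
  · simp [seededColour, hB]
  · have hA : ¬ ∃ a ∈ A, ReflTransGen (OpenEdge E ω) a v := fun ⟨a, ha, h⟩ ↦ hB ⟨a, hAB ha, h⟩
    simp [seededColour, hA, hB]

lemma clusterColour_congr {E : Set (Sym2 α)} {U : Set α} (hU : EdgeClosed E U) {ω ω' : Bits α}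
    (h : ∀ i ∈ Sum.inl '' E ∪ Sum.inr '' U, ω i = ω' i) {v : α} (hv : v ∈ U) :
    clusterColour E ω v = clusterColour E ω' v := by
  rw [clusterColour, clusterColour,
    openEdge_congr fun e he ↦ h (.inl e) (.inl (Set.mem_image_of_mem _ he))]
  exact h _ (.inr (Set.mem_image_of_mem _ (hU.mem_of_reflTransGen (reflTransGen_minRep _ v) hv)))

lemma dependsOn_seededColour {E : Set (Sym2 α)} {U : Set α} (hU : EdgeClosed E U) (A : Set α)
    (c : Bool) {v : α} (hv : v ∈ U) :
    DependsOn (seededColour E A c · v) (Sum.inl '' E ∪ Sum.inr '' U) := by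
  classical
  intro ω ω' h
  have hopen : OpenEdge E ω = OpenEdge E ω' :=
    openEdge_congr fun e he ↦ h (.inl e) (.inl (Set.mem_image_of_mem _ he))
  simp only [seededColour, hopen, clusterColour_congr hU h hv]

open Classical in
lemma seededColour_eq_piecewise {E : Set (Sym2 α)} {A : Set α} (hA : EdgeClosed E A) (c : Bool)
    (ω : Bits α) : seededColour E A c ω = A.piecewise (fun _ ↦ c) (clusterColour E ω) := by
  ext v
  have hiff : (∃ a ∈ A, ReflTransGen (OpenEdge E ω) a v) ↔ v ∈ A :=
    ⟨fun ⟨a, ha, h⟩ ↦ hA.mem_of_reflTransGen h ha, fun hv ↦ ⟨v, hv, .refl⟩⟩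
  simp only [seededColour, hiff, Set.piecewise]

section Update

variable [DecidableEq α]

lemma seededColour_update_false (E : Set (Sym2 α)) (A : Set α) (c : Bool) (e : Sym2 α)
    (ω : Bits α) :
    seededColour E A c (Function.update ω (.inl e) false) = seededColour (E \ {e}) A c ω := by
  classical
  ext v
  simp [seededColour, clusterColour, openEdge_update_false]

lemma seededColour_update_true {E : Set (Sym2 α)} {A : Set α} {a b : α} (he : s(a, b) ∈ E)
    (ha : a ∈ A) (c : Bool) (ω : Bits α) :
    seededColour E A c (Function.update ω (.inl s(a, b)) true) =
      seededColour (E \ {s(a, b)}) (insert b A) c ω := by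
  classical
  ext v
  simp only [seededColour, exists_reflTransGen_update_true_iff he ha]
  split_ifs with h
  · rfl
  · simp only [clusterColour, ne_eq, reduceCtorEq, not_false_eq_true, Function.update_of_ne]
    refine congrArg (fun x ↦ ω (.inr x)) (minRep_congr (reflTransGen_update_true_iff he ?_ ?_))
    · exact fun hva ↦ h ⟨a, .inr ha, reflTransGen_openEdge_symm hva⟩
    · exact fun hvb ↦ h ⟨b, .inl rfl, reflTransGen_openEdge_symm hvb⟩

lemma clusterColour_update_inr {E : Set (Sym2 α)} {v : α} {ω : Bits α}
    (hv : minRep (OpenEdge E ω) v = v) (c : Bool) :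
    clusterColour E (Function.update ω (.inr v) c) = seededColour E {v} c ω := by
  ext x
  have hiff : minRep (OpenEdge E ω) x = v ↔ ReflTransGen (OpenEdge E ω) v x := by
    rw [← minRep_openEdge_eq_iff, hv, eq_comm]
  simp only [clusterColour, seededColour, openEdge_update_inr, Set.mem_singleton_iff,
    exists_eq_left]
  by_cases h : ReflTransGen (OpenEdge E ω) v x
  · simp [h, hiff.2 h]
  · simp [h, mt hiff.1 h]

end Update

section PosAssoc

variable (μ : Sym2 α ⊕ α → Measure Bool) [∀ i, IsProbabilityMeasure (μ i)]

lemma posAssoc_seededColour_of_boundary {E : Set (Sym2 α)} {U A : Set α} (hE : E.Finite)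
    (hU : U.Finite) (hEU : EdgeClosed E U) {a b : α} (he : s(a, b) ∈ E) (ha : a ∈ A) {c : Bool}
    (htrue : PosAssoc (Measure.infinitePi μ) (seededColour (E \ {s(a, b)}) (insert b A) c) U)
    (hfalse : PosAssoc (Measure.infinitePi μ) (seededColour (E \ {s(a, b)}) A c) U) :
    PosAssoc (Measure.infinitePi μ) (seededColour E A c) U := by
  classical
  refine .of_update μ ((hE.image _).union (hU.image _))
    (fun v hv ↦ dependsOn_seededColour hEU A c hv) (.inl s(a, b)) ?_ ?_ ?_ <;>
    simp only [seededColour_update_false, seededColour_update_true he ha]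
  · exact htrue
  · exact hfalse
  · cases c
    · exact .inr (seededColour_false_anti _ (Set.subset_insert b A))
    · exact .inl (seededColour_true_mono _ (Set.subset_insert b A))

lemma posAssoc_clusterColour_of_forall_encode_le {E : Set (Sym2 α)} {U : Set α} (hE : E.Finite)
    (hU : U.Finite) (hEU : EdgeClosed E U) {v : α} (hv : v ∈ U)
    (hmin : ∀ w ∈ U, Encodable.encode v ≤ Encodable.encode w)
    (h : ∀ c, PosAssoc (Measure.infinitePi μ) (seededColour E {v} c) U) :
    PosAssoc (Measure.infinitePi μ) (clusterColour E) U := by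
  classical
  have hrep (ω : Bits α) : minRep (OpenEdge E ω) v = v :=
    minRep_eq_of_encode_le .refl fun w hw ↦ hmin w (hEU.mem_of_reflTransGen hw hv)
  refine .of_update μ ((hE.image _).union (hU.image _))
    (fun w hw ω ω' hω ↦ clusterColour_congr hEU hω hw) (.inr v) ?_ ?_ (.inl ?_) <;>
    simp only [clusterColour_update_inr (hrep _)]
  · exact h true
  · exact h false
  · exact seededColour_false_le_true E {v}

lemma posAssoc_seededColour_of_edgeClosed {ν : Measure (Bits α)} {E : Set (Sym2 α)} {U A : Set α}
    (hA : EdgeClosed E A) (h : PosAssoc ν (clusterColour E) (U \ A)) (c : Bool) :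
    PosAssoc ν (seededColour E A c) U := by
  have heq := funext (seededColour_eq_piecewise hA c)
  exact heq ▸ h.piecewise fun _ ↦ c

-- The clusters are explored one after the other: reveal the colour of the vertex of smallest code,
-- which represents its cluster, then this cluster edge by edge, and continue in the rest of `U`.
open Classical in
theorem posAssoc_seededColour {E : Set (Sym2 α)} {U A : Set α} (hE : E.Finite) (hU : U.Finite)
    (hEU : EdgeClosed E U) (hA : A ⊆ U) (c : Bool) :
    PosAssoc (Measure.infinitePi μ) (seededColour E A c) U := by
  obtain rfl | hUne := U.eq_empty_or_nonempty
  · exact posAssoc_empty _ _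
  by_cases hAe : A = ∅
  · obtain ⟨v, hv, hmin⟩ := Set.exists_min_image U Encodable.encode hU hUne
    rw [hAe, seededColour_empty]
    exact posAssoc_clusterColour_of_forall_encode_le μ hE hU hEU hv hmin
      fun c ↦ posAssoc_seededColour hE hU hEU (Set.singleton_subset_iff.2 hv) c
  by_cases hcl : EdgeClosed E A
  · refine posAssoc_seededColour_of_edgeClosed hcl ?_ c
    rw [← seededColour_empty E c]
    have hEU' : EdgeClosed E (U \ A) := fun a b hab ha ↦
      ⟨hEU hab ha.1, fun hb ↦ ha.2 (hcl (Sym2.eq_swap ▸ hab) hb)⟩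
    exact posAssoc_seededColour hE (hU.subset Set.sdiff_subset) hEU' (Set.empty_subset _) c
  · obtain ⟨a, b, he, ha, -⟩ : ∃ a b, s(a, b) ∈ E ∧ a ∈ A ∧ b ∉ A := by
      simpa [EdgeClosed] using hcl
    have hEU' : EdgeClosed (E \ {s(a, b)}) U := fun _ _ h ↦ hEU h.1
    have hE' : (E \ {s(a, b)}).Finite := hE.subset Set.sdiff_subset
    exact posAssoc_seededColour_of_boundary μ hE hU hEU he ha
      (posAssoc_seededColour hE' hU hEU' (Set.insert_subset (hEU he (hA ha)) hA) c)
      (posAssoc_seededColour hE' hU hEU' hA c)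
termination_by E.ncard + 2 * U.ncard + if A = ∅ then 1 else 0
decreasing_by
  · simp [hAe]
  · have := Set.ncard_lt_ncard (hA.sdiff_ssubset_of_nonempty (Set.nonempty_iff_ne_empty.2 hAe)) hU
    simp only [hAe, if_true, if_false]
    lia
  · have := Set.ncard_sdiff_singleton_lt_of_mem he hE
    simp only [(Set.insert_nonempty b A).ne_empty, hAe, if_false]
    lia
  · have := Set.ncard_sdiff_singleton_lt_of_mem he hE
    simp only [hAe, if_false]
    lia

end PosAssoc

end ClusterColouring

/-! ### Cluster colourings of infinite graphs -/

section InfiniteVolume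

open Filter Relation

variable {α : Type*}

lemma exists_edgeClosed_superset {E : Set (Sym2 α)} (hE : E.Finite) {U : Set α} (hU : U.Finite) :
    ∃ U' ⊇ U, U'.Finite ∧ EdgeClosed E U' := by
  classical
  refine ⟨U ∪ ⋃ e ∈ E, (e.toFinset : Set α), Set.subset_union_left,
    hU.union (hE.biUnion fun e _ ↦ e.toFinset.finite_toSet), fun a b hab _ ↦ .inr ?_⟩
  exact Set.mem_biUnion hab (by simp)

variable [Encodable α]

lemma eventually_minRep_inter (E : Set (Sym2 α)) (ω : Bits α) (v : α) :
    ∀ᶠ S : Finset (Sym2 α) in atTop,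
      minRep (OpenEdge (↑S ∩ E) ω) v = minRep (OpenEdge E ω) v := by
  have hpath (w : α) (hw : ReflTransGen (OpenEdge E ω) v w) :
      ∀ᶠ S : Finset (Sym2 α) in atTop, ReflTransGen (OpenEdge (↑S ∩ E) ω) v w := by
    induction hw with
    | refl => exact .of_forall fun _ ↦ .refl
    | @tail b c _ hbc ih =>
      filter_upwards [ih, eventually_ge_atTop {s(b, c)}] with S hS hbcS
      exact hS.tail ⟨⟨Finset.singleton_subset_iff.1 hbcS, hbc.1⟩, hbc.2⟩
  filter_upwards [hpath _ (reflTransGen_minRep _ v)] with S hS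
  exact minRep_eq_of_encode_le hS fun w hw ↦ (reflTransGen_minRep_and_encode_le _ v).2 w
    (ReflTransGen.mono (fun _ _ h ↦ ⟨h.1.2, h.2⟩) _ _ hw)

lemma eventually_clusterColour_inter_mem_iff (E : Set (Sym2 α)) {U : Set α} (hU : U.Finite)
    {C : Set (α → Bool)} (hC : DependsOn (· ∈ C) U) (ω : Bits α) :
    ∀ᶠ S : Finset (Sym2 α) in atTop,
      (ω ∈ {ω | clusterColour (↑S ∩ E) ω ∈ C} ↔ ω ∈ {ω | clusterColour E ω ∈ C}) := by
  filter_upwards [hU.eventually_all.2 fun v _ ↦ eventually_minRep_inter E ω v] with S hS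
  exact iff_of_eq (hC fun v hv ↦ congrArg (fun x ↦ ω (.inr x)) (hS v hv))

lemma measurableSet_clusterColour_mem_of_finite {E : Set (Sym2 α)} (hE : E.Finite) {U : Set α}
    (hU : U.Finite) {C : Set (α → Bool)} (hC : DependsOn (· ∈ C) U) :
    MeasurableSet {ω | clusterColour E ω ∈ C} := by
  obtain ⟨U', hUU', hU', hEU'⟩ := exists_edgeClosed_superset hE hU
  exact measurableSet_of_dependsOn ((hE.image _).union (hU'.image _)) fun _ _ h ↦
    hC fun v hv ↦ clusterColour_congr hEU' h (hUU' hv)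

@[fun_prop]
lemma measurable_clusterColour (E : Set (Sym2 α)) : Measurable (clusterColour E) := by
  refine measurable_pi_iff.2 fun v ↦ measurable_to_bool ?_
  have hv : DependsOn (· ∈ {ξ : α → Bool | ξ v = true}) {v} := fun ξ ξ' h ↦ by
    simp [h v rfl]
  exact measurableSet_of_tendsto_indicator atTop
    (fun S ↦ measurableSet_clusterColour_mem_of_finite (S.finite_toSet.inter_of_left E)
      (Set.finite_singleton v) hv)
    (eventually_clusterColour_inter_mem_iff E (Set.finite_singleton v) hv)

lemma tendsto_measureReal_clusterColour_inter (ν : Measure (Bits α)) [IsFiniteMeasure ν]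
    (E : Set (Sym2 α)) {U : Set α} (hU : U.Finite) {C : Set (α → Bool)}
    (hC : DependsOn (· ∈ C) U) :
    Tendsto (fun S : Finset (Sym2 α) ↦ ν.real {ω | clusterColour (↑S ∩ E) ω ∈ C}) atTop
      (nhds (ν.real {ω | clusterColour E ω ∈ C})) :=
  (ENNReal.tendsto_toReal (measure_ne_top _ _)).comp
    (tendsto_measure_of_tendsto_indicator_of_isFiniteMeasure atTop ν
      (fun S ↦ measurableSet_clusterColour_mem_of_finite (S.finite_toSet.inter_of_left E) hU hC)
      (eventually_clusterColour_inter_mem_iff E hU hC))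

theorem posAssoc_clusterColour (μ : Sym2 α ⊕ α → Measure Bool) [∀ i, IsProbabilityMeasure (μ i)]
    (E : Set (Sym2 α)) {U : Set α} (hU : U.Finite) :
    PosAssoc (Measure.infinitePi μ) (clusterColour E) U := by
  intro C D hC hD hCup hDup
  refine le_of_tendsto_of_tendsto' ((tendsto_measureReal_clusterColour_inter _ E hU hC).mul
    (tendsto_measureReal_clusterColour_inter _ E hU hD))
    (tendsto_measureReal_clusterColour_inter _ E hU (dependsOn_inter hC hD)) fun S ↦ ?_
  have hS : (↑S ∩ E : Set (Sym2 α)).Finite := S.finite_toSet.inter_of_left E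
  obtain ⟨U', hUU', hU', hEU'⟩ := exists_edgeClosed_superset hS hU
  have hpos := posAssoc_seededColour μ hS hU' hEU' (Set.empty_subset U') true
  rw [seededColour_empty] at hpos
  exact hpos.mono hUU' hC hD hCup hDup

end InfiniteVolume

/-! ### The law of the bits -/

section BitsLaw

open Relation

variable {α : Type*}

/-- The law of independent bits, those of the edges having law `me` and those of the vertices
having law `mv`. -/
noncomputable def bitsLaw (me mv : Measure Bool) : Measure (Bits α) :=
  Measure.infinitePi (Sum.elim (fun _ ↦ me) fun _ ↦ mv)

variable (me mv : Measure Bool) [IsProbabilityMeasure me] [IsProbabilityMeasure mv]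

instance (i : Sym2 α ⊕ α) : IsProbabilityMeasure (Sum.elim (fun _ ↦ me) (fun _ ↦ mv) i) := by
  cases i <;> simpa

instance : IsProbabilityMeasure (bitsLaw me mv : Measure (Bits α)) := by
  unfold bitsLaw
  infer_instance

lemma measurable_sumElim {β γ δ : Type*} [MeasurableSpace δ] :
    Measurable fun q : (β → δ) × (γ → δ) ↦ Sum.elim q.1 q.2 :=
  (MeasurableEquiv.sumPiEquivProdPi fun _ : β ⊕ γ ↦ δ).symm.measurable

lemma map_sumElim_infinitePi_prod_infinitePi {β γ δ : Type*} [MeasurableSpace δ]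
    (μ : β → Measure δ) (ν : γ → Measure δ) [∀ i, IsProbabilityMeasure (μ i)]
    [∀ i, IsProbabilityMeasure (ν i)] [∀ i, IsProbabilityMeasure (Sum.elim μ ν i)] :
    ((Measure.infinitePi μ).prod (Measure.infinitePi ν)).map (fun q ↦ Sum.elim q.1 q.2) =
      Measure.infinitePi (Sum.elim μ ν) := by
  refine Measure.eq_infinitePi _ fun s t ht ↦ ?_
  rw [Measure.map_apply measurable_sumElim (.pi s.countable_toSet fun _ _ ↦ ht _)]
  have hpre : (fun q : (β → δ) × (γ → δ) ↦ Sum.elim q.1 q.2) ⁻¹' (Set.pi s t) =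
      (Set.pi s.toLeft fun i ↦ t (.inl i)) ×ˢ (Set.pi s.toRight fun i ↦ t (.inr i)) := by
    ext q
    simp [Set.mem_pi]
  rw [hpre, Measure.prod_prod, Measure.infinitePi_pi _ fun _ _ ↦ ht _,
    Measure.infinitePi_pi _ fun _ _ ↦ ht _]
  conv_rhs => rw [← Finset.toLeft_disjSum_toRight (u := s)]
  rw [Finset.prod_disjSum]
  rfl

lemma bitsLaw_apply {S : Set (Bits α)} (hS : MeasurableSet S) :
    bitsLaw me mv S = ∫⁻ η, Measure.infinitePi (fun _ : α ↦ mv) {κ | Sum.elim η κ ∈ S}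
      ∂Measure.infinitePi fun _ : Sym2 α ↦ me := by
  rw [bitsLaw, ← map_sumElim_infinitePi_prod_infinitePi, Measure.map_apply measurable_sumElim hS,
    Measure.prod_apply (measurable_sumElim hS)]
  rfl

lemma measurable_infinitePi_sumElim_mem {S : Set (Bits α)} (hS : MeasurableSet S) :
    Measurable fun η ↦ Measure.infinitePi (fun _ : α ↦ mv) {κ | Sum.elim η κ ∈ S} :=
  measurable_measure_prodMk_left (measurable_sumElim hS)

lemma infinitePi_map_comp_injective {β γ δ : Type*} [MeasurableSpace δ] (ν : Measure δ)
    [IsProbabilityMeasure ν] {f : β → γ} (hf : f.Injective) :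
    (Measure.infinitePi fun _ : γ ↦ ν).map (fun κ i ↦ κ (f i)) =
      Measure.infinitePi fun _ : β ↦ ν :=
  Measure.map_infinitePi_infinitePi_of_inj (P := fun _ ↦ ν) hf

lemma infinitePi_map_comp_eq_of_ker_eq {β γ δ : Type*} [MeasurableSpace δ] (ν : Measure δ)
    [IsProbabilityMeasure ν] {R R' : β → γ} (h : ∀ u v, R u = R v ↔ R' u = R' v) :
    (Measure.infinitePi fun _ : γ ↦ ν).map (fun κ v ↦ κ (R v)) =
      (Measure.infinitePi fun _ : γ ↦ ν).map fun κ v ↦ κ (R' v) := by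
  let q : β → Set.range R := Set.rangeFactorization R
  have hlaw (f : Set.range R → γ) (hf : f.Injective) :
      (Measure.infinitePi fun _ : γ ↦ ν).map (fun κ v ↦ κ (f (q v))) =
        (Measure.infinitePi fun _ : Set.range R ↦ ν).map fun y v ↦ y (q v) := by
    rw [← infinitePi_map_comp_injective ν hf, Measure.map_map (by fun_prop) (by fun_prop)]
    rfl
  choose c hc using fun k : Set.range R ↦ k.2
  have hinj : Function.Injective fun k ↦ R' (c k) := fun k l hkl ↦ by
    have := (h _ _).2 hkl
    rw [hc, hc] at this
    exact Subtype.ext this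
  have hR' (v : β) : R' (c (q v)) = R' v := (h _ _).1 (hc (q v))
  have hlaw' := hlaw _ hinj
  simp only [hR'] at hlaw'
  exact hlaw'.symm ▸ hlaw _ Subtype.val_injective

lemma bitsLaw_map_permute (σ : α ≃ α) :
    (bitsLaw me mv).map (fun ω i ↦ ω (Sum.map (Sym2.map σ) σ i)) = bitsLaw me mv := by
  have hinj : Function.Injective (Sum.map (Sym2.map σ) σ) :=
    (Sym2.map.injective σ.injective).sumMap σ.injective
  have hlaw := Measure.map_infinitePi_infinitePi_of_inj
    (P := Sum.elim (fun _ : Sym2 α ↦ me) fun _ : α ↦ mv) hinj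
  have hmarg : (fun i ↦ Sum.elim (fun _ ↦ me) (fun _ ↦ mv) (Sum.map (Sym2.map σ) σ i)) =
      Sum.elim (fun _ : Sym2 α ↦ me) fun _ : α ↦ mv := by
    ext1 i
    cases i <;> rfl
  simp only [hmarg] at hlaw
  exact hlaw

/-- The bijection `σ` of the vertices is an automorphism of the graph with edge set `E`. -/
def PreservesEdges (E : Set (Sym2 α)) (σ : α ≃ α) : Prop := ∀ e, e.map σ ∈ E ↔ e ∈ E

lemma openEdge_permute {E : Set (Sym2 α)} {σ : α ≃ α} (hσ : PreservesEdges E σ) (ω : Bits α)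
    (u v : α) :
    OpenEdge E (fun i ↦ ω (Sum.map (Sym2.map σ) σ i)) u v ↔ OpenEdge E ω (σ u) (σ v) := by
  rw [OpenEdge, OpenEdge, ← hσ s(u, v)]
  rfl

lemma reflTransGen_openEdge_permute {E : Set (Sym2 α)} {σ : α ≃ α} (hσ : PreservesEdges E σ)
    (ω : Bits α) (u v : α) :
    ReflTransGen (OpenEdge E fun i ↦ ω (Sum.map (Sym2.map σ) σ i)) u v ↔
      ReflTransGen (OpenEdge E ω) (σ u) (σ v) := by
  refine ⟨fun h ↦ ReflTransGen.lift σ (fun a b ↦ (openEdge_permute hσ ω a b).1) _ _ h,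
    fun h ↦ ?_⟩
  have := ReflTransGen.lift (p := OpenEdge E fun i ↦ ω (Sum.map (Sym2.map σ) σ i)) σ.symm
    (fun a b hab ↦ (openEdge_permute hσ ω _ _).2 (by simpa using hab)) _ _ h
  simpa [Function.onFun] using this

variable [Encodable α]

-- An automorphism changes the representatives of the clusters, but not which vertices share one;
-- given the edges, only the latter matters for the law of the colouring.
theorem bitsLaw_map_clusterColour_comp {E : Set (Sym2 α)} {σ : α ≃ α} (hσ : PreservesEdges E σ) :
    (bitsLaw me mv).map (fun ω v ↦ clusterColour E ω (σ v)) =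
      (bitsLaw me mv).map (clusterColour E) := by
  have hmeas : Measurable fun (ω : Bits α) v ↦ clusterColour E ω (σ v) := by fun_prop
  let rep (η : Sym2 α → Bool) : α → α := minRep (OpenEdge E (Sum.elim η fun _ ↦ false))
  have hker (η : Sym2 α → Bool) (u v : α) : rep η (σ u) = rep η (σ v) ↔
      rep (fun e ↦ η (e.map σ)) u = rep (fun e ↦ η (e.map σ)) v := by
    rw [minRep_openEdge_eq_iff, minRep_openEdge_eq_iff, ← reflTransGen_openEdge_permute hσ]
    rfl
  ext C hC
  rw [Measure.map_apply hmeas hC, Measure.map_apply (measurable_clusterColour E) hC,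
    bitsLaw_apply me mv (hmeas hC), bitsLaw_apply me mv (measurable_clusterColour E hC)]
  conv_rhs => rw [← infinitePi_map_comp_injective me (Sym2.map.injective σ.injective)]
  rw [lintegral_map (measurable_infinitePi_sumElim_mem mv (measurable_clusterColour E hC))
    (by fun_prop)]
  refine lintegral_congr fun η ↦ ?_
  have hlaw := congrArg (· C) (infinitePi_map_comp_eq_of_ker_eq mv (hker η))
  rwa [Measure.map_apply (by fun_prop) hC, Measure.map_apply (by fun_prop) hC] at hlaw

end BitsLaw

/-! ### The colour model and the bond model -/

/-- What is needed of the adjacency relation along which coloured paths run; both square adjacency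
and `*`-adjacency have these properties. -/
structure PlanarAdjacency (adj : V → V → Prop) : Prop where
  of_sqAdj : ∀ {u v}, SqAdj u v → adj u v
  symm : ∀ {u v}, adj u v → adj v u
  near : ∀ {u v}, adj u v → Near u v
  corner : ∀ {u v}, adj u v → u.1 ≠ v.1 → u.2 ≠ v.2 → adj u (u.1, v.2)
  isometry : ∀ {σ : V ≃ V}, IsLatticeIsometry σ → ∀ {u v}, adj (σ u) (σ v) ↔ adj u v

lemma near_of_sq_add_sq_le {u v : V} (h : (u.1 - v.1) ^ 2 + (u.2 - v.2) ^ 2 ≤ 2) : Near u v :=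
  ⟨Int.lt_add_one_iff.1 (abs_lt_of_sq_lt_sq (by nlinarith) zero_le_two),
    Int.lt_add_one_iff.1 (abs_lt_of_sq_lt_sq (by nlinarith) zero_le_two)⟩

lemma one_le_sq_sub {a b : ℤ} (h : a ≠ b) : 1 ≤ (a - b) ^ 2 :=
  Int.add_one_le_of_lt (sq_pos_iff.2 (sub_ne_zero.2 h))

lemma SqAdj.eq_or_eq {u v : V} (h : SqAdj u v) : u.1 = v.1 ∨ u.2 = v.2 := by
  by_contra! hne
  unfold SqAdj at h
  linarith [one_le_sq_sub hne.1, one_le_sq_sub hne.2]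

lemma planarAdjacency_sqAdj : PlanarAdjacency SqAdj where
  of_sqAdj h := h
  symm h := by
    unfold SqAdj at *
    linarith
  near h := near_of_sq_add_sq_le (by unfold SqAdj at h; omega)
  corner h h₁ h₂ := (h.eq_or_eq.elim h₁ h₂).elim
  isometry hσ _ _ := by rw [SqAdj, hσ, SqAdj]

lemma planarAdjacency_starAdj : PlanarAdjacency StarAdj where
  of_sqAdj h := .inl h
  symm h := by
    unfold StarAdj at *
    exact h.imp (fun h ↦ by linarith) fun h ↦ by linarith
  near h := near_of_sq_add_sq_le (by unfold StarAdj at h; omega)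
  corner h h₁ h₂ := by
    unfold StarAdj at *
    have := one_le_sq_sub h₁
    have := one_le_sq_sub h₂
    left
    simp only [sub_self]
    omega
  isometry hσ _ _ := by rw [StarAdj, hσ, StarAdj]

lemma HasPath.imp {E E' : V → V → Prop} {R A B : Set V} {ℓ : ℕ∞} (h : HasPath E R A B ℓ)
    (hE : ∀ u ∈ R, ∀ v ∈ R, E u v → E' u v) : HasPath E' R A B ℓ := by
  obtain ⟨f, k, hR, hf, hfAB⟩ := h
  exact ⟨f, k, hR, fun m hm hmk ↦ hE _ (hR m hmk.le) _ (hR (m + 1) hmk) (hf m hm hmk), hfAB⟩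

lemma hasPath_preimage_iff {E E' : V → V → Prop} {σ : V ≃ V}
    (h : ∀ u v, E u v ↔ E' (σ u) (σ v)) (R A B : Set V) (ℓ : ℕ∞) :
    HasPath E (σ ⁻¹' R) (σ ⁻¹' A) (σ ⁻¹' B) ℓ ↔ HasPath E' R A B ℓ := by
  refine ⟨fun ⟨f, k, hR, hf, hfAB⟩ ↦ ⟨σ ∘ f, k, hR, fun m hm hmk ↦ (h _ _).1 (hf m hm hmk), hfAB⟩,
    fun ⟨f, k, hR, hf, hfAB⟩ ↦ ⟨σ.symm ∘ f, k, ?_, fun m hm hmk ↦ (h _ _).2 ?_, ?_⟩⟩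
  · simpa using hR
  · simpa using hf m hm hmk
  · simpa using hfAB

/-- The vertices `u` and `v` are adjacent and both black in the colouring `ξ`. -/
def BlackAdj (adj : V → V → Prop) (ξ : V → Bool) (u v : V) : Prop :=
  adj u v ∧ ξ u = true ∧ ξ v = true

lemma dependsOn_pathEvent_blackAdj (adj : V → V → Prop) (R A B : Set V) (ℓ : ℕ∞) :
    DependsOn (· ∈ pathEvent (BlackAdj adj) R A B ℓ) R := by
  have himp {ξ ξ' : V → Bool} (h : ∀ v ∈ R, ξ v = ξ' v)
      (hξ : ξ ∈ pathEvent (BlackAdj adj) R A B ℓ) : ξ' ∈ pathEvent (BlackAdj adj) R A B ℓ :=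
    hξ.imp fun u hu v hv huv ↦ ⟨huv.1, h u hu ▸ huv.2.1, h v hv ▸ huv.2.2⟩
  exact fun ξ ξ' h ↦ propext ⟨himp h, himp fun v hv ↦ (h v hv).symm⟩

lemma isUpperSet_pathEvent_blackAdj (adj : V → V → Prop) (R A B : Set V) (ℓ : ℕ∞) :
    IsUpperSet (pathEvent (BlackAdj adj) R A B ℓ) := fun _ _ hξ h ↦
  h.imp fun u _ v _ huv ↦ ⟨huv.1, hξ u huv.2.1, hξ v huv.2.2⟩

/-- The edges of the square lattice. -/
def latticeEdges : Set (Sym2 V) := Sym2.fromRel (r := SqAdj) ⟨fun _ _ ↦ planarAdjacency_sqAdj.symm⟩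

lemma mem_latticeEdges {u v : V} : s(u, v) ∈ latticeEdges ↔ SqAdj u v := Sym2.fromRel_prop

lemma preservesEdges_latticeEdges {σ : V ≃ V} (hσ : IsLatticeIsometry σ) :
    PreservesEdges latticeEdges σ := by
  rintro ⟨u, v⟩
  exact planarAdjacency_sqAdj.isometry hσ

/-- The edges with both endpoints in `R`. -/
def edgesWithin {α : Type*} (R : Set α) : Set (Sym2 α) := {e | ∀ v ∈ e, v ∈ R}

lemma mem_edgesWithin {α : Type*} {R : Set α} {u v : α} : s(u, v) ∈ edgesWithin R ↔ u ∈ R ∧ v ∈ R :=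
  Sym2.ball

lemma finite_edgesWithin {α : Type*} {R : Set α} (hR : R.Finite) : (edgesWithin R).Finite := by
  refine ((hR.prod hR).image fun q ↦ s(q.1, q.2)).subset ?_
  rintro ⟨u, v⟩ h
  exact ⟨(u, v), mem_edgesWithin.1 h, rfl⟩

lemma dependsOn_pathEvent_openEdge (E : Set (Sym2 V)) (R A B : Set V) (ℓ : ℕ∞) :
    DependsOn (· ∈ pathEvent (OpenEdge E) R A B ℓ) (Sum.inl '' edgesWithin R) := by
  have himp {ω ω' : Bits V} (h : ∀ i ∈ Sum.inl '' edgesWithin R, ω i = ω' i)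
      (hω : ω ∈ pathEvent (OpenEdge E) R A B ℓ) : ω' ∈ pathEvent (OpenEdge E) R A B ℓ :=
    hω.imp fun u hu v hv huv ↦ ⟨huv.1, h _ ⟨_, mem_edgesWithin.2 ⟨hu, hv⟩, rfl⟩ ▸ huv.2⟩
  exact fun ω ω' h ↦ propext ⟨himp h, himp fun i hi ↦ (h i hi).symm⟩

lemma isUpperSet_pathEvent_openEdge (E : Set (Sym2 V)) (R A B : Set V) (ℓ : ℕ∞) :
    IsUpperSet (pathEvent (OpenEdge E) R A B ℓ) := fun _ _ hω h ↦
  h.imp fun _ _ _ _ huv ↦ ⟨huv.1, hω _ huv.2⟩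

lemma measurableSet_pathEvent_openEdge (E : Set (Sym2 V)) {R : Set V} (hR : R.Finite)
    (A B : Set V) (ℓ : ℕ∞) : MeasurableSet (pathEvent (OpenEdge E) R A B ℓ) :=
  measurableSet_of_dependsOn ((finite_edgesWithin hR).image _) (dependsOn_pathEvent_openEdge ..)

lemma measurableSet_pathEvent_blackAdj (adj : V → V → Prop) {R : Set V} (hR : R.Finite)
    (A B : Set V) (ℓ : ℕ∞) : MeasurableSet (pathEvent (BlackAdj adj) R A B ℓ) :=
  measurableSet_of_dependsOn hR (dependsOn_pathEvent_blackAdj ..)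

section Models

variable (me mv : Measure Bool) [IsProbabilityMeasure me] [IsProbabilityMeasure mv]

/-- The crossing model of the black paths of the DaC colouring. -/
noncomputable def colourModel {adj : V → V → Prop} (hadj : PlanarAdjacency adj) :
    CrossingModel (bitsLaw me mv : Measure (Bits V)) where
  rel ω := BlackAdj adj (clusterColour latticeEdges ω)
  rel_symm h := ⟨hadj.symm h.1, h.2.2, h.2.1⟩
  rel_near h := hadj.near h.1
  rel_corner h h₁ h₂ hz := ⟨hadj.corner h.1 h₁ h₂, h.2.1, hz.2.1⟩
  Incr S := ∃ (C : Set (V → Bool)) (U : Set V), U.Finite ∧ DependsOn (· ∈ C) U ∧ IsUpperSet C ∧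
    S = {ω | clusterColour latticeEdges ω ∈ C}
  incr_univ := ⟨Set.univ, ∅, Set.finite_empty, fun _ _ _ ↦ by simp, isUpperSet_univ, by simp⟩
  incr_inter := by
    rintro _ _ ⟨C, U, hU, hC, hCup, rfl⟩ ⟨D, W, hW, hD, hDup, rfl⟩
    exact ⟨C ∩ D, U ∪ W, hU.union hW, dependsOn_inter (hC.mono Set.subset_union_left)
      (hD.mono Set.subset_union_right), hCup.inter hDup, rfl⟩
  incr_pathEvent A B hR := ⟨_, _, hR, dependsOn_pathEvent_blackAdj adj _ A B ⊤,
    isUpperSet_pathEvent_blackAdj adj _ A B ⊤, rfl⟩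
  fkg := by
    rintro _ _ ⟨C, U, hU, hC, hCup, rfl⟩ ⟨D, W, hW, hD, hDup, rfl⟩
    exact posAssoc_clusterColour _ latticeEdges (hU.union hW) (hC.mono Set.subset_union_left)
      (hD.mono Set.subset_union_right) hCup hDup
  isometry_invariant {σ} hσ {R} A B ℓ hR := by
    have hmeas := measurableSet_pathEvent_blackAdj adj (hR.preimage σ.injective.injOn)
      (σ ⁻¹' A) (σ ⁻¹' B) ℓ
    have hlaw := congrArg (·.real (pathEvent (BlackAdj adj) (σ ⁻¹' R) (σ ⁻¹' A) (σ ⁻¹' B) ℓ))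
      (bitsLaw_map_clusterColour_comp me mv (preservesEdges_latticeEdges hσ))
    rw [map_measureReal_apply (by fun_prop) hmeas,
      map_measureReal_apply (measurable_clusterColour _) hmeas] at hlaw
    refine hlaw.symm.trans (congrArg _ (Set.ext fun ω ↦ ?_))
    exact hasPath_preimage_iff (fun u v ↦ and_congr_left' (hadj.isometry hσ).symm) R A B ℓ

/-- The crossing model of the open paths of bond percolation. -/
noncomputable def bondModel : CrossingModel (bitsLaw me mv : Measure (Bits V)) where
  rel := OpenEdge latticeEdges
  rel_symm h := h.symm
  rel_near h := planarAdjacency_sqAdj.near (mem_latticeEdges.1 h.1)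
  rel_corner h h₁ h₂ := ((mem_latticeEdges.1 h.1).eq_or_eq.elim h₁ h₂).elim
  Incr S := ∃ F : Set (Sym2 V ⊕ V), F.Finite ∧ DependsOn (· ∈ S) F ∧ IsUpperSet S
  incr_univ := ⟨∅, Set.finite_empty, fun _ _ _ ↦ by simp, isUpperSet_univ⟩
  incr_inter := by
    rintro _ _ ⟨F, hF, hS, hSup⟩ ⟨G, hG, hT, hTup⟩
    exact ⟨F ∪ G, hF.union hG, dependsOn_inter (hS.mono Set.subset_union_left)
      (hT.mono Set.subset_union_right), hSup.inter hTup⟩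
  incr_pathEvent A B hR := ⟨_, (finite_edgesWithin hR).image _,
    dependsOn_pathEvent_openEdge _ _ A B ⊤, isUpperSet_pathEvent_openEdge _ _ A B ⊤⟩
  fkg := by
    rintro _ _ ⟨F, hF, hS, hSup⟩ ⟨G, hG, hT, hTup⟩
    exact posAssoc_infinitePi _ (hF.union hG) (hS.mono Set.subset_union_left)
      (hT.mono Set.subset_union_right) hSup hTup
  isometry_invariant {σ} hσ {R} A B ℓ hR := by
    have hmeas := measurableSet_pathEvent_openEdge latticeEdges (hR.preimage σ.injective.injOn)
      (σ ⁻¹' A) (σ ⁻¹' B) ℓ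
    conv_lhs => rw [← bitsLaw_map_permute me mv σ, map_measureReal_apply (by fun_prop) hmeas]
    refine congrArg _ (Set.ext fun ω ↦ ?_)
    exact hasPath_preimage_iff (openEdge_permute (preservesEdges_latticeEdges hσ) ω) R A B ℓ

lemma mul_bitsLaw_le {α : Type*} {S T : Set (Bits α)} (hS : MeasurableSet S)
    (hT : MeasurableSet T)
    (h : ∀ ω ∈ S, ∃ v, ∀ ω', (∀ e, ω' (.inl e) = ω (.inl e)) → ω' (.inr v) = true → ω' ∈ T) :
    mv {true} * bitsLaw me mv S ≤ bitsLaw me mv T := by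
  rw [bitsLaw_apply me mv hS, bitsLaw_apply me mv hT,
    ← lintegral_const_mul _ (measurable_infinitePi_sumElim_mem mv hS)]
  refine lintegral_mono fun η ↦ ?_
  obtain hη | ⟨κ, hκ⟩ := {κ | Sum.elim η κ ∈ S}.eq_empty_or_nonempty
  · simp [hη]
  obtain ⟨v, hv⟩ := h _ hκ
  calc mv {true} * _ ≤ mv {true} * 1 := mul_le_mul_right prob_le_one _
    _ = Measure.infinitePi (fun _ : α ↦ mv) {κ | κ v = true} := by
      conv_lhs => rw [mul_one, ← Measure.infinitePi_map_eval (fun _ : α ↦ mv) v,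
        Measure.map_apply (measurable_pi_apply v) (measurableSet_singleton true)]
      rfl
    _ ≤ _ := measure_mono fun κ' hκ' ↦ hv (Sum.elim η κ') (fun _ ↦ rfl) hκ'

lemma minRep_eq_of_steps {E : Set (Sym2 V)} {ω : Bits V} {f : ℕ → V} {k : ℕ}
    (hf : Steps (OpenEdge E ω) f 0 k) {i : ℕ} (hi : i ≤ k) :
    minRep (OpenEdge E ω) (f i) = minRep (OpenEdge E ω) (f 0) := by
  induction i with
  | zero => rfl
  | succ i ih =>
    rw [← ih (by omega)]
    exact (minRep_openEdge_eq_iff.2 (.single (hf i (by omega) hi))).symm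

/-- Given an open path, its cluster is black with probability at least `mv {true}`. -/
lemma mul_bondModel_le_colourModel {adj : V → V → Prop} (hadj : PlanarAdjacency adj) {R : Set V}
    (hR : R.Finite) (A B : Set V) (ℓ : ℕ∞) :
    mv.real {true} * (bitsLaw me mv).real (pathEvent (bondModel me mv).rel R A B ℓ) ≤
      (bitsLaw me mv).real (pathEvent (colourModel me mv hadj).rel R A B ℓ) := by
  have hle := mul_bitsLaw_le me mv (measurableSet_pathEvent_openEdge latticeEdges hR A B ℓ)
    (measurable_clusterColour latticeEdges (measurableSet_pathEvent_blackAdj adj hR A B ℓ)) ?_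
  · have hle' := ENNReal.toReal_mono (measure_ne_top _ _) hle
    rwa [ENNReal.toReal_mul] at hle'
  rintro ω ⟨f, k, hfR, hf, hfAB⟩
  refine ⟨minRep (OpenEdge latticeEdges ω) (f 0), fun ω' hω' hblack ↦ ?_⟩
  have hcol {i : ℕ} (hi : i ≤ k) : clusterColour latticeEdges ω' (f i) = true := by
    rw [clusterColour, openEdge_congr fun e _ ↦ hω' e, minRep_eq_of_steps hf hi, hblack]
  exact ⟨f, k, hfR, fun m hm hmk ↦ ⟨hadj.of_sqAdj (mem_latticeEdges.1 (hf m hm hmk).1),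
    hcol hmk.le, hcol hmk⟩, hfAB⟩

end Models

/-! ### Mixing -/

section Mixing

open Relation

lemma disjoint_edgesWithin {α : Type*} {R R' : Set α} (h : Disjoint R R') :
    Disjoint (edgesWithin R) (edgesWithin R') := by
  rw [Set.disjoint_left] at *
  rintro ⟨u, v⟩ huv huv'
  exact h (mem_edgesWithin.1 huv).1 (mem_edgesWithin.1 huv').1

lemma disjoint_box {x₁ x₂ x₁' x₂' : ℤ} (h : x₂ < x₁') (y₁ y₂ y₁' y₂' : ℤ) :
    Disjoint (box x₁ x₂ y₁ y₂) (box x₁' x₂' y₁' y₂') := by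
  rw [Set.disjoint_left]
  rintro v ⟨⟨-, hv⟩, -⟩ ⟨⟨hv', -⟩, -⟩
  omega

lemma box_subset_box {x₁ x₂ y₁ y₂ x₁' x₂' y₁' y₂' : ℤ} (hx₁ : x₁' ≤ x₁) (hx₂ : x₂ ≤ x₂')
    (hy₁ : y₁' ≤ y₁) (hy₂ : y₂ ≤ y₂') : box x₁ x₂ y₁ y₂ ⊆ box x₁' x₂' y₁' y₂' :=
  fun _ h ↦ ⟨⟨hx₁.trans h.1.1, h.1.2.trans hx₂⟩, hy₁.trans h.2.1, h.2.2.trans hy₂⟩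

lemma measureReal_inter_le_of_indep_approx {Ω : Type*} [MeasurableSpace Ω] {μ : Measure Ω}
    [IsProbabilityMeasure μ] {S₁ S₂ T₁ T₂ N₁ N₂ : Set Ω} (h₁ : ∀ ω ∉ N₁, ω ∈ S₁ ↔ ω ∈ T₁)
    (h₂ : ∀ ω ∉ N₂, ω ∈ S₂ ↔ ω ∈ T₂) (hind : μ.real (T₁ ∩ T₂) = μ.real T₁ * μ.real T₂) :
    μ.real (S₁ ∩ S₂) ≤ μ.real S₁ * μ.real S₂ + 2 * (μ.real N₁ + μ.real N₂) := by
  have hle {A B N : Set Ω} (h : A ⊆ B ∪ N) : μ.real A ≤ μ.real B + μ.real N :=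
    (measureReal_mono h).trans (measureReal_union_le _ _)
  have hS : μ.real (S₁ ∩ S₂) ≤ μ.real (T₁ ∩ T₂) + μ.real N₁ + μ.real N₂ := by
    refine (hle (B := T₁ ∩ T₂ ∪ N₁) fun ω hω ↦ ?_).trans (by gcongr; exact hle subset_rfl)
    have := h₁ ω
    have := h₂ ω
    grind
  have hT₁ : μ.real T₁ ≤ μ.real S₁ + μ.real N₁ := hle fun ω hω ↦ by
    have := h₁ ω
    grind
  have hT₂ : μ.real T₂ ≤ μ.real S₂ + μ.real N₂ := hle fun ω hω ↦ by
    have := h₂ ω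
    grind
  have hmul : μ.real T₁ * μ.real T₂ ≤ μ.real S₁ * μ.real S₂ + μ.real N₁ + μ.real N₂ := calc
    _ ≤ μ.real T₁ * μ.real S₂ + μ.real T₁ * μ.real N₂ := by
      rw [← mul_add]
      gcongr
    _ ≤ (μ.real S₁ + μ.real N₁) * μ.real S₂ + 1 * μ.real N₂ := by
      gcongr
      exact measureReal_le_one
    _ ≤ μ.real S₁ * μ.real S₂ + μ.real N₁ * 1 + 1 * μ.real N₂ := by
      rw [add_mul]
      gcongr
      exact measureReal_le_one
    _ = _ := by ring
  linarith

section Exit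

variable {α : Type*} {E : Set (Sym2 α)} {R B : Set α}

/-- The event that some open cluster meets `R` without being contained in `B`. -/
def exitEvent (E : Set (Sym2 α)) (R B : Set α) : Set (Bits α) :=
  {ω | ∃ u ∈ R, ∃ v, v ∉ B ∧ ReflTransGen (OpenEdge E ω) u v}

lemma reflTransGen_openEdge_within (hRB : R ⊆ B) {ω : Bits α} (hω : ω ∉ exitEvent E R B) {u w : α}
    (hu : u ∈ R) (h : ReflTransGen (OpenEdge E ω) u w) :
    w ∈ B ∧ ReflTransGen (OpenEdge (E ∩ edgesWithin B) ω) u w := by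
  induction h with
  | refl => exact ⟨hRB hu, .refl⟩
  | @tail b c hb hbc ih =>
    have hc : c ∈ B := by
      by_contra hc
      exact hω ⟨u, hu, c, hc, hb.tail hbc⟩
    exact ⟨hc, ih.2.tail ⟨⟨hbc.1, mem_edgesWithin.2 ⟨ih.1, hc⟩⟩, hbc.2⟩⟩

variable [Encodable α]

lemma clusterColour_mem_iff_of_notMem_exitEvent (hRB : R ⊆ B) {C : Set (α → Bool)}
    (hC : DependsOn (· ∈ C) R) {ω : Bits α} (hω : ω ∉ exitEvent E R B) :
    clusterColour E ω ∈ C ↔ clusterColour (E ∩ edgesWithin B) ω ∈ C :=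
  iff_of_eq <| hC fun _ hu ↦ congrArg (fun x ↦ ω (.inr x)) <| minRep_congr fun _ ↦
    ⟨fun h ↦ (reflTransGen_openEdge_within hRB hω hu h).2,
      fun h ↦ ReflTransGen.mono (fun _ _ hab ↦ ⟨hab.1.1, hab.2⟩) _ _ h⟩

lemma dependsOn_clusterColour_within (hRB : R ⊆ B) {C : Set (α → Bool)}
    (hC : DependsOn (· ∈ C) R) :
    DependsOn (· ∈ {ω | clusterColour (E ∩ edgesWithin B) ω ∈ C})
      (Sum.inl '' edgesWithin B ∪ Sum.inr '' B) := by
  refine fun ω ω' h ↦ hC fun v hv ↦ clusterColour_congr ?_ (fun i hi ↦ h i ?_) (hRB hv)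
  · exact fun a b hab _ ↦ (mem_edgesWithin.1 hab.2).2
  · exact Set.union_subset_union_left _ (Set.image_mono Set.inter_subset_right) hi

theorem measureReal_clusterColour_inter_le (μ : Sym2 α ⊕ α → Measure Bool)
    [∀ i, IsProbabilityMeasure (μ i)] {R₁ R₂ B₁ B₂ : Set α} (hR₁ : R₁ ⊆ B₁) (hR₂ : R₂ ⊆ B₂)
    (hB₁ : B₁.Finite) (hB₂ : B₂.Finite) (hB : Disjoint B₁ B₂) {C₁ C₂ : Set (α → Bool)}
    (hC₁ : DependsOn (· ∈ C₁) R₁) (hC₂ : DependsOn (· ∈ C₂) R₂) :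
    (Measure.infinitePi μ).real ({ω | clusterColour E ω ∈ C₁} ∩ {ω | clusterColour E ω ∈ C₂}) ≤
      (Measure.infinitePi μ).real {ω | clusterColour E ω ∈ C₁} *
        (Measure.infinitePi μ).real {ω | clusterColour E ω ∈ C₂} +
      2 * ((Measure.infinitePi μ).real (exitEvent E R₁ B₁) +
        (Measure.infinitePi μ).real (exitEvent E R₂ B₂)) := by
  refine measureReal_inter_le_of_indep_approx
    (fun ω ↦ clusterColour_mem_iff_of_notMem_exitEvent hR₁ hC₁)
    (fun ω ↦ clusterColour_mem_iff_of_notMem_exitEvent hR₂ hC₂)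
    (measureReal_inter_of_dependsOn μ (((finite_edgesWithin hB₁).image _).union (hB₁.image _))
      (((finite_edgesWithin hB₂).image _).union (hB₂.image _)) ?_
      (dependsOn_clusterColour_within hR₁ hC₁) (dependsOn_clusterColour_within hR₂ hC₂))
  have hedge := Set.disjoint_left.1 (disjoint_edgesWithin hB)
  have hvert := Set.disjoint_left.1 hB
  rw [Set.disjoint_left]
  rintro - (⟨e, he, rfl⟩ | ⟨v, hv, rfl⟩) (⟨e', he', h⟩ | ⟨v', hv', h⟩) <;> cases h
  · exact hedge he he'
  · exact hvert hv hv'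

end Exit

variable (me mv : Measure Bool) [IsProbabilityMeasure me] [IsProbabilityMeasure mv]

lemma bondModel_mixing : (bondModel me mv).Mixing := by
  refine fun ε hε ↦ ⟨10, fun s hs ℓ ↦ ?_⟩
  have hdisj := disjoint_box (show 2 * (s / 10) < 8 * (s / 10) by omega) 0 (4 * s) 0 (4 * s)
    (x₁ := s / 10) (x₂' := 9 * (s / 10))
  refine (measureReal_inter_of_dependsOn _ ((finite_edgesWithin (finite_box ..)).image _)
    ((finite_edgesWithin (finite_box ..)).image _)
    ((Set.disjoint_image_iff Sum.inl_injective).2 (disjoint_edgesWithin hdisj))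
    (dependsOn_pathEvent_openEdge ..) (dependsOn_pathEvent_openEdge ..)).trans_le ?_
  exact le_add_of_nonneg_right hε.le

section ExitBound

variable {x₁ x₂ y₁ y₂ t : ℤ}

lemma exists_side_of_reflTransGen {E : V → V → Prop} (hE : ∀ ⦃a b⦄, E a b → Near a b) {u v : V}
    (hu : u ∈ box x₁ x₂ y₁ y₂) (hv : v ∉ box x₁ x₂ y₁ y₂) (h : ReflTransGen E u v) :
    ∃ (f : ℕ → V) (k : ℕ), Steps E f 0 k ∧ f 0 = u ∧ (∀ i ≤ k, f i ∈ box x₁ x₂ y₁ y₂) ∧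
      ((f k).1 = x₂ ∨ (f k).1 = x₁ ∨ (f k).2 = y₂ ∨ (f k).2 = y₁) := by
  classical
  obtain ⟨f, k, hf, h0, hk⟩ := exists_steps_of_reflTransGen h
  have hex : ∃ m, f m ∉ box x₁ x₂ y₁ y₂ := ⟨k, hk ▸ hv⟩
  have hin {i : ℕ} (hi : i < Nat.find hex) : f i ∈ box x₁ x₂ y₁ y₂ :=
    not_not.1 (Nat.find_min hex hi)
  obtain ⟨m, hm⟩ : ∃ m, Nat.find hex = m + 1 := by
    refine Nat.exists_eq_succ_of_ne_zero fun h ↦ Nat.find_spec hex ?_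
    rwa [h, h0]
  have hmk : m + 1 ≤ k := hm ▸ Nat.find_min' hex (hk ▸ hv)
  refine ⟨f, m, hf.mono le_rfl (by omega), h0, fun i hi ↦ hin (by omega), ?_⟩
  have hstep := (hE (hf m (Nat.zero_le m) hmk)).bounds
  have hout : f (m + 1) ∉ box x₁ x₂ y₁ y₂ := hm ▸ Nat.find_spec hex
  obtain ⟨⟨hx₁, hx₂⟩, hy₁, hy₂⟩ := hin (i := m) (by omega)
  contrapose! hout
  exact ⟨⟨by omega, by omega⟩, by omega, by omega⟩

lemma exitEvent_subset (ht : 0 ≤ t) :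
    exitEvent latticeEdges (box x₁ x₂ y₁ y₂) (box (x₁ - t) (x₂ + t) (y₁ - t) (y₂ + t)) ⊆
      (bondModel me mv).horizCrossing x₂ (x₂ + t) (y₁ - t) (y₂ + t) ⊤ ∪
        (bondModel me mv).horizCrossing (x₁ - t) x₁ (y₁ - t) (y₂ + t) ⊤ ∪
      ((bondModel me mv).vertCrossing (x₁ - t) (x₂ + t) y₂ (y₂ + t) ⊤ ∪
        (bondModel me mv).vertCrossing (x₁ - t) (x₂ + t) (y₁ - t) y₁ ⊤) := by
  rintro ω ⟨u, hu, v, hv, huv⟩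
  have hu' := box_subset_box (show x₁ - t ≤ x₁ by omega) (show x₂ ≤ x₂ + t by omega)
    (show y₁ - t ≤ y₁ by omega) (show y₂ ≤ y₂ + t by omega) hu
  obtain ⟨f, k, hf, rfl, hbox, hside⟩ :=
    exists_side_of_reflTransGen (fun _ _ h ↦ (bondModel me mv).rel_near h) hu' hv huv
  obtain ⟨⟨hu₁, hu₂⟩, hu₃, hu₄⟩ := hu
  have hx i (_ : 0 ≤ i) (hi : i ≤ k) := (hbox i hi).1
  have hy i (_ : 0 ≤ i) (hi : i ≤ k) := (hbox i hi).2
  have hℓ := ENat.natCast_lt_top (k - 0)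
  obtain h | h | h | h := hside
  · exact .inl <| .inl <| (bondModel me mv).mem_horizCrossing k.zero_le hf (by omega) hy
      (.inl ⟨hu₂, h.ge⟩) hℓ
  · exact .inl <| .inr <| (bondModel me mv).mem_horizCrossing k.zero_le hf (by omega) hy
      (.inr ⟨hu₁, h.le⟩) hℓ
  · exact .inr <| .inl <| (bondModel me mv).mem_vertCrossing k.zero_le hf (by omega) hx
      (.inl ⟨hu₄, h.ge⟩) hℓ
  · exact .inr <| .inr <| (bondModel me mv).mem_vertCrossing k.zero_le hf (by omega) hx
      (.inr ⟨hu₃, h.le⟩) hℓ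

lemma measureReal_exitEvent_le {b : ℤ} (ht : 0 ≤ t) (hx : x₂ - x₁ + 2 * t ≤ b)
    (hy : y₂ - y₁ + 2 * t ≤ b) :
    (bitsLaw me mv).real (exitEvent latticeEdges (box x₁ x₂ y₁ y₂)
      (box (x₁ - t) (x₂ + t) (y₁ - t) (y₂ + t))) ≤ 4 * (bondModel me mv).crossProb t b := by
  have hH {x x' : ℤ} (hxx : x + t = x') :
      (bitsLaw me mv).real ((bondModel me mv).horizCrossing x x' (y₁ - t) (y₂ + t) ⊤) ≤
        (bondModel me mv).crossProb t b := by
    rw [CrossingModel.measureReal_horizCrossing]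
    exact (bondModel me mv).crossProb_mono ht (by omega) (by omega)
  have hV {y y' : ℤ} (hyy : y + t = y') :
      (bitsLaw me mv).real ((bondModel me mv).vertCrossing (x₁ - t) (x₂ + t) y y' ⊤) ≤
        (bondModel me mv).crossProb t b := by
    rw [CrossingModel.measureReal_vertCrossing]
    exact (bondModel me mv).crossProb_mono ht (by omega) (by omega)
  calc _ ≤ _ := measureReal_mono (exitEvent_subset me mv ht)
    _ ≤ _ := (measureReal_union_le _ _).trans
      (add_le_add (measureReal_union_le _ _) (measureReal_union_le _ _))
    _ ≤ ((bondModel me mv).crossProb t b + (bondModel me mv).crossProb t b) +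
        ((bondModel me mv).crossProb t b + (bondModel me mv).crossProb t b) :=
      add_le_add (add_le_add (hH rfl) (hH (sub_add_cancel ..)))
        (add_le_add (hV rfl) (hV (sub_add_cancel ..)))
    _ = _ := by ring

end ExitBound

/-- If long open crossings are rare, then the clusters meeting a slab rarely reach far beyond it,
so that the colourings of distant slabs are almost independent. -/
theorem colourModel_mixing {θ : ℝ} (hθ : 0 < θ) (h : (bondModel me mv).LongCrossingsVanish θ)
    {adj : V → V → Prop} (hadj : PlanarAdjacency adj) : (colourModel me mv hadj).Mixing := by
  intro ε hε
  obtain ⟨n₀, hn₀⟩ :=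
    h.exists_crossProb_mul_le hθ (bondModel_mixing me mv) 50 (show 0 < ε / 16 by positivity)
  refine ⟨10 * (n₀ + 5), fun s hs ℓ ↦ ?_⟩
  obtain ⟨t, ht⟩ : ∃ t : ℕ, (t : ℤ) = s / 10 := ⟨(s / 10).toNat, by omega⟩
  have hsmall := hn₀ t (by omega)
  have hexit (x : ℤ) :=
    measureReal_exitEvent_le me mv (x₁ := x) (x₂ := x + t) (y₁ := 0) (y₂ := 4 * s) (t := t)
      (b := 50 * t) (by omega) (by omega) (by omega)
  have hsub (x : ℤ) : box x (x + t) 0 (4 * s) ⊆ box (x - t) (x + t + t) (0 - t) (4 * s + t) :=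
    box_subset_box (by omega) (by omega) (by omega) (by omega)
  have hmix := measureReal_clusterColour_inter_le (E := latticeEdges)
    (Sum.elim (fun _ ↦ me) fun _ ↦ mv) (hsub (s / 10)) (hsub (8 * (s / 10)))
    (finite_box ..) (finite_box ..) (disjoint_box (by omega) ..)
    (dependsOn_pathEvent_blackAdj adj _ {v | v.1 = s / 10} {v | v.1 = s / 10 + t} ℓ)
    (dependsOn_pathEvent_blackAdj adj _ {v | v.1 = 8 * (s / 10)} {v | v.1 = 8 * (s / 10) + t} ℓ)
  have hsum := add_le_add (hexit (s / 10)) (hexit (8 * (s / 10)))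
  rw [show 2 * (s / 10) = s / 10 + t by omega, show 9 * (s / 10) = 8 * (s / 10) + t by omega]
  refine hmix.trans (add_le_add le_rfl ((mul_le_mul_of_nonneg_left hsum zero_le_two).trans ?_))
  push_cast at hsmall
  linarith

end Mixing

/-! ### The DaC measure -/

section DaCMeasure

lemma sym2_mk_eq_of_eIdx_eq {u v a b : V} (h : eIdx u v = eIdx a b) : s(u, v) = s(a, b) := by
  unfold eIdx at h
  obtain h₁ | h₁ := min_choice (Encodable.encode (u, v)) (Encodable.encode (v, u)) <;>
    obtain h₂ | h₂ := min_choice (Encodable.encode (a, b)) (Encodable.encode (b, a)) <;>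
    rw [h₁, h₂] at h <;>
    obtain ⟨rfl, rfl⟩ := Prod.mk.inj (Encodable.encode_injective h) <;>
    first | rfl | exact Sym2.eq_swap

/-- The index `i` of the label `unif i` attached to an edge or a vertex. -/
noncomputable def labelIdx : Sym2 V ⊕ V → ℕ :=
  Sum.elim (fun e ↦ 2 * e.lift ⟨eIdx, fun _ _ ↦ min_comm ..⟩) fun v ↦ 2 * Encodable.encode v + 1

lemma labelIdx_injective : labelIdx.Injective := by
  rintro (⟨u, v⟩ | v) (⟨a, b⟩ | v') h <;> simp only [labelIdx, Sum.elim_inl, Sum.elim_inr] at h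
  · exact congrArg Sum.inl (sym2_mk_eq_of_eIdx_eq (Nat.eq_of_mul_eq_mul_left two_pos h))
  · omega
  · omega
  · exact congrArg Sum.inr (Encodable.encode_injective (by omega))

/-- Whether comparing the label `y` with the threshold `q` gives the outcome `c`, where `true`
stands for `y < q`. -/
noncomputable def thresholdBit (q : ℝ) (c : Bool) (y : ℝ) : Bool := boolOf (y < q) == c

@[fun_prop]
lemma measurable_thresholdBit (q : ℝ) (c : Bool) : Measurable (thresholdBit q c) :=
  (Measurable.of_discrete (f := (· == c))).comp (measurable_boolOf measurableSet_Iio)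

/-- The law of `thresholdBit q c` of a label. -/
noncomputable def thresholdLaw (q : ℝ) (c : Bool) : Measure Bool := unifLaw.map (thresholdBit q c)

instance : IsProbabilityMeasure unifLaw :=
  have : IsProbabilityMeasure (base.map (bit 0)) :=
    Measure.isProbabilityMeasure_map (measurable_bit 0).aemeasurable
  Measure.isProbabilityMeasure_map measurable_binSum.aemeasurable

instance (q : ℝ) (c : Bool) : IsProbabilityMeasure (thresholdLaw q c) :=
  Measure.isProbabilityMeasure_map (by fun_prop)

variable (p r : ℝ) (c : Bool)

/-- The bits of the DaC model: an edge is open if its label is below `p`, and the bit of a vertex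
says whether it imposes the colour `c`. -/
noncomputable def dacBits (x : ℝ) : Bits V :=
  fun i ↦ i.elim (fun _ ↦ thresholdBit p true) (fun _ ↦ thresholdBit r c) (unif (labelIdx i) x)

lemma measurable_sumElim_thresholdBit (i : Sym2 V ⊕ V) : Measurable
    (i.elim (fun _ ↦ thresholdBit p true) fun _ ↦ thresholdBit r c) := by
  cases i <;> exact measurable_thresholdBit ..

@[fun_prop]
lemma measurable_dacBits : Measurable (dacBits p r c) :=
  measurable_pi_lambda _ fun i ↦
    (measurable_sumElim_thresholdBit p r c i).comp (measurable_unif (labelIdx i))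

lemma base_map_dacBits :
    base.map (dacBits p r c) = bitsLaw (thresholdLaw p true) (thresholdLaw r c) := by
  have hcomp : dacBits p r c = (fun (y : Sym2 V ⊕ V → ℝ) i ↦
      i.elim (fun _ ↦ thresholdBit p true) (fun _ ↦ thresholdBit r c) (y i)) ∘
      (fun (y : ℕ → ℝ) i ↦ y (labelIdx i)) ∘ fun x i ↦ unif i x := rfl
  have hunif : Measurable fun (x : ℝ) (i : ℕ) ↦ unif i x := measurable_pi_lambda _ measurable_unif
  have hidx : Measurable fun (y : ℕ → ℝ) (i : Sym2 V ⊕ V) ↦ y (labelIdx i) := by fun_prop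
  have hthr := measurable_sumElim_thresholdBit p r c
  rw [hcomp, ← Measure.map_map (by fun_prop) (hidx.comp hunif), ← Measure.map_map hidx hunif,
    base_map_unif, infinitePi_map_comp_injective unifLaw labelIdx_injective]
  refine (Measure.infinitePi_map_pi (μ := fun _ ↦ unifLaw) hthr).trans ?_
  rw [bitsLaw]
  congr 1
  ext1 i
  cases i <;> rfl

lemma openEdge_dacBits (x : ℝ) (u v : V) :
    OpenEdge latticeEdges (dacBits p r c x) u v ↔ edgeCfg SqAdj p x u v = true := by
  rw [edgeCfg, Bool.and_eq_true, boolOf_eq_true]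
  exact and_congr mem_latticeEdges (by simp [dacBits, thresholdBit, labelIdx, edgeU])

lemma clusterColour_dacBits (x : ℝ) (v : V) :
    clusterColour latticeEdges (dacBits p r c x) v = (colourCfg SqAdj p r x v == c) := by
  have hrel : OpenEdge latticeEdges (dacBits p r c x) = fun u v ↦ edgeCfg SqAdj p x u v = true := by
    ext
    exact openEdge_dacBits ..
  rw [clusterColour, hrel]
  rfl

lemma measurable_config : Measurable fun x ↦ (edgeCfg SqAdj p x, colourCfg SqAdj p r x) := by
  refine .prodMk (measurable_pi_lambda _ fun u ↦ measurable_pi_lambda _ fun v ↦ ?_) ?_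
  · exact (Measurable.of_discrete (f := (boolOf (SqAdj u v) && ·))).comp
      (measurable_boolOf (measurable_unif _ measurableSet_Iio))
  · have hcol : colourCfg SqAdj p r = clusterColour latticeEdges ∘ dacBits p r true := by
      ext x v
      simp [clusterColour_dacBits]
    rw [hcol]
    fun_prop

instance : IsProbabilityMeasure (DaCMeasure SqAdj p r) :=
  Measure.isProbabilityMeasure_map (measurable_config p r).aemeasurable

lemma dacMeasure_colourEvent_preimage {C : Set ColourCfg} (hC : MeasurableSet C) :
    DaCMeasure SqAdj p r (colourEvent ((fun ξ v ↦ ξ v == c) ⁻¹' C)) =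
      bitsLaw (thresholdLaw p true) (thresholdLaw r c) (clusterColour latticeEdges ⁻¹' C) := by
  have hflip : Measurable fun (ξ : ColourCfg) v ↦ ξ v == c := measurable_pi_lambda _ fun v ↦
    (Measurable.of_discrete (f := (· == c))).comp (measurable_pi_apply v)
  have hevent : MeasurableSet (colourEvent ((fun ξ v ↦ ξ v == c) ⁻¹' C)) :=
    measurable_snd (hflip hC)
  rw [← base_map_dacBits, Measure.map_apply (by fun_prop) (measurable_clusterColour _ hC),
    DaCMeasure, Measure.map_apply (measurable_config p r) hevent]
  congr 1
  ext x
  exact iff_of_eq (congrArg (· ∈ C) (funext fun v ↦ (clusterColour_dacBits p r c x v).symm))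

/-- The event of a vertical crossing of `Rect n m` of colour `c`. -/
def crossingEvent (adj : V → V → Prop) (c : Bool) (n m : ℕ) : Set ColourCfg :=
  {ξ | HasCrossing adj (fun v ↦ ξ v = c) (Rect n m) (TopSide n m) (BotSide n m)}

lemma hasCrossing_iff_hasPath {adj : V → V → Prop} {good : V → Prop} {R A B : Set V}
    (hAB : Disjoint A B) :
    HasCrossing adj good R A B ↔ HasPath (fun u v ↦ adj u v ∧ good u ∧ good v) R A B ⊤ := by
  constructor
  · rintro ⟨k, f, hf, hadj, hA, hB⟩
    refine ⟨fun m ↦ f (Fin.ofNat (k + 1) m), k, fun i _ ↦ (hf _).1, fun m _ hm ↦ ?_, ?_, ?_,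
      ENat.natCast_lt_top k⟩
    · refine ⟨?_, (hf _).2, (hf _).2⟩
      convert hadj ⟨m, hm⟩ using 2 <;> ext <;> simp <;> omega
    · simpa using hA
    · simpa using hB
  · rintro ⟨f, k, hR, hf, hA, hB, -⟩
    obtain - | k := k
    · exact (Set.disjoint_left.1 hAB hA hB).elim
    have hgood {i : ℕ} (hi : i ≤ k + 1) : good (f i) := by
      obtain rfl | hi := hi.eq_or_lt
      · exact (hf k k.zero_le k.lt_succ_self).2.2
      · exact (hf i i.zero_le hi).2.1
    exact ⟨k + 1, fun i ↦ f i, fun i ↦ ⟨hR _ i.is_le, hgood i.is_le⟩,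
      fun i ↦ (hf i (Nat.zero_le _) i.is_lt).1, hA, hB⟩

lemma crossingEvent_eq_preimage {adj : V → V → Prop} (hadj : ∀ {u v}, adj u v → adj v u)
    (n : ℕ) {m : ℕ} (hm : 0 < m) :
    crossingEvent adj c n m = (fun ξ v ↦ ξ v == c) ⁻¹'
      pathEvent (BlackAdj adj) (box 0 n 0 m) {v | v.2 = 0} {v | v.2 = m} ⊤ := by
  ext ξ
  have hdisj : Disjoint (TopSide n m) (BotSide n m) := by
    rw [Set.disjoint_left]
    rintro v ⟨-, htop⟩ ⟨-, hbot⟩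
    omega
  have hrect : Rect n m = box 0 n 0 m := by
    ext
    simp only [Rect, box, Set.mem_ofPred_eq, and_assoc]
  simp only [crossingEvent, Set.mem_preimage, pathEvent, Set.mem_ofPred_eq]
  rw [hasCrossing_iff_hasPath hdisj]
  refine ⟨fun h ↦ HasPath.symm (fun h ↦ ⟨hadj h.1, h.2.2, h.2.1⟩) ?_, fun h ↦ ?_⟩
  · obtain ⟨f, k, hR, hf, hA, hB, hk⟩ := h
    exact ⟨f, k, hrect ▸ hR, fun i hi hik ↦ by simpa [BlackAdj] using hf i hi hik, hA.2, hB.2, hk⟩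
  · obtain ⟨f, k, hR, hf, hA, hB, hk⟩ := h.symm fun h ↦ ⟨hadj h.1, h.2.2, h.2.1⟩
    rw [← hrect] at hR
    exact ⟨f, k, hR, fun i hi hik ↦ by simpa [BlackAdj] using hf i hi hik, ⟨hR 0 k.zero_le, hA⟩,
      ⟨hR k le_rfl, hB⟩, hk⟩

lemma dacMeasure_crossingEvent {adj : V → V → Prop} (hadj : PlanarAdjacency adj) (n : ℕ) {m : ℕ}
    (hm : 0 < m) :
    (DaCMeasure SqAdj p r).real (colourEvent (crossingEvent adj c n m)) =
      (colourModel (thresholdLaw p true) (thresholdLaw r c) hadj).crossProb m n := by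
  have hmeas := measurableSet_pathEvent_blackAdj adj (finite_box 0 n 0 m) {v | v.2 = 0}
    {v | v.2 = m} ⊤
  have hvert := CrossingModel.measureReal_vertCrossing
    (X := colourModel (thresholdLaw p true) (thresholdLaw r c) hadj) 0 n 0 m
  rw [sub_zero, sub_zero] at hvert
  rw [← hvert, crossingEvent_eq_preimage c hadj.symm n hm, Measure.real,
    dacMeasure_colourEvent_preimage p r c hmeas]
  rfl

end DaCMeasure

/-! ### Conclusion -/

namespace CrossingModel

open Filter Topology

variable {Ω : Type*} [MeasurableSpace Ω] {μ : Measure Ω} {X : CrossingModel μ} {ρ θ : ℝ}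

lemma longCrossingsVanish_of_tendsto [IsFiniteMeasure μ] (hρ : 0 < ρ)
    (h : Tendsto (fun n : ℕ ↦ X.crossProb ⌈ρ * n⌉₊ n) atTop (𝓝 0)) :
    X.LongCrossingsVanish ρ := by
  intro ε hε
  obtain ⟨n₀, hn₀⟩ := eventually_atTop.1 (h.eventually_le_const hε)
  refine ⟨n₀ + 1, fun n hn m hm ↦ ?_⟩
  lift n to ℕ using by omega
  refine (crossProb_mono (by omega) ?_ le_rfl).trans (hn₀ n (by omega))
  have hceil : (⌈ρ * n⌉₊ : ℝ) < ρ * n + 1 := Nat.ceil_lt_add_one (by positivity)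
  have hn_one : (1 : ℝ) ≤ n := by exact_mod_cast (by omega : 1 ≤ n)
  have hle : ((⌈ρ * n⌉₊ : ℤ) : ℝ) ≤ m := by
    push_cast at hm ⊢
    linarith
  exact_mod_cast hle

lemma LongCrossingsVanish.tendsto_crossProb [IsProbabilityMeasure μ] (hθ : 0 < θ)
    (h : X.LongCrossingsVanish θ) (hmix : X.Mixing) (hρ : 0 < ρ) :
    Tendsto (fun n : ℕ ↦ X.crossProb ⌈ρ * n⌉₊ n) atTop (𝓝 0) := by
  refine tendsto_order.2
    ⟨fun a ha ↦ .of_forall fun n ↦ ha.trans_le (crossProb_nonneg ..), fun ε hε ↦ ?_⟩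
  obtain ⟨n₀, hn₀⟩ := h.exists_crossProb_mul_le hθ hmix ⌈1 / ρ⌉₊ (half_pos hε)
  have hlarge : ∀ᶠ n : ℕ in atTop, n₀ ≤ ⌈ρ * n⌉₊ :=
    (tendsto_nat_ceil_atTop.comp
      (tendsto_natCast_atTop_atTop.const_mul_atTop hρ)).eventually_ge_atTop n₀
  filter_upwards [hlarge] with n hn
  have hle : (n : ℝ) ≤ ⌈1 / ρ⌉₊ * ⌈ρ * n⌉₊ :=
    calc (n : ℝ) = 1 / ρ * (ρ * n) := by field_simp
      _ ≤ ⌈1 / ρ⌉₊ * ⌈ρ * n⌉₊ := by gcongr <;> exact Nat.le_ceil _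
  have hmono : X.crossProb ⌈ρ * n⌉₊ n ≤ X.crossProb ⌈ρ * n⌉₊ (⌈1 / ρ⌉₊ * ⌈ρ * n⌉₊ : ℕ) :=
    crossProb_mono (by omega) le_rfl (by exact_mod_cast hle)
  push_cast at hmono
  exact (hmono.trans (hn₀ _ hn)).trans_lt (half_lt_self hε)

end CrossingModel

section Conclusion

open Filter Topology

variable (me mv : Measure Bool) [IsProbabilityMeasure me] [IsProbabilityMeasure mv]
  {adj : V → V → Prop} (hadj : PlanarAdjacency adj)

lemma crossProb_colourModel_eq_zero (hmv : mv {true} = 0) {m : ℤ} (hm : 0 < m) (n : ℤ) :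
    (colourModel me mv hadj).crossProb m n = 0 := by
  have hvertex (w : V) : bitsLaw me mv {ω | ω (.inr w) = true} = 0 := by
    have hmap : (bitsLaw me mv).map (fun ω : Bits V ↦ ω (.inr w)) = mv :=
      Measure.infinitePi_map_eval _ (Sum.inr w)
    rwa [← hmap, Measure.map_apply (measurable_pi_apply _) .of_discrete] at hmv
  refine (measureReal_eq_zero_iff).2 (measure_mono_null ?_ (measure_iUnion_null hvertex))
  rintro ω ⟨f, k, -, hf, hstart, hend, -⟩
  have hk : 0 < k := by
    rw [Set.mem_ofPred_eq] at hstart hend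
    by_contra! hk
    obtain rfl := Nat.le_zero.1 hk
    omega
  exact Set.mem_iUnion.2 ⟨_, (hf 0 le_rfl hk).2.1⟩

variable {me mv} in
lemma bondModel_longCrossingsVanish {θ : ℝ} (hmv : 0 < mv.real {true})
    (h : (colourModel me mv hadj).LongCrossingsVanish θ) :
    (bondModel me mv).LongCrossingsVanish θ := by
  intro ε hε
  obtain ⟨n₀, hn₀⟩ := h (mv.real {true} * ε) (by positivity)
  refine ⟨n₀, fun n hn m hm ↦ ?_⟩
  have hle := mul_bondModel_le_colourModel me mv hadj (finite_box 0 m 0 n) {v | v.1 = 0}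
    {v | v.1 = m} ⊤
  exact le_of_mul_le_mul_left (hle.trans (hn₀ n hn m hm)) hmv

lemma tendsto_crossProb_colourModel_zero {ρ₁ ρ₂ : ℝ} (hρ₁ : 0 < ρ₁) (hρ₂ : 0 < ρ₂)
    (h : Tendsto (fun n : ℕ ↦ (colourModel me mv hadj).crossProb ⌈ρ₁ * n⌉₊ n) atTop (𝓝 0)) :
    Tendsto (fun n : ℕ ↦ (colourModel me mv hadj).crossProb ⌈ρ₂ * n⌉₊ n) atTop (𝓝 0) := by
  by_cases hmv : mv {true} = 0
  · refine tendsto_const_nhds.congr' ?_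
    filter_upwards [eventually_gt_atTop 0] with n hn
    have hceil : 0 < ⌈ρ₂ * n⌉₊ := Nat.ceil_pos.2 (mul_pos hρ₂ (Nat.cast_pos.2 hn))
    exact (crossProb_colourModel_eq_zero me mv hadj hmv (Nat.cast_pos.2 hceil) n).symm
  · have hlong := CrossingModel.longCrossingsVanish_of_tendsto hρ₁ h
    have hbond := bondModel_longCrossingsVanish hadj
      (ENNReal.toReal_pos hmv (measure_ne_top _ _)) hlong
    exact hlong.tendsto_crossProb hρ₁ (colourModel_mixing me mv hρ₁ hbond hadj) hρ₂

lemma limsup_dacMeasure_crossingEvent_eq_zero_iff (c : Bool) (p r : ℝ) {ρ : ℝ} (hρ : 0 < ρ) :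
    limsup (fun n : ℕ ↦ DaCMeasure SqAdj p r (colourEvent (crossingEvent adj c n ⌈ρ * (n : ℝ)⌉₊)))
        atTop = 0 ↔
      Tendsto (fun n : ℕ ↦
        (colourModel (thresholdLaw p true) (thresholdLaw r c) hadj).crossProb ⌈ρ * n⌉₊ n)
        atTop (𝓝 0) := by
  have hprob : (fun n : ℕ ↦ (DaCMeasure SqAdj p r).real
      (colourEvent (crossingEvent adj c n ⌈ρ * (n : ℝ)⌉₊))) =ᶠ[atTop] fun n ↦
      (colourModel (thresholdLaw p true) (thresholdLaw r c) hadj).crossProb ⌈ρ * n⌉₊ n := by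
    filter_upwards [eventually_gt_atTop 0] with n hn
    exact dacMeasure_crossingEvent p r c hadj n
      (Nat.ceil_pos.2 (mul_pos hρ (Nat.cast_pos.2 hn)))
  rw [← tendsto_congr' hprob]
  simp only [Measure.real]
  rw [ENNReal.tendsto_toReal_zero_iff fun _ ↦ measure_ne_top _ _]
  exact ⟨fun h ↦ tendsto_of_le_liminf_of_limsup_le zero_le h.le, Tendsto.limsup_eq⟩

end Conclusion

theorem rsw_general {adj : V → V → Prop} (hadj : PlanarAdjacency adj) (c : Bool) (p r : ℝ) :
    (∃ ρ : ℝ, 0 < ρ ∧ 0 < Filter.limsup (fun n : ℕ ↦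
        DaCMeasure SqAdj p r (colourEvent (crossingEvent adj c n ⌈ρ * (n : ℝ)⌉₊))) Filter.atTop) →
      ∀ ρ : ℝ, 0 < ρ → 0 < Filter.limsup (fun n : ℕ ↦
        DaCMeasure SqAdj p r (colourEvent (crossingEvent adj c n ⌈ρ * (n : ℝ)⌉₊)))
        Filter.atTop := by
  rintro ⟨ρ₁, hρ₁, hlimsup⟩ ρ₂ hρ₂
  rw [pos_iff_ne_zero] at hlimsup ⊢
  rw [Ne, limsup_dacMeasure_crossingEvent_eq_zero_iff hadj c p r ‹_›] at hlimsup ⊢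
  exact mt (tendsto_crossProb_colourModel_zero _ _ hadj hρ₂ hρ₁) hlimsup

/-- **RSW property of the DaC model (Lemma 2.6).** For `p < 1/2` and
`r ∈ [0,1]`: (a) if black vertical crossings of `n × ⌈ρn⌉` rectangles occur
with non-vanishing probability for some aspect ratio `ρ > 0`, then they do for
every `ρ > 0`; and (b) the same for white vertical `*`-crossings. -/
theorem rsw (p r : ℝ) (hp0 : 0 ≤ p) (hp : p < 1 / 2) (hr0 : 0 ≤ r) (hr1 : r ≤ 1) :
    ((∃ ρ : ℝ, 0 < ρ ∧
        0 < Filter.limsup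
          (fun n : ℕ =>
            DaCMeasure SqAdj p r (colourEvent (VertBC SqAdj n ⌈ρ * (n : ℝ)⌉₊)))
          Filter.atTop) →
      ∀ ρ : ℝ, 0 < ρ →
        0 < Filter.limsup
          (fun n : ℕ =>
            DaCMeasure SqAdj p r (colourEvent (VertBC SqAdj n ⌈ρ * (n : ℝ)⌉₊)))
          Filter.atTop) ∧
    ((∃ ρ : ℝ, 0 < ρ ∧
        0 < Filter.limsup
          (fun n : ℕ =>
            DaCMeasure SqAdj p r (colourEvent (VertWStarC n ⌈ρ * (n : ℝ)⌉₊)))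
          Filter.atTop) →
      ∀ ρ : ℝ, 0 < ρ →
        0 < Filter.limsup
          (fun n : ℕ =>
            DaCMeasure SqAdj p r (colourEvent (VertWStarC n ⌈ρ * (n : ℝ)⌉₊)))
          Filter.atTop) :=
  ⟨rsw_general planarAdjacency_sqAdj true p r, rsw_general planarAdjacency_starAdj false p r⟩

end DaC
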